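/- arXiv:2006.01116 — 5 statements merged into one kernel-verified Lean document; each statement's English description precedes it below -/
import Mathlib

section
/- For every real ε > 0 there exists m₀ such that every digraph D with m ≥ m₀ arcs and minimum outdegree at least 4 admits a bipartition V(D) = V₁ ∪ V₂ with min{e(V₁,V₂), e(V₂,V₁)} ≥ (3/14 − ε)·m. -/
open Finset

/-- Number of arcs of the digraph `A` directed from a vertex of `S` to a vertex of `T`. -/
def dArcs {V : Type} [Fintype V] [DecidableEq V] (A : V → V → Prop) [DecidableRel A]
    (S T : Finset V) : ℕ :=
  ((S ×ˢ T).filter fun p => A p.1 p.2).card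

/-- Outdegree of `x`. -/
def outDeg {V : Type} [Fintype V] (A : V → V → Prop) [DecidableRel A] (x : V) : ℕ :=
  (Finset.univ.filter fun y => A x y).card

/-- Indegree of `x`. -/
def inDeg {V : Type} [Fintype V] (A : V → V → Prop) [DecidableRel A] (x : V) : ℕ :=
  (Finset.univ.filter fun y => A y x).card

/-- Degree of `x`: outdegree plus indegree. -/
def deg {V : Type} [Fintype V] (A : V → V → Prop) [DecidableRel A] (x : V) : ℕ :=
  outDeg A x + inDeg A x

/-- `s(x) = max{d⁺(x) − d⁻(x), d⁻(x) − d⁺(x)}`. -/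
def sVal {V : Type} [Fintype V] (A : V → V → Prop) [DecidableRel A] (x : V) : ℤ :=
  max ((outDeg A x : ℤ) - (inDeg A x : ℤ)) ((inDeg A x : ℤ) - (outDeg A x : ℤ))

/-- The gap `θ(X₁,X₂) = (e(X₁,Y)+e(Y,X₂)) − (e(X₂,Y)+e(Y,X₁))`. -/
def gap {V : Type} [Fintype V] [DecidableEq V] (A : V → V → Prop) [DecidableRel A]
    (X₁ X₂ Y : Finset V) : ℤ :=
  ((dArcs A X₁ Y : ℤ) + (dArcs A Y X₂ : ℤ)) - ((dArcs A X₂ Y : ℤ) + (dArcs A Y X₁ : ℤ))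

/-!
Let `X` be the set of vertices of very large degree. It is so small that the arcs inside it are
negligible, and a random bipartition of the remaining vertices is concentrated. Rounding the random
bits one by one, a second-moment potential keeps both cut sizes close to their expectations. So it
is enough to find a random bipartition whose two expected cut sizes are at least `3/14` of the
weight of the arcs not inside `X`.

With fair bits outside `X`, each arc counts `1/4` in both directions. Two terms correct this. The
distribution of `X` over the two classes causes an imbalance, the signed sum over `X` of
out-weight minus in-weight. Disjoint stars outside `X` with independent leaves, whose leaves are
separated from the centre, cause a gain. A maximal matching and a discharging argument give stars
containing at least a seventh of the truncated outdegree `min (d⁺, 3)` outside `X`, and that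
suffices if the imbalance can be made small.

Otherwise a set `H` of fewer than seven vertices of `X` dominates every signed sum. The minimum
outdegree `4` then forces `H` to have at least two more in-heavy than out-heavy vertices, and in
each of the few remaining configurations a bipartition with a biased probability for the vertices
outside `X` is good enough.
-/

namespace BalancedCut

open SimpleGraph (fromRel fromRel_adj)

section Rounding

open Function

variable {V : Type*} [DecidableEq V]

/-- A function on the cube that is affine in every coordinate separately. -/
def IsMultiaffine (f : (V → ℝ) → ℝ) : Prop :=
  ∀ x i t, f (update x i t) = (1 - t) * f (update x i 0) + t * f (update x i 1)

/-- On the unit cube, flipping the coordinate `i` changes `f` by at most `D i`. -/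
def InfluenceLE (f : (V → ℝ) → ℝ) (D : V → ℝ) : Prop :=
  ∀ x : V → ℝ, (∀ v, x v ∈ Set.Icc 0 1) → ∀ i, |f (update x i 1) - f (update x i 0)| ≤ D i

lemma convexComb_sq_le {t p₀ p₁ d : ℝ} (ht : t ∈ Set.Icc 0 1) (hd : |p₁ - p₀| ≤ d) (α : ℝ) :
    (1 - t) * (p₀ - α) ^ 2 + t * (p₁ - α) ^ 2 ≤ ((1 - t) * p₀ + t * p₁ - α) ^ 2 + d ^ 2 := by
  have hsq : (p₁ - p₀) ^ 2 ≤ d ^ 2 := sq_le_sq' (by linarith [(abs_le.1 hd).1]) (abs_le.1 hd).2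
  have ht' : t * (1 - t) ≤ 1 := by nlinarith [ht.1, ht.2]
  calc (1 - t) * (p₀ - α) ^ 2 + t * (p₁ - α) ^ 2
      = ((1 - t) * p₀ + t * p₁ - α) ^ 2 + t * (1 - t) * (p₁ - p₀) ^ 2 := by ring
    _ ≤ ((1 - t) * p₀ + t * p₁ - α) ^ 2 + 1 * (p₁ - p₀) ^ 2 := by gcongr
    _ ≤ _ := by linarith

lemma update_mem_Icc {x : V → ℝ} (hx : ∀ v, x v ∈ Set.Icc 0 1) (i : V) {t : ℝ}
    (ht : t ∈ Set.Icc 0 1) (v : V) : update x i t v ∈ Set.Icc 0 1 := by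
  rcases eq_or_ne v i with rfl | h
  · simpa using ht
  · simpa [h] using hx v

section SecondMoment

variable {f g : (V → ℝ) → ℝ} {D : V → ℝ}

lemma exists_update_sq_add_sq_le (hf : IsMultiaffine f) (hg : IsMultiaffine g)
    (hfD : InfluenceLE f D) (hgD : InfluenceLE g D) (α β : ℝ) {x : V → ℝ}
    (hx : ∀ v, x v ∈ Set.Icc 0 1) (i : V) :
    ∃ t : ℝ, (t = 0 ∨ t = 1) ∧ (f (update x i t) - α) ^ 2 + (g (update x i t) - β) ^ 2 ≤
      (f x - α) ^ 2 + (g x - β) ^ 2 + 2 * D i ^ 2 := by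
  have hfx := hf x i (x i)
  have hgx := hg x i (x i)
  rw [update_eq_self] at hfx hgx
  have hα := convexComb_sq_le (hx i) (hfD x hx i) α
  have hβ := convexComb_sq_le (hx i) (hgD x hx i) β
  rw [← hfx] at hα
  rw [← hgx] at hβ
  by_contra! hcon
  have h₀ := hcon 0 (Or.inl rfl)
  have h₁ := hcon 1 (Or.inr rfl)
  rcases (hx i).1.eq_or_lt with h | h
  · rw [← h] at hα hβ
    linarith
  · linarith [mul_lt_mul_of_pos_left h₁ h,
      mul_le_mul_of_nonneg_left h₀.le (sub_nonneg.2 (hx i).2)]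

theorem exists_rounding (hf : IsMultiaffine f) (hg : IsMultiaffine g)
    (hfD : InfluenceLE f D) (hgD : InfluenceLE g D) (α β : ℝ) (s : Finset V) {x : V → ℝ}
    (hx : ∀ v, x v ∈ Set.Icc 0 1) (hs : ∀ v ∉ s, x v = 0 ∨ x v = 1) :
    ∃ z : V → ℝ, (∀ v, z v = 0 ∨ z v = 1) ∧
      (f z - α) ^ 2 + (g z - β) ^ 2 ≤
        (f x - α) ^ 2 + (g x - β) ^ 2 + 2 * ∑ i ∈ s, D i ^ 2 := by
  induction s using Finset.induction_on generalizing x with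
  | empty => exact ⟨x, fun v => hs v (notMem_empty v), by simp⟩
  | insert i s hi ih =>
    obtain ⟨t, ht, hle⟩ := exists_update_sq_add_sq_le hf hg hfD hgD α β hx i
    have ht' : t ∈ Set.Icc (0 : ℝ) 1 := by rcases ht with rfl | rfl <;> simp
    have hs' : ∀ v ∉ s, update x i t v = 0 ∨ update x i t v = 1 := by
      intro v hv
      rcases eq_or_ne v i with rfl | h
      · simpa using ht
      · simpa [h] using hs v (by simp [h, hv])
    obtain ⟨z, hz, hzle⟩ := ih (update_mem_Icc hx i ht') hs'
    refine ⟨z, hz, ?_⟩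
    rw [sum_insert hi]
    linarith

end SecondMoment

/-- Vertices are grouped into stars, `c v` being the centre of the star of `v`. A star follows a
random bit attached to its centre: the centre is in the first class when the bit is one, the other
vertices when it is zero. `sideProb c x v` is the probability that `v` is in the first class when
the bit at `i` is one with probability `x i`. -/
def sideProb (c : V → V) (x : V → ℝ) (v : V) : ℝ :=
  if c v = v then x (c v) else 1 - x (c v)

/-- The probability that `u` is in the first class and `v` in the second one. -/
def crossProb (c : V → V) (x : V → ℝ) (u v : V) : ℝ :=
  if c u = c v then (if c u = u ↔ c v = v then 0 else sideProb c x u)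
  else sideProb c x u * (1 - sideProb c x v)

lemma sideProb_mem_Icc {c : V → V} {x : V → ℝ} (hx : ∀ v, x v ∈ Set.Icc 0 1) (v : V) :
    sideProb c x v ∈ Set.Icc 0 1 := by
  unfold sideProb
  split_ifs
  · exact hx _
  · exact Set.Icc.one_sub_mem (hx _)

lemma crossProb_mem_Icc {c : V → V} {x : V → ℝ} (hx : ∀ v, x v ∈ Set.Icc 0 1) (u v : V) :
    crossProb c x u v ∈ Set.Icc 0 1 := by
  unfold crossProb
  split_ifs
  · simp
  · exact sideProb_mem_Icc hx u
  · exact unitInterval.mul_mem (sideProb_mem_Icc hx u)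
      (Set.Icc.one_sub_mem (sideProb_mem_Icc hx v))

lemma isMultiaffine_sideProb (c : V → V) (v : V) : IsMultiaffine (sideProb c · v) := by
  intro x i t
  by_cases h : c v = i
  · simp only [sideProb, h, update_self]
    split_ifs <;> ring
  · simp only [sideProb, update_of_ne h]
    ring

lemma sideProb_update_of_ne {c : V → V} (x : V → ℝ) {i v : V} (h : c v ≠ i) (t : ℝ) :
    sideProb c (update x i t) v = sideProb c x v := by
  simp only [sideProb, update_of_ne h]

lemma isMultiaffine_crossProb (c : V → V) (u v : V) : IsMultiaffine (crossProb c · u v) := by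
  intro x i t
  have hu := isMultiaffine_sideProb c u x i t
  have hv := isMultiaffine_sideProb c v x i t
  by_cases h : c u = c v
  · simp only [crossProb, h, if_true]
    split_ifs
    · ring
    · exact hu
  · simp only [crossProb, h, if_false]
    by_cases hui : c u = i
    · simp only [sideProb_update_of_ne x (show c v ≠ i from fun hvi => h (hui.trans hvi.symm)), hu]
      ring
    · simp only [sideProb_update_of_ne x hui, hv]
      ring

lemma crossProb_update_of_ne {c : V → V} (x : V → ℝ) {i u v : V} (hu : c u ≠ i) (hv : c v ≠ i)
    (t : ℝ) : crossProb c (update x i t) u v = crossProb c x u v := by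
  simp only [crossProb, sideProb_update_of_ne x hu, sideProb_update_of_ne x hv]

lemma abs_crossProb_update_sub_le (c : V → V) {x : V → ℝ} (hx : ∀ v, x v ∈ Set.Icc 0 1)
    (i u v : V) :
    |crossProb c (update x i 1) u v - crossProb c (update x i 0) u v| ≤
      (if c u = i then 1 else 0) + (if c v = i then 1 else 0) := by
  by_cases h : c u ≠ i ∧ c v ≠ i
  · simp [crossProb_update_of_ne x h.1 h.2, h.1, h.2]
  · have h₁ := crossProb_mem_Icc (c := c) (update_mem_Icc hx i (t := 1) (by simp)) u v
    have h₀ := crossProb_mem_Icc (c := c) (update_mem_Icc hx i (t := 0) (by simp)) u v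
    refine (abs_sub_le_iff.2 ⟨by linarith [h₁.2, h₀.1], by linarith [h₁.1, h₀.2]⟩ :
      _ ≤ (1 : ℝ)).trans ?_
    split_ifs <;> simp_all

lemma crossProb_eq_ite {c : V → V} {z : V → ℝ} (hz : ∀ v, z v = 0 ∨ z v = 1) (u v : V) :
    crossProb c z u v = if sideProb c z u = 1 ∧ sideProb c z v ≠ 1 then 1 else 0 := by
  unfold crossProb sideProb
  by_cases h : c u = c v
  · rcases hz (c v) with h' | h' <;> simp only [h, h', if_true] <;> split_ifs <;> simp_all
  · rcases hz (c u) with hu | hu <;> rcases hz (c v) with hv | hv <;>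
      by_cases hcu : c u = u <;> by_cases hcv : c v = v <;> simp_all

section Weights

variable [Fintype V]

/-- The expected weight of the arcs from the first class to the second one. -/
def expCut (a : V → V → ℝ) (c : V → V) (x : V → ℝ) : ℝ :=
  ∑ u, ∑ v, a u v * crossProb c x u v

/-- The weight of the arcs meeting the star with centre `i`, an arc inside it being counted
twice. -/
def blockWeight (a : V → V → ℝ) (c : V → V) (i : V) : ℝ :=
  ∑ u, ∑ v, a u v * ((if c u = i then 1 else 0) + (if c v = i then 1 else 0))

/-- The weight of the arcs leaving `S`. -/
def cutWeight (a : V → V → ℝ) (S : Finset V) : ℝ := ∑ u ∈ S, ∑ v ∈ Sᶜ, a u v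

lemma isMultiaffine_expCut (a : V → V → ℝ) (c : V → V) : IsMultiaffine (expCut a c) := by
  intro x i t
  simp only [expCut, mul_sum, ← sum_add_distrib]
  refine sum_congr rfl fun u _ => sum_congr rfl fun v _ => ?_
  rw [show crossProb c (update x i t) u v = _ from isMultiaffine_crossProb c u v x i t]
  ring

lemma influenceLE_expCut {a : V → V → ℝ} (ha : ∀ u v, 0 ≤ a u v) (c : V → V) :
    InfluenceLE (expCut a c) (blockWeight a c) := by
  intro x hx i
  simp only [expCut, blockWeight, ← sum_sub_distrib]
  refine (abs_sum_le_sum_abs _ _).trans (sum_le_sum fun u _ => ?_)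
  refine (abs_sum_le_sum_abs _ _).trans (sum_le_sum fun v _ => ?_)
  rw [← mul_sub, abs_mul, abs_of_nonneg (ha u v)]
  exact mul_le_mul_of_nonneg_left (abs_crossProb_update_sub_le c hx i u v) (ha u v)

lemma expCut_eq_cutWeight (a : V → V → ℝ) (c : V → V) {z : V → ℝ}
    (hz : ∀ v, z v = 0 ∨ z v = 1) :
    expCut a c z = cutWeight a (univ.filter fun v => sideProb c z v = 1) := by
  simp only [expCut, cutWeight, crossProb_eq_ite hz, compl_filter, sum_filter, mul_ite, mul_one,
    mul_zero, ite_and, ← ite_sum_zero]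

lemma blockWeight_swap (a : V → V → ℝ) (c : V → V) :
    blockWeight (fun u v => a v u) c = blockWeight a c := by
  funext i
  unfold blockWeight
  rw [sum_comm]
  simp only [add_comm]

lemma blockWeight_nonneg {a : V → V → ℝ} (ha : ∀ u v, 0 ≤ a u v) (c : V → V) (i : V) :
    0 ≤ blockWeight a c i :=
  sum_nonneg fun u _ => sum_nonneg fun v _ => mul_nonneg (ha u v) (by positivity)

lemma sum_blockWeight (a : V → V → ℝ) (c : V → V) :
    ∑ i, blockWeight a c i = 2 * ∑ u, ∑ v, a u v := by
  unfold blockWeight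
  rw [sum_comm, mul_sum]
  refine sum_congr rfl fun u _ => ?_
  rw [sum_comm, mul_sum]
  refine sum_congr rfl fun v _ => ?_
  simp only [← mul_sum, sum_add_distrib, sum_ite_eq, mem_univ, if_true]
  ring

lemma sum_sq_blockWeight_le {a : V → V → ℝ} (ha : ∀ u v, 0 ≤ a u v) (c : V → V)
    {B : Finset V} {Δ : ℝ} (hΔ : ∀ i ∈ B, blockWeight a c i ≤ Δ) (hΔ0 : 0 ≤ Δ) :
    ∑ i ∈ B, blockWeight a c i ^ 2 ≤ 2 * Δ * ∑ u, ∑ v, a u v :=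
  calc ∑ i ∈ B, blockWeight a c i ^ 2
      ≤ ∑ i ∈ B, Δ * blockWeight a c i := sum_le_sum fun i hi => by
        rw [sq]
        exact mul_le_mul_of_nonneg_right (hΔ i hi) (blockWeight_nonneg ha c i)
    _ ≤ ∑ i, Δ * blockWeight a c i :=
        sum_le_univ_sum_of_nonneg fun i => mul_nonneg hΔ0 (blockWeight_nonneg ha c i)
    _ = 2 * Δ * ∑ u, ∑ v, a u v := by rw [← mul_sum, sum_blockWeight]; ring

theorem exists_cut_near_expCut {a : V → V → ℝ} (ha : ∀ u v, 0 ≤ a u v) (c : V → V)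
    {B : Finset V} {x : V → ℝ} (hx : ∀ v, x v ∈ Set.Icc 0 1)
    (hxB : ∀ v ∉ B, x v = 0 ∨ x v = 1) {Δ : ℝ} (hΔ : ∀ i ∈ B, blockWeight a c i ≤ Δ)
    (hΔ0 : 0 ≤ Δ) {η : ℝ} (hη : 0 ≤ η) (hηΔ : 4 * Δ * ∑ u, ∑ v, a u v ≤ η ^ 2) :
    ∃ S : Finset V, expCut a c x - η ≤ cutWeight a S ∧
      expCut (fun u v => a v u) c x - η ≤ cutWeight (fun u v => a v u) S := by
  have ha' : ∀ u v, 0 ≤ (fun u v => a v u) u v := fun u v => ha v u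
  obtain ⟨z, hz, hle⟩ := exists_rounding (isMultiaffine_expCut a c)
    (isMultiaffine_expCut (fun u v => a v u) c) (influenceLE_expCut ha c)
    (blockWeight_swap a c ▸ influenceLE_expCut ha' c) (expCut a c x)
    (expCut (fun u v => a v u) c x) B hx hxB
  have hsum := sum_sq_blockWeight_le ha c hΔ hΔ0
  rw [expCut_eq_cutWeight a c hz, expCut_eq_cutWeight _ c hz, sub_self, sub_self] at hle
  set S := univ.filter fun v => sideProb c z v = 1
  have h₁ := abs_le_of_sq_le_sq (a := cutWeight a S - expCut a c x) (b := η)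
    (by linarith [sq_nonneg (cutWeight (fun u v => a v u) S - expCut (fun u v => a v u) c x)]) hη
  have h₂ := abs_le_of_sq_le_sq
    (a := cutWeight (fun u v => a v u) S - expCut (fun u v => a v u) c x) (b := η)
    (by linarith [sq_nonneg (cutWeight a S - expCut a c x)]) hη
  exact ⟨S, by linarith [(abs_le.1 h₁).1], by linarith [(abs_le.1 h₂).1]⟩

end Weights

end Rounding

section Pairings

variable {V : Type*} {G : SimpleGraph V} {σ : V → V} {u v v' x z : V}

/-- A matching of `G`, written as an involution whose fixed points are the unmatched vertices. -/
structure IsPairing (G : SimpleGraph V) (σ : V → V) : Prop where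
  invol : Function.Involutive σ
  adj : ∀ v, σ v ≠ v → G.Adj v (σ v)

/-- An unmatched vertex adjacent to exactly one end of some matching edge. -/
def IsGood (G : SimpleGraph V) (σ : V → V) (v : V) : Prop :=
  σ v = v ∧ ∃ u, G.Adj v u ∧ ¬ G.Adj v (σ u)

/-- An unmatched vertex adjacent to both or none of the ends of every matching edge. -/
def IsBad (G : SimpleGraph V) (σ : V → V) (v : V) : Prop :=
  σ v = v ∧ ∀ u, G.Adj v u → G.Adj v (σ u)

lemma isBad_iff : IsBad G σ v ↔ σ v = v ∧ ¬ IsGood G σ v := by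
  simp only [IsBad, IsGood]
  grind

lemma IsPairing.partner_ne (hσ : IsPairing G σ) (hu : σ u ≠ u) (hv : σ v = v) : σ u ≠ v :=
  fun h => hu (hσ.invol.injective (by rw [h, hv]))

lemma IsPairing.partner_partner_ne (hσ : IsPairing G σ) (hu : σ u ≠ u) : σ (σ u) ≠ σ u :=
  hσ.invol.injective.ne hu

lemma IsBad.adj_partner_iff (hσ : IsPairing G σ) (hv : IsBad G σ v) :
    G.Adj v (σ u) ↔ G.Adj v u :=
  ⟨fun h => hσ.invol u ▸ hv.2 _ h, hv.2 u⟩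

section Exchange

variable [DecidableEq V]

/-- The matching obtained from `σ` by letting `u` and `v` exchange their roles. -/
def roleSwap (σ : V → V) (u v x : V) : V := Equiv.swap u v (σ (Equiv.swap u v x))

lemma roleSwap_left (hv : σ v = v) : roleSwap σ u v u = u := by
  simp [roleSwap, hv]

lemma roleSwap_right (hu : σ u ≠ u) (huv : σ u ≠ v) : roleSwap σ u v v = σ u := by
  simp [roleSwap, Equiv.swap_apply_of_ne_of_ne hu huv]

lemma roleSwap_partner (hσ : Function.Involutive σ) (hu : σ u ≠ u) (huv : σ u ≠ v) :
    roleSwap σ u v (σ u) = v := by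
  simp [roleSwap, Equiv.swap_apply_of_ne_of_ne hu huv, hσ u]

lemma roleSwap_of_ne (hσ : Function.Involutive σ) (hv : σ v = v) (hxu : x ≠ u) (hxv : x ≠ v)
    (hx : x ≠ σ u) : roleSwap σ u v x = σ x := by
  have h₁ : σ x ≠ u := fun h => hx (by rw [← h, hσ])
  have h₂ : σ x ≠ v := fun h => hxv (by rw [← hσ x, h, hv])
  simp [roleSwap, Equiv.swap_apply_of_ne_of_ne hxu hxv, Equiv.swap_apply_of_ne_of_ne h₁ h₂]

lemma IsPairing.exchange (hσ : IsPairing G σ) (hu : σ u ≠ u) (hv : σ v = v)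
    (h : G.Adj v (σ u)) : IsPairing G (roleSwap σ u v) where
  invol x := by simp [roleSwap, hσ.invol _]
  adj x hx := by
    have huv : σ u ≠ v := hσ.partner_ne hu hv
    rcases eq_or_ne x u with rfl | hxu
    · exact absurd (roleSwap_left hv) hx
    rcases eq_or_ne x v with rfl | hxv
    · rwa [roleSwap_right hu huv]
    rcases eq_or_ne x (σ u) with rfl | hxw
    · rw [roleSwap_partner hσ.invol hu huv]
      exact h.symm
    · rw [roleSwap_of_ne hσ.invol hv hxu hxv hxw] at hx ⊢
      exact hσ.adj x hx

/-- The matching obtained from `σ` by adding the edge between two unmatched vertices. -/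
def link (σ : V → V) (u v x : V) : V := σ (Equiv.swap u v x)

lemma link_left (hv : σ v = v) : link σ u v u = v := by simp [link, hv]

lemma link_right (hu : σ u = u) : link σ u v v = u := by simp [link, hu]

lemma link_of_ne (hxu : x ≠ u) (hxv : x ≠ v) : link σ u v x = σ x := by
  simp [link, Equiv.swap_apply_of_ne_of_ne hxu hxv]

lemma IsPairing.link (hσ : IsPairing G σ) (hu : σ u = u) (hv : σ v = v) (h : G.Adj u v) :
    IsPairing G (link σ u v) where
  invol x := by
    rcases eq_or_ne x u with rfl | hxu
    · rw [link_left hv, link_right hu]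
    rcases eq_or_ne x v with rfl | hxv
    · rw [link_right hu, link_left hv]
    · rw [link_of_ne hxu hxv, link_of_ne (fun h' => hxu (hσ.invol.injective (h'.trans hu.symm)))
        (fun h' => hxv (hσ.invol.injective (h'.trans hv.symm))), hσ.invol]
  adj x hx := by
    rcases eq_or_ne x u with rfl | hxu
    · rwa [link_left hv]
    rcases eq_or_ne x v with rfl | hxv
    · rw [link_right hu]
      exact h.symm
    · rw [link_of_ne hxu hxv] at hx ⊢
      exact hσ.adj x hx

end Exchange

section GoodBad

variable [Fintype V]

open Classical in
/-- The set of good vertices. -/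
noncomputable def goodSet (G : SimpleGraph V) (σ : V → V) : Finset V := univ.filter (IsGood G σ)

open Classical in
/-- The set of bad vertices. -/
noncomputable def badSet (G : SimpleGraph V) (σ : V → V) : Finset V := univ.filter (IsBad G σ)

@[simp] lemma mem_goodSet : v ∈ goodSet G σ ↔ IsGood G σ v := by simp [goodSet]

@[simp] lemma mem_badSet : v ∈ badSet G σ ↔ IsBad G σ v := by simp [badSet]

end GoodBad

variable [Fintype V] [DecidableEq V]

/-- The set of matched vertices. -/
def matched (σ : V → V) : Finset V := univ.filter fun v => σ v ≠ v

@[simp] lemma mem_matched : v ∈ matched σ ↔ σ v ≠ v := by simp [matched]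

lemma card_matched_roleSwap (σ : V → V) (u v : V) :
    (matched (roleSwap σ u v)).card = (matched σ).card := by
  refine card_bij (fun x _ => Equiv.swap u v x) (fun x hx => ?_)
    (fun x _ y _ h => (Equiv.swap u v).injective h) fun x hx => ⟨Equiv.swap u v x, ?_, by simp⟩
  · rw [mem_matched] at hx ⊢
    exact fun h => hx (by simp [roleSwap, h])
  · rw [mem_matched] at hx ⊢
    simpa [roleSwap] using hx

lemma matched_ssubset_link (hu : σ u = u) (hv : σ v = v) (huv : u ≠ v) :
    matched σ ⊂ matched (link σ u v) := by
  refine (ssubset_iff_of_subset fun x hx => ?_).2 ⟨u, ?_, by simpa using hu⟩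
  · rw [mem_matched] at hx ⊢
    rwa [link_of_ne (by rintro rfl; exact hx hu) (by rintro rfl; exact hx hv)]
  · rw [mem_matched, link_left hv]
    exact huv.symm

lemma sum_matched_add_sum_goodSet_add_sum_badSet (G : SimpleGraph V) (σ : V → V) (f : V → ℕ) :
    ∑ v ∈ matched σ, f v + ∑ v ∈ goodSet G σ, f v + ∑ v ∈ badSet G σ, f v = ∑ v, f v := by
  have hgood : Disjoint (matched σ) (goodSet G σ) :=
    disjoint_left.2 fun v hv hg => mem_matched.1 hv (mem_goodSet.1 hg).1
  have hbad : Disjoint (matched σ ∪ goodSet G σ) (badSet G σ) := by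
    refine disjoint_left.2 fun v hv hb => ?_
    rw [mem_badSet, isBad_iff] at hb
    simp [hb.1, hb.2] at hv
  rw [← sum_union hgood, ← sum_union hbad]
  congr 1
  ext v
  simp only [mem_union, mem_matched, mem_goodSet, mem_badSet, isBad_iff, mem_univ, iff_true]
  tauto

/-- A matching with the largest number of edges. -/
structure IsMaxPairing (G : SimpleGraph V) (σ : V → V) : Prop extends IsPairing G σ where
  card_le : ∀ τ, IsPairing G τ → (matched τ).card ≤ (matched σ).card

lemma IsMaxPairing.exchange (hσ : IsMaxPairing G σ) (hu : σ u ≠ u) (hv : σ v = v)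
    (h : G.Adj v (σ u)) : IsMaxPairing G (roleSwap σ u v) where
  toIsPairing := hσ.toIsPairing.exchange hu hv h
  card_le τ hτ := card_matched_roleSwap σ u v ▸ hσ.card_le τ hτ

lemma IsMaxPairing.not_adj (hσ : IsMaxPairing G σ) (hu : σ u = u) (hv : σ v = v) :
    ¬ G.Adj u v := fun h =>
  (card_lt_card (matched_ssubset_link hu hv h.ne)).not_ge
    (hσ.card_le _ (hσ.toIsPairing.link hu hv h))

lemma IsMaxPairing.ne_of_adj (hσ : IsMaxPairing G σ) (hv : σ v = v) (h : G.Adj v u) : σ u ≠ u :=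
  fun hu => hσ.not_adj hv hu h

-- Otherwise `v`, `u`, `σ u`, `v'` is an augmenting path.
lemma IsMaxPairing.not_adj_partner (hσ : IsMaxPairing G σ) (hne : v ≠ v') (hv : σ v = v)
    (hv' : σ v' = v') (h : G.Adj v u) : ¬ G.Adj v' (σ u) := by
  intro h'
  have hu' := hσ.partner_partner_ne (hσ.ne_of_adj hv h)
  have hτ := hσ.exchange (u := σ u) hu' hv (by rwa [hσ.invol])
  have hne' : v' ≠ σ (σ u) := (hσ.partner_ne hu' hv').symm
  refine hτ.not_adj ?_ (roleSwap_left hv) h'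
  rw [roleSwap_of_ne hσ.invol hv h'.ne hne.symm hne', hv']

/-- A maximum matching with the largest number of good vertices. -/
structure IsRichPairing (G : SimpleGraph V) (σ : V → V) : Prop extends IsMaxPairing G σ where
  good_le : ∀ τ, IsMaxPairing G τ → (goodSet G τ).card ≤ (goodSet G σ).card

section Rich

variable (hσ : IsRichPairing G σ) (hv : IsBad G σ v) (h : G.Adj v u)

include hσ hv h

lemma IsRichPairing.goodSet_subset_roleSwap : goodSet G σ ⊆ goodSet G (roleSwap σ u v) := by
  intro x hx
  rw [mem_goodSet] at hx ⊢
  obtain ⟨hxσ, y, hy, hny⟩ := hx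
  have hu := hσ.ne_of_adj hv.1 h
  have hxv : x ≠ v := fun hxv => hny (hxv ▸ hv.2 y (hxv ▸ hy))
  have hxu : x ≠ u := fun hxu => hu (hxu ▸ hxσ)
  have hyv : y ≠ v := fun hyv => hσ.not_adj hxσ hv.1 (hyv ▸ hy)
  have hyu : y ≠ u := fun hyu =>
    hσ.not_adj_partner hxv hxσ hv.1 hy (hyu ▸ hv.2 u h)
  have hyw : y ≠ σ u := fun hyw => hσ.not_adj_partner hxv.symm hv.1 hxσ h (hyw ▸ hy)
  refine ⟨?_, y, hy, ?_⟩
  · rw [roleSwap_of_ne hσ.invol hv.1 hxu hxv (hσ.partner_ne hu hxσ).symm, hxσ]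
  · rwa [roleSwap_of_ne hσ.invol hv.1 hyu hyv hyw]

lemma IsRichPairing.exchange : IsRichPairing G (roleSwap σ u v) where
  toIsMaxPairing := hσ.toIsMaxPairing.exchange (hσ.ne_of_adj hv.1 h) hv.1 (hv.2 u h)
  good_le τ hτ := (hσ.good_le τ hτ).trans (card_le_card (hσ.goodSet_subset_roleSwap hv h))

lemma IsRichPairing.goodSet_roleSwap : goodSet G (roleSwap σ u v) = goodSet G σ :=
  (eq_of_subset_of_card_le (hσ.goodSet_subset_roleSwap hv h)
    (hσ.good_le _ (hσ.exchange hv h).toIsMaxPairing)).symm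

lemma IsRichPairing.isBad_roleSwap : IsBad G (roleSwap σ u v) u := by
  refine isBad_iff.2 ⟨roleSwap_left hv.1, ?_⟩
  rw [← mem_goodSet, hσ.goodSet_roleSwap hv h, mem_goodSet]
  exact fun hu => hσ.ne_of_adj hv.1 h hu.1

lemma IsRichPairing.isBad_roleSwap_of_ne (hv' : IsBad G σ v') (hne : v' ≠ v) :
    IsBad G (roleSwap σ u v) v' := by
  have hu := hσ.ne_of_adj hv.1 h
  refine isBad_iff.2 ⟨?_, ?_⟩
  · rw [roleSwap_of_ne hσ.invol hv.1 (by rintro rfl; exact hu hv'.1) hne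
      (hσ.partner_ne hu hv'.1).symm, hv'.1]
  · rw [← mem_goodSet, hσ.goodSet_roleSwap hv h, mem_goodSet]
    exact (isBad_iff.1 hv').2

lemma IsRichPairing.not_adj_of_adj (hv' : IsBad G σ v') (hne : v ≠ v') (hz : G.Adj u z) :
    ¬ G.Adj v' z := by
  intro hz'
  have hb := hσ.isBad_roleSwap hv h
  have hb' := hσ.isBad_roleSwap_of_ne hv h hv' hne.symm
  have huv' : u ≠ v' := fun huv' => hσ.not_adj hv.1 hv'.1 (huv' ▸ h)
  exact (hσ.exchange hv h).not_adj_partner huv' hb.1 hb'.1 hz (hb'.2 z hz')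

end Rich

/-- `z` is at distance two from `v`. -/
def IsSecondNbr (G : SimpleGraph V) (v z : V) : Prop :=
  z ≠ v ∧ ¬ G.Adj v z ∧ ∃ u, G.Adj v u ∧ G.Adj u z

/-- `x` belongs to the part of the matching that pays for the bad vertex `v` in the discharging
argument. -/
def Pays (G : SimpleGraph V) (σ : V → V) (v x : V) : Prop :=
  G.Adj v x ∨ IsSecondNbr G v x ∨ IsSecondNbr G v (σ x)

section Disjointness

variable (hσ : IsRichPairing G σ) (hv : IsBad G σ v) (hv' : IsBad G σ v') (hne : v ≠ v')

include hσ hv hv' hne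

lemma IsRichPairing.not_adj_of_pays (h : Pays G σ v x) : ¬ G.Adj v' x := by
  rcases h with h | ⟨-, -, u, hu, hz⟩ | ⟨-, -, u, hu, hz⟩
  · exact fun h' => hσ.not_adj_partner hne hv.1 hv'.1 h (hv'.2 x h')
  · exact hσ.not_adj_of_adj hv hu hv' hne hz
  · rw [← hv'.adj_partner_iff hσ.toIsPairing]
    exact hσ.not_adj_of_adj hv hu hv' hne hz

lemma IsRichPairing.not_isSecondNbr_of_isSecondNbr (h : IsSecondNbr G v z) :
    ¬ IsSecondNbr G v' z ∧ ¬ IsSecondNbr G v' (σ z) := by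
  obtain ⟨hzv, hnz, u, hu, hz⟩ := h
  have hτ := hσ.exchange hv hu
  have hb := hσ.isBad_roleSwap hv hu
  have hb' := hσ.isBad_roleSwap_of_ne hv hu hv' hne.symm
  have hv'u : v' ≠ u := fun h => hσ.not_adj hv.1 hv'.1 (h ▸ hu)
  have hzw : z ≠ σ u := fun h => hnz (h ▸ hv.2 u hu)
  have hτz : roleSwap σ u v z = σ z :=
    roleSwap_of_ne hσ.invol hv.1 hz.ne' hzv hzw
  constructor
  · rintro ⟨-, -, u', hu', hz'⟩
    exact hτ.not_adj_of_adj hb' hu' hb hv'u hz' hz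
  · rintro ⟨-, -, u', hu', hz'⟩
    exact hτ.not_adj_of_adj hb' hu' hb hv'u hz' (hτz ▸ hb.2 z hz)

lemma IsRichPairing.not_pays_of_pays (h : Pays G σ v x) : ¬ Pays G σ v' x := by
  rintro (h' | h')
  · exact hσ.not_adj_of_pays hv hv' hne h h'
  · rcases h with h | h | h
    · exact hσ.not_adj_of_pays hv' hv hne.symm (Or.inr h') h
    · exact h'.elim (hσ.not_isSecondNbr_of_isSecondNbr hv hv' hne h).1
        (hσ.not_isSecondNbr_of_isSecondNbr hv hv' hne h).2
    · have hx := hσ.not_isSecondNbr_of_isSecondNbr hv hv' hne h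
      rw [hσ.invol] at hx
      exact h'.elim hx.2 hx.1

end Disjointness

open Classical in
/-- The matched vertices that pay for the bad vertex `v`. -/
noncomputable def payers (G : SimpleGraph V) (σ : V → V) (v : V) : Finset V :=
  univ.filter fun x => σ x ≠ x ∧ Pays G σ v x

@[simp] lemma mem_payers : x ∈ payers G σ v ↔ σ x ≠ x ∧ Pays G σ v x := by simp [payers]

lemma IsRichPairing.pairwiseDisjoint_payers (hσ : IsRichPairing G σ) :
    (badSet G σ : Set V).PairwiseDisjoint (payers G σ) := fun _ hv _ hv' hne =>
  disjoint_left.2 fun _ hx hx' => hσ.not_pays_of_pays (mem_badSet.1 (mem_coe.1 hv))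
    (mem_badSet.1 (mem_coe.1 hv')) hne (mem_payers.1 hx).2 (mem_payers.1 hx').2

lemma IsMaxPairing.neighborFinset_subset_payers [DecidableRel G.Adj] (hσ : IsMaxPairing G σ)
    (hv : σ v = v) : G.neighborFinset v ⊆ payers G σ v := fun _ hx => by
  rw [SimpleGraph.mem_neighborFinset] at hx
  exact mem_payers.2 ⟨hσ.ne_of_adj hv hx, Or.inl hx⟩

lemma IsMaxPairing.even_degree [DecidableRel G.Adj] (hσ : IsMaxPairing G σ)
    (hv : IsBad G σ v) : Even (G.degree v) := by
  have : ∑ _x ∈ G.neighborFinset v, (1 : ZMod 2) = 0 := by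
    refine sum_involution (fun x _ => σ x) (fun _ _ => by decide) (fun _ hx _ => ?_)
      (fun x hx => ?_) (fun x _ => hσ.invol x)
    · exact hσ.ne_of_adj hv.1 (by simpa using hx)
    · simpa using hv.2 x (by simpa using hx)
  simpa [ZMod.natCast_eq_zero_iff_even] using this

lemma IsMaxPairing.ne_of_isSecondNbr (hσ : IsMaxPairing G σ) (hv : IsBad G σ v)
    (h : IsSecondNbr G v z) : σ z ≠ z := by
  obtain ⟨hzv, -, u, hu, hz⟩ := h
  exact fun hzσ => hσ.not_adj_partner hzv hzσ hv.1 hz.symm (hv.2 u hu)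

end Pairings

section Arcs

variable {V : Type*} {E : V → V → Prop} [DecidableRel E] {u v : V}

/-- The number of arcs between `u` and `v`. -/
def arcCount (E : V → V → Prop) [DecidableRel E] (u v : V) : ℕ :=
  (if E u v then 1 else 0) + (if E v u then 1 else 0)

lemma arcCount_comm (E : V → V → Prop) [DecidableRel E] (u v : V) :
    arcCount E u v = arcCount E v u := add_comm _ _

lemma one_le_arcCount (h : (fromRel E).Adj u v) : 1 ≤ arcCount E u v := by
  unfold arcCount
  rcases ((fromRel_adj E u v).1 h).2 with h | h <;> simp [h]

lemma arcCount_eq_zero (hE : ∀ v, ¬ E v v) (h : ¬ (fromRel E).Adj u v) :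
    arcCount E u v = 0 := by
  rw [fromRel_adj] at h
  unfold arcCount
  grind

lemma arcCount_self (hE : ∀ v, ¬ E v v) (v : V) : arcCount E v v = 0 :=
  arcCount_eq_zero hE (SimpleGraph.irrefl _)

variable [Fintype V]

/-- The outdegree truncated at three. -/
def outTrunc (E : V → V → Prop) [DecidableRel E] (v : V) : ℕ :=
  min (univ.filter fun u => E v u).card 3

lemma outTrunc_le_three (E : V → V → Prop) [DecidableRel E] (v : V) : outTrunc E v ≤ 3 :=
  min_le_right _ _

/-- The amount that a matched vertex `v` can give away in the discharging argument: the arcs to its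
partner count for seven units each, of which two are spent on every unit of `outTrunc E v`. -/
def surplus (E : V → V → Prop) [DecidableRel E] (σ : V → V) (v : V) : ℤ :=
  7 * arcCount E v (σ v) - 2 * outTrunc E v

/-- Twice the number of arcs between matched partners. -/
def pairWeight (E : V → V → Prop) [DecidableRel E] (σ : V → V) : ℕ :=
  ∑ v, arcCount E v (σ v)

lemma IsPairing.one_le_surplus {σ : V → V} (hσ : IsPairing (fromRel E) σ)
    (hv : σ v ≠ v) : 1 ≤ surplus E σ v := by
  have h₁ := one_le_arcCount (hσ.adj v hv)
  have h₂ := outTrunc_le_three E v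
  unfold surplus
  omega

lemma IsPairing.card_le_sum_surplus {σ : V → V} (hσ : IsPairing (fromRel E) σ)
    {T : Finset V} (hT : ∀ x ∈ T, σ x ≠ x) : (T.card : ℤ) ≤ ∑ x ∈ T, surplus E σ x := by
  simpa using card_nsmul_le_sum T (surplus E σ) 1 fun x hx => hσ.one_le_surplus (hT x hx)

lemma two_mul_sum_outTrunc_le_of_arcCount_le_one (hE : ∀ v, ¬ E v v)
    {S : Finset V} (hS : ∀ x ∈ S, ∀ y, E x y → y ∈ S)
    (h : ∀ x ∈ S, ∀ y ∈ S, arcCount E x y ≤ 1) :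
    2 * ∑ x ∈ S, outTrunc E x ≤ S.card * (S.card - 1) := by
  classical
  have hout : ∀ x ∈ S, outTrunc E x ≤ ∑ y ∈ S, if E x y then 1 else 0 := fun x hx => by
    rw [← card_filter]
    exact (min_le_left _ _).trans (card_le_card fun y hy => by
      have hxy : E x y := by simpa using hy
      exact mem_filter.2 ⟨hS x hx y hxy, hxy⟩)
  calc 2 * ∑ x ∈ S, outTrunc E x
      ≤ 2 * ∑ x ∈ S, ∑ y ∈ S, (if E x y then 1 else 0) := by gcongr with x hx; exact hout x hx
    _ = ∑ x ∈ S, ∑ y ∈ S, arcCount E x y := by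
        simp only [arcCount, sum_add_distrib]
        rw [two_mul, add_right_inj]
        exact sum_comm
    _ ≤ ∑ x ∈ S, ∑ y ∈ S.erase x, 1 := sum_le_sum fun x hx => by
        rw [← add_sum_erase S _ hx, arcCount_self hE, zero_add]
        exact sum_le_sum fun y hy => h x hx y (mem_of_mem_erase hy)
    _ = S.card * (S.card - 1) := sum_const_nat fun x hx => by simp [card_erase_of_mem hx]

end Arcs

section BestPairing

variable {V : Type*} [Fintype V] [DecidableEq V] {E : V → V → Prop} [DecidableRel E]
  {σ : V → V} {u v z : V}

/-- A maximum matching with the largest number of good vertices and, subject to this, the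
largest number of arcs between matched partners. -/
structure IsBestPairing (E : V → V → Prop) [DecidableRel E] (σ : V → V) : Prop
    extends IsRichPairing (fromRel E) σ where
  weight_le : ∀ τ, IsRichPairing (fromRel E) τ → pairWeight E τ ≤ pairWeight E σ

lemma exists_isBestPairing (E : V → V → Prop) [DecidableRel E] :
    ∃ σ : V → V, IsBestPairing E σ := by
  have hid : IsPairing (fromRel E) id := ⟨fun _ => rfl, fun _ h => absurd rfl h⟩
  obtain ⟨σ₁, h₁, m₁⟩ := Set.exists_max_image _ (fun σ => (matched σ).card)
    (Set.toFinite {σ | IsPairing (fromRel E) σ}) ⟨id, hid⟩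
  obtain ⟨σ₂, h₂, m₂⟩ := Set.exists_max_image _
    (fun σ => (goodSet (fromRel E) σ).card)
    (Set.toFinite {σ | IsMaxPairing (fromRel E) σ}) ⟨σ₁, h₁, m₁⟩
  obtain ⟨σ₃, h₃, m₃⟩ := Set.exists_max_image _ (pairWeight E)
    (Set.toFinite {σ | IsRichPairing (fromRel E) σ}) ⟨σ₂, h₂, m₂⟩
  exact ⟨σ₃, h₃, m₃⟩

lemma IsPairing.pairWeight_roleSwap (hE : ∀ v, ¬ E v v)
    (hσ : IsPairing (fromRel E) σ) (hu : σ u ≠ u) (hv : σ v = v) :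
    pairWeight E (roleSwap σ u v) + 2 * arcCount E u (σ u) =
      pairWeight E σ + 2 * arcCount E v (σ u) := by
  have huv : σ u ≠ v := hσ.partner_ne hu hv
  have huv' : u ≠ v := fun h => hu (by rw [h, hv])
  have hsplit : ∀ f : V → ℕ, ∑ x, f x =
      f u + (f v + (f (σ u) + ∑ x ∈ univ \ {u, v, σ u}, f x)) := fun f => by
    rw [← sum_sdiff (subset_univ {u, v, σ u}), sum_insert (by simp [huv', hu.symm]),
      sum_insert (by simp [huv.symm]), sum_singleton]
    ring
  have hrest : ∑ x ∈ univ \ {u, v, σ u}, arcCount E x (roleSwap σ u v x) =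
      ∑ x ∈ univ \ {u, v, σ u}, arcCount E x (σ x) := sum_congr rfl fun x hx => by
    simp only [mem_sdiff, mem_univ, true_and, mem_insert, mem_singleton, not_or] at hx
    rw [roleSwap_of_ne hσ.invol hv hx.1 hx.2.1 hx.2.2]
  unfold pairWeight
  rw [hsplit, hsplit (fun x => arcCount E x (σ x)), roleSwap_left hv, roleSwap_right hu huv,
    roleSwap_partner hσ.invol hu huv, hσ.invol, hv, arcCount_self hE, arcCount_self hE, hrest,
    arcCount_comm E (σ u) v, arcCount_comm E (σ u) u]
  ring

section

variable (hE : ∀ v, ¬ E v v) (hσ : IsBestPairing E σ)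
  (hv : IsBad (fromRel E) σ v)

include hE hσ hv

lemma IsBestPairing.arcCount_le (h : (fromRel E).Adj v u) :
    arcCount E v u ≤ arcCount E u (σ u) := by
  have hweight := hσ.pairWeight_roleSwap hE (hσ.ne_of_adj hv.1 (hv.2 u h)) hv.1
  have hle := hσ.weight_le _ (hσ.exchange hv (hv.2 u h))
  rw [hσ.invol, arcCount_comm E (σ u) u] at hweight
  omega

lemma IsBestPairing.exchange (h : (fromRel E).Adj v u)
    (hu : arcCount E u (σ u) = 1) : IsBestPairing E (roleSwap σ u v) where
  toIsRichPairing := hσ.toIsRichPairing.exchange hv h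
  weight_le τ hτ := by
    have hweight := hσ.pairWeight_roleSwap hE (hσ.ne_of_adj hv.1 h) hv.1
    have hone := one_le_arcCount (hv.2 u h)
    have hle := hσ.weight_le τ hτ
    omega

lemma IsBestPairing.arcCount_le_one
    (hw : ∀ x, (fromRel E).Adj v x → arcCount E x (σ x) = 1) {x y : V}
    (hx : x = v ∨ (fromRel E).Adj v x)
    (hy : y = v ∨ (fromRel E).Adj v y) : arcCount E x y ≤ 1 := by
  have hvx : ∀ x, (fromRel E).Adj v x → arcCount E v x ≤ 1 := fun x hx =>
    (hσ.arcCount_le hE hv hx).trans (hw x hx).le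
  by_cases hxy : (fromRel E).Adj x y
  swap
  · simp [arcCount_eq_zero hE hxy]
  rcases hx with rfl | hx
  · exact hvx y hxy
  rcases hy with rfl | hy
  · exact arcCount_comm E x y ▸ hvx x hx
  rcases eq_or_ne y (σ x) with rfl | hyx
  · exact (hw x hx).le
  · have hle := (hσ.exchange hE hv hx (hw x hx)).arcCount_le hE (hσ.isBad_roleSwap hv hx) hxy
    rwa [roleSwap_of_ne hσ.invol hv.1 hxy.ne' hy.ne' hyx, hw y hy] at hle

end

section Discharging

lemma IsPairing.sum_surplus_le_sum_payers (hσ : IsPairing (fromRel E) σ)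
    {T : Finset V} (hT : T ⊆ payers (fromRel E) σ v) :
    ∑ x ∈ T, surplus E σ x ≤ ∑ x ∈ payers (fromRel E) σ v, surplus E σ x :=
  sum_le_sum_of_subset_of_nonneg hT fun _ hx _ =>
    zero_le_one.trans (hσ.one_le_surplus (mem_payers.1 hx).1)

lemma outTrunc_le_degree (hE : ∀ v, ¬ E v v) (v : V) :
    outTrunc E v ≤ (fromRel E).degree v := by
  refine (min_le_left _ _).trans (card_le_card fun x hx => ?_)
  have hvx : E v x := by simpa using hx
  rw [SimpleGraph.mem_neighborFinset, fromRel_adj]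
  exact ⟨fun h => hE v (h ▸ hvx), Or.inl hvx⟩

variable (hσ : IsBestPairing E σ) (hv : IsBad (fromRel E) σ v)

include hσ hv

lemma IsBestPairing.two_mul_outTrunc_le_of_six_le_degree
    (h : 6 ≤ (fromRel E).degree v) :
    2 * (outTrunc E v : ℤ) ≤ ∑ x ∈ payers (fromRel E) σ v, surplus E σ x := by
  refine le_trans ?_ (hσ.sum_surplus_le_sum_payers (hσ.neighborFinset_subset_payers hv.1))
  have hcard := hσ.card_le_sum_surplus fun x hx =>
    hσ.ne_of_adj hv.1 (((fromRel E).mem_neighborFinset v x).1 hx)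
  have hthree := outTrunc_le_three E v
  rw [SimpleGraph.card_neighborFinset_eq_degree] at hcard
  omega

lemma IsBestPairing.two_mul_outTrunc_le_of_arcCount_ne_one
    (hu : (fromRel E).Adj v u) (h : arcCount E u (σ u) ≠ 1) :
    2 * (outTrunc E v : ℤ) ≤ ∑ x ∈ payers (fromRel E) σ v, surplus E σ x := by
  have huσ := hσ.ne_of_adj hv.1 hu
  refine le_trans ?_ (hσ.sum_surplus_le_sum_payers
    (singleton_subset_iff.2 (mem_payers.2 ⟨huσ, Or.inl hu⟩)))
  have hone := one_le_arcCount (hσ.adj u huσ)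
  have hv3 := outTrunc_le_three E v
  have hu3 := outTrunc_le_three E u
  rw [sum_singleton, surplus]
  omega

variable (hE : ∀ v, ¬ E v v)

include hE

lemma IsBestPairing.two_mul_outTrunc_le_of_isSecondNbr
    (hz : IsSecondNbr (fromRel E) v z) :
    2 * (outTrunc E v : ℤ) ≤ ∑ x ∈ payers (fromRel E) σ v, surplus E σ x := by
  set N := (fromRel E).neighborFinset v
  have hzσ := hσ.ne_of_isSecondNbr hv hz
  have hsub : insert z (insert (σ z) N) ⊆ payers (fromRel E) σ v :=
    insert_subset (mem_payers.2 ⟨hzσ, Or.inr (Or.inl hz)⟩)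
      (insert_subset (mem_payers.2 ⟨hσ.partner_partner_ne hzσ, Or.inr (Or.inr
        (by rwa [hσ.invol]))⟩) (hσ.neighborFinset_subset_payers hv.1))
  have hcard := hσ.card_le_sum_surplus fun x hx => (mem_payers.1 (hsub hx)).1
  have hzN : z ∉ N := by simpa [N] using hz.2.1
  have hσzN : σ z ∉ N := by
    simpa only [N, SimpleGraph.mem_neighborFinset, hv.adj_partner_iff hσ.toIsPairing] using hz.2.1
  rw [card_insert_of_notMem (by simp [hzσ.symm, hzN]), card_insert_of_notMem hσzN,
    SimpleGraph.card_neighborFinset_eq_degree] at hcard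
  refine le_trans ?_ (hσ.sum_surplus_le_sum_payers hsub)
  obtain ⟨r, hr⟩ := hσ.even_degree hv
  have hthree := outTrunc_le_three E v
  have hdeg := outTrunc_le_degree hE v
  omega

lemma IsBestPairing.two_mul_outTrunc_le_of_forall_not_isSecondNbr
    (hdeg : (fromRel E).degree v ≤ 6)
    (hw : ∀ x, (fromRel E).Adj v x → arcCount E x (σ x) = 1)
    (hz : ∀ z, ¬ IsSecondNbr (fromRel E) v z) :
    2 * (outTrunc E v : ℤ) ≤ ∑ x ∈ payers (fromRel E) σ v, surplus E σ x := by
  set N := (fromRel E).neighborFinset v with hN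
  have hNcard : N.card = (fromRel E).degree v :=
    SimpleGraph.card_neighborFinset_eq_degree _ v
  have hvN : v ∉ N := SimpleGraph.notMem_neighborFinset_self _ v
  have mem_closed : ∀ x, x ∈ insert v N ↔ x = v ∨ (fromRel E).Adj v x := by
    simp [hN]
  have hclosed : ∀ x ∈ insert v N, ∀ y, E x y → y ∈ insert v N := by
    intro x hx y hxy
    have hadj : (fromRel E).Adj x y :=
      (fromRel_adj E x y).2 ⟨fun h => hE x (h ▸ hxy), Or.inl hxy⟩
    rw [mem_closed] at hx ⊢
    rcases hx with rfl | hx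
    · exact Or.inr hadj
    · by_contra! hy
      exact hz y ⟨hy.1, hy.2, x, hx, hadj⟩
  have hcount := two_mul_sum_outTrunc_le_of_arcCount_le_one hE hclosed fun x hx y hy =>
    hσ.arcCount_le_one hE hv hw ((mem_closed x).1 hx) ((mem_closed y).1 hy)
  rw [card_insert_of_notMem hvN, Nat.add_sub_cancel, sum_insert hvN, hNcard] at hcount
  have hsurplus : ∑ x ∈ N, surplus E σ x = 7 * N.card - 2 * ∑ x ∈ N, (outTrunc E x : ℤ) := by
    simp only [surplus, sum_sub_distrib, ← mul_sum]
    congr 2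
    rw [sum_congr rfl fun x hx => by
      rw [hw x ((SimpleGraph.mem_neighborFinset _ _ _).1 hx), Nat.cast_one], sum_const,
      nsmul_one]
  refine le_trans ?_ (hσ.sum_surplus_le_sum_payers (hσ.neighborFinset_subset_payers hv.1))
  rw [← hN, hsurplus, hNcard]
  zify at hcount hdeg
  nlinarith

theorem IsBestPairing.two_mul_outTrunc_le_sum_payers :
    2 * (outTrunc E v : ℤ) ≤ ∑ x ∈ payers (fromRel E) σ v, surplus E σ x := by
  rcases le_total 6 ((fromRel E).degree v) with hdeg | hdeg
  · exact hσ.two_mul_outTrunc_le_of_six_le_degree hv hdeg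
  by_cases hw : ∀ x, (fromRel E).Adj v x → arcCount E x (σ x) = 1
  swap
  · push Not at hw
    obtain ⟨u, hu, hne⟩ := hw
    exact hσ.two_mul_outTrunc_le_of_arcCount_ne_one hv hu hne
  by_cases hz : ∃ z, IsSecondNbr (fromRel E) v z
  · obtain ⟨z, hz⟩ := hz
    exact hσ.two_mul_outTrunc_le_of_isSecondNbr hv hE hz
  · exact hσ.two_mul_outTrunc_le_of_forall_not_isSecondNbr hv hE hdeg hw (not_exists.1 hz)

omit hv

lemma IsBestPairing.two_mul_sum_badSet_outTrunc_le :
    2 * ∑ v ∈ badSet (fromRel E) σ, (outTrunc E v : ℤ) ≤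
      ∑ x ∈ matched σ, surplus E σ x :=
  calc 2 * ∑ v ∈ badSet (fromRel E) σ, (outTrunc E v : ℤ)
      ≤ ∑ v ∈ badSet (fromRel E) σ,
          ∑ x ∈ payers (fromRel E) σ v, surplus E σ x := by
        rw [mul_sum]
        exact sum_le_sum fun v hv => hσ.two_mul_outTrunc_le_sum_payers (mem_badSet.1 hv) hE
    _ = ∑ x ∈ (badSet (fromRel E) σ).biUnion (payers (fromRel E) σ),
          surplus E σ x := (sum_biUnion hσ.pairwiseDisjoint_payers).symm
    _ ≤ ∑ x ∈ matched σ, surplus E σ x := by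
        refine sum_le_sum_of_subset_of_nonneg (fun x hx => ?_) fun x hx _ =>
          zero_le_one.trans (hσ.one_le_surplus (mem_matched.1 hx))
        obtain ⟨v, -, hx⟩ := mem_biUnion.1 hx
        exact mem_matched.2 (mem_payers.1 hx).1

theorem IsBestPairing.two_mul_sum_outTrunc_le :
    2 * ∑ v, outTrunc E v ≤
      7 * pairWeight E σ + 6 * (goodSet (fromRel E) σ).card := by
  have hbad := hσ.two_mul_sum_badSet_outTrunc_le hE
  have hsurplus : ∑ x ∈ matched σ, surplus E σ x =
      7 * pairWeight E σ - 2 * ∑ x ∈ matched σ, (outTrunc E x : ℤ) := by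
    simp only [surplus, sum_sub_distrib, ← mul_sum, pairWeight, Nat.cast_sum]
    congr 2
    refine sum_subset (subset_univ _) fun x _ hx => ?_
    rw [mem_matched, not_not] at hx
    rw [hx, arcCount_self hE, Nat.cast_zero]
  have hgood : ∑ v ∈ goodSet (fromRel E) σ, outTrunc E v ≤
      (goodSet (fromRel E) σ).card * 3 :=
    sum_le_card_nsmul _ _ _ fun v _ => outTrunc_le_three E v
  have hsum := sum_matched_add_sum_goodSet_add_sum_badSet (fromRel E) σ (outTrunc E)
  zify at hsum hgood ⊢
  linarith

end Discharging

end BestPairing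

section Stars

variable {V : Type*} {G : SimpleGraph V} {σ w c : V → V} {L : Set V} {u v : V}

/-- A family of vertex-disjoint stars in `G`, given by the map `c` that sends every vertex to the
centre of its star, such that the leaves of each star are pairwise non-adjacent. -/
structure IsStarForest (G : SimpleGraph V) (c : V → V) : Prop where
  idem : ∀ v, c (c v) = c v
  adj : ∀ v, c v ≠ v → G.Adj v (c v)
  not_adj : ∀ u v, c u ≠ u → c v ≠ v → c u = c v → ¬ G.Adj u v

lemma exists_transversal (hσ : Function.Involutive σ) {W : Set V}
    (hW : ∀ x ∈ W, σ x ≠ x → σ x ∉ W) :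
    ∃ L : Set V, W ⊆ L ∧ ∀ x, σ x ≠ x → (σ x ∈ L ↔ x ∉ L) := by
  let _ : LinearOrder V := WellOrderingRel.isWellOrder.linearOrder
  refine ⟨{x | x ∈ W ∨ (σ x ∉ W ∧ x < σ x)}, fun x hx => Or.inl hx, fun x hx => ?_⟩
  have hW' := hW x
  simp only [Set.mem_ofPred_eq, hσ x]
  rcases hx.lt_or_gt with h | h
  · simp only [h, h.not_gt]
    tauto
  · simp only [h, h.not_gt]
    tauto

/-- `w` attaches every good vertex to an end of a matching edge whose other end is not adjacent
to it, and fixes the vertices that are not good. -/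
structure IsAttachment (G : SimpleGraph V) (σ w : V → V) : Prop where
  adj : ∀ v, IsGood G σ v → G.Adj v (w v)
  not_adj_partner : ∀ v, IsGood G σ v → ¬ G.Adj v (σ (w v))
  fixed : ∀ v, ¬ IsGood G σ v → w v = v

lemma exists_isAttachment (G : SimpleGraph V) (σ : V → V) : ∃ w, IsAttachment G σ w := by
  have h : ∀ v, ∃ u, (IsGood G σ v → G.Adj v u ∧ ¬ G.Adj v (σ u)) ∧ (¬ IsGood G σ v → u = v) := by
    intro v
    by_cases hv : IsGood G σ v
    · obtain ⟨u, hu⟩ := hv.2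
      exact ⟨u, fun _ => hu, fun hn => absurd hv hn⟩
    · exact ⟨v, fun h => absurd h hv, fun _ => rfl⟩
  choose w hw hfix using h
  exact ⟨w, fun v hv => (hw v hv).1, fun v hv => (hw v hv).2, hfix⟩

open Classical in
/-- Takes the end in `L` of each matching edge as the centre of a star, and attaches every
unmatched vertex `v` to the star of `w v`. -/
noncomputable def starMap (σ w : V → V) (L : Set V) (v : V) : V :=
  if σ v = v then w v else if v ∈ L then v else σ v

lemma starMap_of_mem (hv : σ v ≠ v) (hL : v ∈ L) : starMap σ w L v = v := by
  simp [starMap, hv, hL]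

lemma IsAttachment.starMap_ne (hw : IsAttachment G σ w) (h : starMap σ w L v ≠ v) :
    (IsGood G σ v ∧ starMap σ w L v = w v) ∨
      (σ v ≠ v ∧ v ∉ L ∧ starMap σ w L v = σ v) := by
  unfold starMap at h ⊢
  have hfix := hw.fixed v
  split_ifs at h ⊢ <;> tauto

lemma exists_isStarForest_starMap [Fintype V] [DecidableEq V] (hσ : IsMaxPairing G σ)
    (hw : IsAttachment G σ w) :
    ∃ L : Set V, (∀ x, σ x ≠ x → (σ x ∈ L ↔ x ∉ L)) ∧ IsStarForest G (starMap σ w L) := by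
  have hwσ : ∀ v, IsGood G σ v → σ (w v) ≠ w v := fun v hv => hσ.ne_of_adj hv.1 (hw.adj v hv)
  obtain ⟨L, hWL, hL⟩ := exists_transversal hσ.invol (W := w '' {v | IsGood G σ v}) (by
    rintro _ ⟨v, hv, rfl⟩ hne ⟨v', hv', h⟩
    refine hσ.not_adj_partner ?_ hv.1 hv'.1 (hw.adj v hv) (h ▸ hw.adj v' hv')
    rintro rfl
    exact hne h.symm)
  have hmixed : ∀ u v, IsGood G σ u → w u = σ v → ¬ G.Adj u v := fun u v hu h => by
    simpa only [h, hσ.invol v] using hw.not_adj_partner u hu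
  refine ⟨L, hL, fun v => ?_, fun v h => ?_, fun u v hu hv huv => ?_⟩
  · by_cases h : starMap σ w L v = v
    · rw [h, h]
    · rcases hw.starMap_ne h with ⟨hg, h⟩ | ⟨hv, hvL, h⟩
      · rw [h, starMap_of_mem (hwσ v hg) (hWL ⟨v, hg, rfl⟩)]
      · rw [h, starMap_of_mem (hσ.partner_partner_ne hv) ((hL v hv).2 hvL)]
  · rcases hw.starMap_ne h with ⟨hg, h⟩ | ⟨hv, -, h⟩ <;> rw [h]
    · exact hw.adj v hg
    · exact hσ.adj v hv
  · rcases hw.starMap_ne hu with ⟨hgu, hu'⟩ | ⟨-, -, hu'⟩ <;>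
      rcases hw.starMap_ne hv with ⟨hgv, hv'⟩ | ⟨-, -, hv'⟩ <;> rw [hu', hv'] at huv
    · exact hσ.not_adj hgu.1 hgv.1
    · exact hmixed u v hgu huv
    · exact fun h => hmixed v u hgv huv.symm h.symm
    · exact hσ.invol.injective huv ▸ G.irrefl

variable [Fintype V] {E : V → V → Prop} [DecidableRel E]

lemma two_mul_sum_arcCount_starMap (hE : ∀ v, ¬ E v v)
    (hσ : IsPairing (fromRel E) σ) (hw : IsAttachment (fromRel E) σ w)
    (hL : ∀ x, σ x ≠ x → (σ x ∈ L ↔ x ∉ L)) :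
    2 * ∑ v, arcCount E v (starMap σ w L v) =
      pairWeight E σ + 2 * ∑ v ∈ goodSet (fromRel E) σ, arcCount E v (w v) := by
  classical
  set g : V → ℕ := fun v => if v ∈ L then 0 else arcCount E v (σ v) with hg
  have hself := arcCount_self hE
  have hterm : ∀ v, arcCount E v (starMap σ w L v) =
      g v + if IsGood (fromRel E) σ v then arcCount E v (w v) else 0 := by
    intro v
    by_cases hv : σ v = v
    · by_cases hgood : IsGood (fromRel E) σ v <;>
        simp [starMap, hg, hv, hgood, hself, hw.fixed]
    · have hgood : ¬ IsGood (fromRel E) σ v := fun h => hv h.1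
      by_cases hvL : v ∈ L <;> simp [starMap, hg, hv, hvL, hgood, hself]
  have hpair : pairWeight E σ = ∑ v, (g v + g (σ v)) := by
    refine sum_congr rfl fun v _ => ?_
    by_cases hv : σ v = v
    · simp [hg, hv, hself]
    · by_cases hvL : v ∈ L <;> simp [hg, hvL, hL v hv, hσ.invol v, arcCount_comm E (σ v) v]
  have hflip : ∑ v, g (σ v) = ∑ v, g v := Equiv.sum_comp hσ.invol.toPerm g
  rw [hpair, sum_add_distrib, hflip, sum_congr rfl fun v _ => hterm v, sum_add_distrib,
    ← sum_filter, goodSet]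
  ring

theorem exists_isStarForest (hE : ∀ v, ¬ E v v) :
    ∃ c : V → V, IsStarForest (fromRel E) c ∧
      ∑ v, outTrunc E v ≤ 7 * ∑ v, arcCount E v (c v) := by
  classical
  obtain ⟨σ, hσ⟩ := exists_isBestPairing E
  obtain ⟨w, hw⟩ := exists_isAttachment (fromRel E) σ
  obtain ⟨L, hL, hstar⟩ := exists_isStarForest_starMap hσ.toIsMaxPairing hw
  refine ⟨starMap σ w L, hstar, ?_⟩
  have hout := hσ.two_mul_sum_outTrunc_le hE
  have harcs := two_mul_sum_arcCount_starMap hE hσ.toIsPairing hw hL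
  have hgood := card_nsmul_le_sum (goodSet (fromRel E) σ) (fun v => arcCount E v (w v)) 1
    fun v hv => one_le_arcCount (hw.adj v (mem_goodSet.1 hv))
  rw [smul_eq_mul, mul_one] at hgood
  omega

end Stars

section Signs

variable {V : Type*} [DecidableEq V] {X H R T : Finset V} {y : V → ℝ} {θ : ℝ}

/-- The signed sum of `y` over `X`: the terms in `S` are counted negatively. -/
def signSum (X : Finset V) (y : V → ℝ) (S : Finset V) : ℝ :=
  ∑ i ∈ X, if i ∈ S then -y i else y i

lemma signSum_congr {y' : V → ℝ} {S S' : Finset V}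
    (h : ∀ i ∈ X, (if i ∈ S then -y i else y i) = if i ∈ S' then -y' i else y' i) :
    signSum X y S = signSum X y' S' :=
  sum_congr rfl h

lemma signSum_eq_sum_sub (hT : T ⊆ H) : signSum H y T = ∑ i ∈ H, y i - 2 * ∑ i ∈ T, y i := by
  have hsign : ∀ i, (if i ∈ T then -y i else y i) = y i - 2 * if i ∈ T then y i else 0 := by
    intro i
    split_ifs <;> ring
  simp only [signSum, hsign, sum_sub_distrib, ← mul_sum, sum_ite_mem, inter_eq_right.2 hT]

lemma neg_signSum (X : Finset V) (y : V → ℝ) (S : Finset V) :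
    -signSum X y S = signSum X (fun i => -y i) S := by
  rw [signSum, signSum, ← sum_neg_distrib]
  exact sum_congr rfl fun i _ => by split_ifs <;> rfl

lemma exists_signSum_abs (X : Finset V) (y : V → ℝ) (S : Finset V) :
    ∃ S', signSum X (fun i => |y i|) S = signSum X y S' := by
  refine ⟨X.filter fun i => i ∈ S ↔ 0 ≤ y i, signSum_congr fun i hi => ?_⟩
  rcases le_or_gt 0 (y i) with hyi | hyi <;> by_cases hiS : i ∈ S <;>
    simp [hi, hiS, hyi, abs_of_nonneg, abs_of_neg]

lemma exists_signSum_union (hHR : Disjoint H R) (y : V → ℝ) (S T : Finset V) :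
    ∃ U, signSum (H ∪ R) y U = signSum H y S + signSum R y T := by
  refine ⟨S ∩ H ∪ T ∩ R, ?_⟩
  rw [signSum, sum_union hHR]
  congr 1
  · exact signSum_congr fun i hi => by simp [hi, disjoint_left.1 hHR hi]
  · exact signSum_congr fun i hi => by simp [hi, disjoint_right.1 hHR hi]

lemma exists_abs_add_signSum_lt (hR : ∀ i ∈ R, y i ∈ Set.Ico 0 θ) :
    ∀ t : ℝ, |t| < θ + ∑ i ∈ R, y i → ∃ S, |t + signSum R y S| < θ := by
  induction R using Finset.induction_on with
  | empty => exact fun t ht => ⟨∅, by simpa [signSum] using ht⟩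
  | insert i R hi ih =>
    intro t ht
    obtain ⟨⟨hi0, hiθ⟩, hR'⟩ := forall_mem_insert .. |>.1 hR
    have hsum : 0 ≤ ∑ j ∈ R, y j := sum_nonneg fun j hj => (hR' j hj).1
    rw [sum_insert hi, abs_lt] at ht
    have extend : ∀ s S, (∃ S', signSum {i} y S' = s) → |t + s + signSum R y S| < θ →
        ∃ S', |t + signSum (insert i R) y S'| < θ := by
      rintro _ S ⟨S', rfl⟩ hS
      obtain ⟨U, hU⟩ := exists_signSum_union (disjoint_singleton_left.2 hi) y S' S
      exact ⟨U, by rwa [insert_eq, hU, ← add_assoc]⟩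
    rcases le_total 0 t with h | h
    · obtain ⟨S, hS⟩ := ih hR' (t + -y i) (by rw [abs_lt]; constructor <;> linarith)
      exact extend _ S ⟨{i}, by simp [signSum]⟩ hS
    · obtain ⟨S, hS⟩ := ih hR' (t + y i) (by rw [abs_lt]; constructor <;> linarith)
      exact extend _ S ⟨∅, by simp [signSum]⟩ hS

lemma abs_add_lt_or_abs_neg_add_lt {s d : ℝ} (hs : |s| < θ) (hd : |d| < θ) :
    |d + s| < θ ∨ |-d + s| < θ := by
  simp only [abs_lt] at *
  grind

lemma exists_abs_signSum_lt_of_even (hθ : 0 < θ) (hH : Even H.card)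
    (hy : ∀ i ∈ H, ∀ j ∈ H, |y i - y j| < θ) : ∃ S, |signSum H y S| < θ := by
  induction H using Finset.strongInduction with
  | H H ih =>
    rcases H.eq_empty_or_nonempty with rfl | hne
    · exact ⟨∅, by simpa [signSum] using hθ⟩
    · have hcard : 1 < H.card := by
        obtain ⟨k, hk⟩ := hH
        have := hne.card_pos
        omega
      obtain ⟨i, hi, j, hj, hij⟩ := one_lt_card.1 hcard
      have hpair : {i, j} ⊆ H := insert_subset hi (singleton_subset_iff.2 hj)
      have heven : Even (H \ {i, j}).card := by
        rw [card_sdiff_of_subset hpair, card_pair hij]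
        exact hH.tsub even_two
      obtain ⟨S, hS⟩ := ih (H \ {i, j}) (sdiff_ssubset hpair (insert_nonempty ..)) heven
        fun k hk l hl => hy k (mem_sdiff.1 hk).1 l (mem_sdiff.1 hl).1
      have extend := exists_signSum_union (disjoint_sdiff (s := {i, j}) (t := H)) y
      have hdiff : signSum {i, j} y {j} = y i - y j := by
        simp [signSum, sum_pair hij, hij, sub_eq_add_neg]
      have hdiff' : signSum {i, j} y {i} = -(y i - y j) := by
        simp [signSum, sum_pair hij, hij.symm, neg_add_eq_sub]
      rw [union_sdiff_of_subset hpair] at extend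
      rcases abs_add_lt_or_abs_neg_add_lt hS (hy i hi j hj) with h | h
      · exact (extend {j} S).imp fun U hU => by rwa [hU, hdiff]
      · exact (extend {i} S).imp fun U hU => by rwa [hU, hdiff']

lemma add_sum_le_abs_signSum (hHR : Disjoint H R) (hR : ∀ i ∈ R, y i ∈ Set.Ico 0 θ)
    (hmin : ∀ S, θ ≤ |signSum (H ∪ R) y S|) (T : Finset V) :
    θ + ∑ i ∈ R, y i ≤ |signSum H y T| := by
  by_contra! h
  obtain ⟨S, hS⟩ := exists_abs_add_signSum_lt hR _ h
  obtain ⟨U, hU⟩ := exists_signSum_union hHR y T S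
  exact (hmin U).not_gt (hU ▸ hS)

end Signs

section Majority

variable {V : Type*} [DecidableEq V] {H T : Finset V} {y : V → ℝ} {t θ : ℝ}

/-- Every minority of `H`, missing by one element to be half of it, has weight smaller by at
least `t` than its complement. -/
def MajorityGap (H : Finset V) (y : V → ℝ) (t : ℝ) : Prop :=
  ∀ T ⊆ H, H.card = 2 * T.card + 1 → t ≤ ∑ i ∈ H, y i - 2 * ∑ i ∈ T, y i

lemma majorityGap_of_le_abs_signSum (hθ : 0 < θ) (ht : θ ≤ t) (hcard : H.card < 7)
    (hy : ∀ i ∈ H, y i ∈ Set.Ico θ (7 / 4 * θ)) (hsign : ∀ S, t ≤ |signSum H y S|) :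
    MajorityGap H y t := by
  intro T hT hc
  have hTsum : ∑ i ∈ T, y i ≤ T.card * (7 / 4 * θ) := by
    rw [← nsmul_eq_mul]
    exact sum_le_card_nsmul _ _ _ fun i hi => (hy i (hT hi)).2.le
  have hsdiff : (H \ T).card * θ ≤ ∑ i ∈ H \ T, y i := by
    rw [← nsmul_eq_mul]
    exact card_nsmul_le_sum _ _ _ fun i hi => (hy i (mem_sdiff.1 hi).1).1
  have hsdiff_card : (H \ T).card = T.card + 1 := by
    rw [card_sdiff_of_subset hT]
    omega
  have hT2 : (T.card : ℝ) ≤ 2 := by exact_mod_cast (by omega : T.card ≤ 2)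
  rw [hsdiff_card, Nat.cast_add_one] at hsdiff
  have hgt : -θ < ∑ i ∈ H, y i - 2 * ∑ i ∈ T, y i := by
    nlinarith [sum_sdiff (f := y) hT]
  have habs := hsign T
  rw [signSum_eq_sum_sub hT] at habs
  rcases le_abs.1 habs with h | h <;> linarith

namespace MajorityGap

lemma card_add_one_mul_le (h : MajorityGap H y t) (hT : T ⊆ H) (hc : H.card = 2 * T.card + 1) :
    (T.card + 1) * t ≤ (T.card + 1) * ∑ i ∈ T, y i - (T.card - 1) * ∑ i ∈ H \ T, y i := by
  have hsdiff_card : (H \ T).card = T.card + 1 := by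
    rw [card_sdiff_of_subset hT]
    omega
  have hmem : ∀ c ∈ H \ T, t ≤ ∑ i ∈ T, y i - ∑ i ∈ H \ T, y i + 2 * y c := by
    intro c hcU
    have hle := h ((H \ T).erase c) ((erase_subset _ _).trans sdiff_subset)
      (by rw [card_erase_of_mem hcU, hsdiff_card]; omega)
    linarith [sum_sdiff (f := y) hT, add_sum_erase _ y hcU]
  have hsum := card_nsmul_le_sum _ _ _ hmem
  rw [sum_add_distrib, sum_const, ← mul_sum, hsdiff_card, nsmul_eq_mul, nsmul_eq_mul,
    Nat.cast_add_one] at hsum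
  linarith

omit [DecidableEq V] in
lemma card_mul_le_sum (h : MajorityGap H y t) (hH : Odd H.card) : H.card * t ≤ ∑ i ∈ H, y i := by
  classical
  obtain ⟨k, hk⟩ := hH
  obtain ⟨T, hT, rfl⟩ := exists_subset_card_eq (s := H) (n := k) (by omega)
  have havg := h.card_add_one_mul_le hT hk
  have hgap := mul_le_mul_of_nonneg_left (h T hT hk) T.card.cast_nonneg
  rw [← sum_sdiff hT] at hgap ⊢
  rw [hk, Nat.cast_add_one, Nat.cast_mul, Nat.cast_two]
  linarith

end MajorityGap

end Majority

section Balance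

variable {V : Type*} [DecidableEq V] {X P M : Finset V} {f g : V → ℝ} {r : ℝ}

lemma sum_sdiff_union (hPM : Disjoint P M) (hX : P ∪ M ⊆ X) (F : V → ℝ) :
    ∑ x ∈ X, F x = ∑ x ∈ P, F x + ∑ x ∈ M, F x + ∑ x ∈ X \ (P ∪ M), F x := by
  rw [← sum_union hPM, add_comm, sum_sdiff hX]

lemma weighted_balance_le (hf : ∀ x, f x ∈ Set.Icc 0 1) (hg : ∀ x, g x ∈ Set.Icc 0 1)
    (hPM : Disjoint P M) (hX : P ∪ M ⊆ X) (hr : 1 ≤ r) {s : ℝ} (hs : s ∈ Set.Icc 1 2) :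
    r * ∑ x ∈ P, (f x - g x) + r * ∑ x ∈ M, (g x - f x) + ∑ x ∈ X \ (P ∪ M), (f x - g x) -
        ∑ x ∈ X, (f x + g x) + s * ∑ x ∈ X, g x ≤
      P.card * (r - 1) + M.card * (r - 1 + s) := by
  obtain ⟨hs1, hs2⟩ := hs
  have hP : ∑ x ∈ P, (r * (f x - g x) - (f x + g x) + s * g x) ≤ P.card * (r - 1) := by
    rw [← nsmul_eq_mul]
    refine sum_le_card_nsmul _ _ _ fun x _ => ?_
    nlinarith [(hf x).2, (hg x).1]
  have hM : ∑ x ∈ M, (r * (g x - f x) - (f x + g x) + s * g x) ≤ M.card * (r - 1 + s) := by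
    rw [← nsmul_eq_mul]
    refine sum_le_card_nsmul _ _ _ fun x _ => ?_
    nlinarith [(hf x).1, (hg x).2]
  have hR : ∑ x ∈ X \ (P ∪ M), ((f x - g x) - (f x + g x) + s * g x) ≤ 0 :=
    sum_nonpos fun x _ => by nlinarith [(hg x).1]
  rw [sum_sdiff_union hPM hX, sum_sdiff_union hPM hX]
  simp only [sum_add_distrib, sum_sub_distrib, ← mul_sum] at hP hM hR ⊢
  linarith

lemma balance_le_of_four_le (hf : ∀ x, f x ∈ Set.Icc 0 1) (hg : ∀ x, g x ∈ Set.Icc 0 1)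
    (hPM : Disjoint P M) (hX : P ∪ M ⊆ X) (hr : 1 ≤ r) (hr7 : r * (P.card + M.card) = 7)
    (hcard : M.card ≤ P.card + 1) {β : ℝ} (hβ : 4 ≤ ∑ x ∈ X, g x + β) :
    r * ∑ x ∈ P, (f x - g x) + r * ∑ x ∈ M, (g x - f x) + ∑ x ∈ X \ (P ∪ M), (f x - g x) ≤
      ∑ x ∈ X, (f x + g x) + β + min β 3 := by
  have hone := weighted_balance_le hf hg hPM hX hr (Set.left_mem_Icc.2 one_le_two)
  have htwo := weighted_balance_le hf hg hPM hX hr (Set.right_mem_Icc.2 one_le_two)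
  have hcard' : (M.card : ℝ) ≤ P.card + 1 := by exact_mod_cast hcard
  rcases min_cases β 3 with ⟨h, -⟩ | ⟨h, -⟩
  · rw [h]
    nlinarith
  · rw [h]
    nlinarith

/-- The weight of the arcs from `x` to `Y`. -/
def outTo (a : V → V → ℝ) (Y : Finset V) (x : V) : ℝ := ∑ v ∈ Y, a x v

/-- The weight of the arcs from `Y` to `x`. -/
def inFrom (a : V → V → ℝ) (Y : Finset V) (x : V) : ℝ := ∑ v ∈ Y, a v x

lemma balance_le [Fintype V] {a : V → V → ℝ} (ha : ∀ u v, a u v ∈ Set.Icc 0 1)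
    (hPM : Disjoint P M) (hX : P ∪ M ⊆ X) (hr : 1 ≤ r) (hr7 : r * (P.card + M.card) = 7)
    (hcard : M.card ≤ P.card + 1) (hout : ∀ v, 4 ≤ ∑ x, a v x) :
    r * ∑ x ∈ P, (outTo a Xᶜ x - inFrom a Xᶜ x) + r * ∑ x ∈ M, (inFrom a Xᶜ x - outTo a Xᶜ x) +
        ∑ x ∈ X \ (P ∪ M), (outTo a Xᶜ x - inFrom a Xᶜ x) ≤
      ∑ x ∈ X, (outTo a Xᶜ x + inFrom a Xᶜ x) + ∑ v ∈ Xᶜ, outTo a Xᶜ v +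
        ∑ v ∈ Xᶜ, min (outTo a Xᶜ v) 3 := by
  have hlocal := sum_le_sum fun v (_ : v ∈ Xᶜ) =>
    balance_le_of_four_le (ha · v) (ha v) hPM hX hr hr7 hcard (β := outTo a Xᶜ v)
      (by simpa only [outTo, sum_add_sum_compl] using hout v)
  have hswap : ∀ (Q : Finset V) (F : V → V → ℝ),
      ∑ v ∈ Xᶜ, ∑ x ∈ Q, F x v = ∑ x ∈ Q, ∑ v ∈ Xᶜ, F x v := fun Q F => sum_comm
  simp only [sum_add_distrib, sum_sub_distrib, ← mul_sum] at hlocal ⊢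
  simp only [hswap _ a, hswap _ fun x v => a v x] at hlocal
  exact hlocal

end Balance

section BiasedPlacement

variable {V : Type*} {O I : V → ℝ} {X H T Q : Finset V} {b n θ : ℝ}

/-- The total weight of the arcs of a digraph which are not inside `X`, computed from the weights
`O x` and `I x` of the arcs from `x` to the complement of `X` and back, and from the weight `b` of
the arcs avoiding `X`. -/
def profileWeight (O I : V → ℝ) (X : Finset V) (b : ℝ) : ℝ := ∑ x ∈ X, (O x + I x) + b

/-- The properties of the weights `O`, `I`, `b` coming from a digraph with minimum outdegree at
least `4` and with `n` vertices outside `X`. -/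
structure IsProfile (O I : V → ℝ) (X : Finset V) (b n : ℝ) : Prop where
  out_mem : ∀ x, O x ∈ Set.Icc 0 n
  in_mem : ∀ x, I x ∈ Set.Icc 0 n
  nonneg : 0 ≤ b
  four_mul_le : 4 * n ≤ ∑ x ∈ X, I x + b

/-- The vertices of `Q` sending out at least as much as they receive. -/
noncomputable def outHeavy (O I : V → ℝ) (Q : Finset V) : Finset V := Q.filter fun x => I x ≤ O x

/-- The vertices of `Q` receiving more than they send out. -/
noncomputable def inHeavy (O I : V → ℝ) (Q : Finset V) : Finset V := Q.filter fun x => O x < I x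

lemma inHeavy_subset : inHeavy O I Q ⊆ Q := filter_subset _ _

lemma disjoint_outHeavy_inHeavy : Disjoint (outHeavy O I Q) (inHeavy O I Q) :=
  disjoint_filter.2 fun _ _ => not_lt.2

lemma sum_outHeavy_abs :
    ∑ x ∈ outHeavy O I Q, |O x - I x| = ∑ x ∈ outHeavy O I Q, (O x - I x) :=
  sum_congr rfl fun _ hx => abs_of_nonneg (sub_nonneg.2 (mem_filter.1 hx).2)

lemma sum_abs_of_subset_inHeavy (hT : T ⊆ inHeavy O I Q) :
    ∑ x ∈ T, |O x - I x| = ∑ x ∈ T, (I x - O x) :=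
  sum_congr rfl fun x hx => by
    rw [abs_sub_comm, abs_of_pos (sub_pos.2 (mem_filter.1 (hT hx)).2)]

namespace IsProfile

lemma abs_sub_le (hp : IsProfile O I X b n) (x : V) : |O x - I x| ≤ O x + I x :=
  abs_sub_le_iff.2 ⟨by linarith [(hp.in_mem x).1], by linarith [(hp.out_mem x).1]⟩

lemma four_mul_le_profileWeight (hp : IsProfile O I X b n) : 4 * n ≤ profileWeight O I X b := by
  have hO : 0 ≤ ∑ x ∈ X, O x := sum_nonneg fun x _ => (hp.out_mem x).1
  rw [profileWeight, sum_add_distrib]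
  linarith [hp.four_mul_le]

lemma abs_sub_lt (hp : IsProfile O I X b n) (hθ : profileWeight O I X b < 7 * θ) (x : V) :
    |O x - I x| < 7 / 4 * θ := by
  have hn := hp.four_mul_le_profileWeight
  refine abs_sub_lt_iff.2 ⟨?_, ?_⟩
  · linarith [(hp.out_mem x).2, (hp.in_mem x).1]
  · linarith [(hp.in_mem x).2, (hp.out_mem x).1]

lemma profileWeight_nonneg (hp : IsProfile O I X b n) : 0 ≤ profileWeight O I X b :=
  add_nonneg (sum_nonneg fun x _ => (abs_nonneg _).trans (hp.abs_sub_le x)) hp.nonneg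

lemma card_lt_seven (hp : IsProfile O I X b n) (hθ : profileWeight O I X b < 7 * θ) (hH : H ⊆ X)
    (hle : ∀ x ∈ H, θ ≤ |O x - I x|) : H.card < 7 := by
  have hsum : H.card * θ ≤ profileWeight O I X b := by
    calc H.card * θ = ∑ _x ∈ H, θ := by rw [sum_const, nsmul_eq_mul]
      _ ≤ ∑ x ∈ H, (O x + I x) := sum_le_sum fun x hx => (hle x hx).trans (hp.abs_sub_le x)
      _ ≤ ∑ x ∈ X, (O x + I x) := sum_le_sum_of_subset_of_nonneg hH fun x _ _ =>
        (abs_nonneg _).trans (hp.abs_sub_le x)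
      _ ≤ profileWeight O I X b := le_add_of_nonneg_right hp.nonneg
  have hlt : (H.card : ℝ) < 7 := by
    by_contra! h
    nlinarith [hp.profileWeight_nonneg]
  exact_mod_cast hlt

end IsProfile

variable [DecidableEq V]

/-- The expected weight of the arcs between `X` and its complement which cross in one direction,
when `T` is on the second side, `X \ T` on the first side, and every vertex outside `X` is on the
first side with probability `p`. Here `O x` and `I x` are the weights of the arcs leaving `X` and
entering `X` at `x`. -/
def biasedCut (O I : V → ℝ) (X T : Finset V) (p : ℝ) : ℝ :=
  p * ∑ x ∈ T, I x + (1 - p) * ∑ x ∈ X \ T, O x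

/-- Some biased random placement has expectation at least `3/14` of the total weight, in both
directions. -/
def HasBiasedCut (O I : V → ℝ) (X : Finset V) (b : ℝ) : Prop :=
  ∃ T ⊆ X, ∃ p ∈ Set.Icc (0 : ℝ) 1,
    3 / 14 * profileWeight O I X b ≤ biasedCut O I X T p + p * (1 - p) * b ∧
    3 / 14 * profileWeight O I X b ≤ biasedCut I O X T p + p * (1 - p) * b

/-- A set `H` of few vertices, unbalanced by at least `θ`, which together with the balanced vertices
of `X` defeats every choice of signs. -/
structure IsObstruction (O I : V → ℝ) (X H : Finset V) (θ : ℝ) : Prop where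
  subset : H ⊆ X
  odd : Odd H.card
  card_lt : H.card < 7
  le_abs : ∀ x ∈ H, θ ≤ |O x - I x|
  gap : MajorityGap H (fun x => |O x - I x|) (θ + ∑ x ∈ X \ H, |O x - I x|)

lemma outHeavy_union_inHeavy : outHeavy O I Q ∪ inHeavy O I Q = Q := by
  simp only [outHeavy, inHeavy, ← not_le, filter_union_filter_not_eq]

omit [DecidableEq V] in
lemma card_outHeavy_add_card_inHeavy :
    (outHeavy O I Q).card + (inHeavy O I Q).card = Q.card := by
  classical
  rw [← card_union_of_disjoint disjoint_outHeavy_inHeavy, outHeavy_union_inHeavy]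

omit [DecidableEq V] in
lemma sum_outHeavy_add_sum_inHeavy (F : V → ℝ) :
    ∑ x ∈ outHeavy O I Q, F x + ∑ x ∈ inHeavy O I Q, F x = ∑ x ∈ Q, F x := by
  classical
  rw [← sum_union disjoint_outHeavy_inHeavy, outHeavy_union_inHeavy]

lemma sum_eq_sum_parts (hH : H ⊆ X) (hT : T ⊆ inHeavy O I H) (F : V → ℝ) :
    ∑ x ∈ X, F x = ∑ x ∈ T, F x + ∑ x ∈ inHeavy O I H \ T, F x + ∑ x ∈ outHeavy O I H, F x +
      ∑ x ∈ outHeavy O I (X \ H), F x + ∑ x ∈ inHeavy O I (X \ H), F x := by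
  rw [add_assoc _ _ (∑ x ∈ inHeavy O I (X \ H), F x), sum_outHeavy_add_sum_inHeavy,
    ← sum_sdiff hH, ← sum_outHeavy_add_sum_inHeavy (O := O) (I := I) (Q := H), ← sum_sdiff hT]
  ring

lemma IsProfile.exists_isObstruction (hp : IsProfile O I X b n) (hθ : profileWeight O I X b < 7 * θ)
    (hmin : ∀ S, θ ≤ |signSum X (fun x => O x - I x) S|) : ∃ H, IsObstruction O I X H θ := by
  have hθ0 : 0 < θ := by linarith [hp.profileWeight_nonneg]
  set H := X.filter fun x => θ ≤ |O x - I x| with hH_def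
  have hH : H ⊆ X := filter_subset _ _
  have hlarge : ∀ x ∈ H, |O x - I x| ∈ Set.Ico θ (7 / 4 * θ) := fun x hx =>
    ⟨(mem_filter.1 hx).2, hp.abs_sub_lt hθ x⟩
  have hsmall : ∀ x ∈ X \ H, |O x - I x| ∈ Set.Ico 0 θ := fun x hx => by
    rw [mem_sdiff, hH_def, mem_filter, not_and, not_le] at hx
    exact ⟨abs_nonneg _, hx.2 hx.1⟩
  have hsign : ∀ S, θ + ∑ x ∈ X \ H, |O x - I x| ≤ |signSum H (fun x => |O x - I x|) S| := by
    refine add_sum_le_abs_signSum disjoint_sdiff hsmall fun S => ?_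
    obtain ⟨S', hS'⟩ := exists_signSum_abs X (fun x => O x - I x) S
    rw [union_sdiff_of_subset hH, hS']
    exact hmin S'
  have hrest : 0 ≤ ∑ x ∈ X \ H, |O x - I x| := sum_nonneg fun x _ => abs_nonneg _
  have hcard := hp.card_lt_seven hθ hH fun x hx => (hlarge x hx).1
  refine ⟨H, hH, ?_, hcard, fun x hx => (hlarge x hx).1,
    majorityGap_of_le_abs_signSum hθ0 (by linarith) hcard hlarge hsign⟩
  rw [← Nat.not_even_iff_odd]
  intro heven
  have hclose : ∀ x ∈ H, ∀ y ∈ H, |(|O x - I x| - |O y - I y|)| < θ := fun x hx y hy =>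
    abs_sub_lt_iff.2 ⟨by linarith [(hlarge x hx).2, (hlarge y hy).1],
      by linarith [(hlarge x hx).1, (hlarge y hy).2]⟩
  obtain ⟨S, hS⟩ := exists_abs_signSum_lt_of_even hθ0 heven hclose
  linarith [hsign S]

namespace IsObstruction

lemma seven_mul_le (ho : IsObstruction O I X H θ) :
    7 * θ ≤ 7 / H.card * ∑ x ∈ outHeavy O I H, (O x - I x) +
      7 / H.card * ∑ x ∈ inHeavy O I H, (I x - O x) + ∑ x ∈ X \ H, (O x - I x) := by
  have hcard : (0 : ℝ) < H.card := by exact_mod_cast ho.odd.pos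
  have hle : 7 * (θ + ∑ x ∈ X \ H, |O x - I x|) ≤ 7 / H.card * ∑ x ∈ H, |O x - I x| := by
    rw [div_mul_eq_mul_div, le_div_iff₀ hcard]
    linarith [ho.gap.card_mul_le_sum ho.odd]
  have hrest : -∑ x ∈ X \ H, |O x - I x| ≤ ∑ x ∈ X \ H, (O x - I x) := by
    rw [← sum_neg_distrib]
    exact sum_le_sum fun x _ => neg_abs_le _
  have hnonneg : 0 ≤ ∑ x ∈ X \ H, |O x - I x| := sum_nonneg fun x _ => abs_nonneg _
  rw [← mul_add, ← sum_outHeavy_abs, ← sum_abs_of_subset_inHeavy subset_rfl,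
    sum_outHeavy_add_sum_inHeavy]
  linarith

end IsObstruction

end BiasedPlacement

section Configurations

variable {V : Type*} {O I : V → ℝ} {X H T Q : Finset V} {b n θ : ℝ}

lemma sum_in_le_sum_out_of_outHeavy :
    ∑ x ∈ outHeavy O I Q, I x ≤ ∑ x ∈ outHeavy O I Q, O x :=
  sum_le_sum fun _ hx => (mem_filter.1 hx).2

lemma sum_out_le_sum_in_of_inHeavy :
    ∑ x ∈ inHeavy O I Q, O x ≤ ∑ x ∈ inHeavy O I Q, I x :=
  sum_le_sum fun _ hx => (mem_filter.1 hx).2.le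

lemma outHeavy_eq_empty_iff : outHeavy O I Q = ∅ ↔ inHeavy O I Q = Q := by
  rw [outHeavy, inHeavy, filter_eq_empty_iff, filter_eq_self]
  simp only [not_le]

namespace IsProfile

lemma sum_out_nonneg (hp : IsProfile O I X b n) (Q : Finset V) : 0 ≤ ∑ x ∈ Q, O x :=
  sum_nonneg fun x _ => (hp.out_mem x).1

lemma sum_in_nonneg (hp : IsProfile O I X b n) (Q : Finset V) : 0 ≤ ∑ x ∈ Q, I x :=
  sum_nonneg fun x _ => (hp.in_mem x).1

lemma sum_out_le (hp : IsProfile O I X b n) (Q : Finset V) : ∑ x ∈ Q, O x ≤ Q.card * n := by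
  rw [← nsmul_eq_mul]
  exact sum_le_card_nsmul Q O n fun x _ => (hp.out_mem x).2

lemma sum_in_le (hp : IsProfile O I X b n) (Q : Finset V) : ∑ x ∈ Q, I x ≤ Q.card * n := by
  rw [← nsmul_eq_mul]
  exact sum_le_card_nsmul Q I n fun x _ => (hp.in_mem x).2

end IsProfile

variable [DecidableEq V]

lemma biasedCut_eq_sub (hT : T ⊆ X) (p : ℝ) :
    biasedCut O I X T p = p * ∑ x ∈ T, I x + (1 - p) * (∑ x ∈ X, O x - ∑ x ∈ T, O x) := by
  rw [biasedCut, sum_sdiff_eq_sub hT]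

omit [DecidableEq V] in
lemma sum_abs_eq_sum_parts :
    ∑ x ∈ Q, |O x - I x| = ∑ x ∈ outHeavy O I Q, O x - ∑ x ∈ outHeavy O I Q, I x +
      (∑ x ∈ inHeavy O I Q, I x - ∑ x ∈ inHeavy O I Q, O x) := by
  rw [← sum_outHeavy_add_sum_inHeavy (O := O) (I := I), sum_outHeavy_abs,
    sum_abs_of_subset_inHeavy subset_rfl, sum_sub_distrib, sum_sub_distrib]

namespace IsObstruction

lemma card_mul_le (ho : IsObstruction O I X H θ) (hT : T ⊆ inHeavy O I H) :
    T.card * θ ≤ ∑ x ∈ T, I x - ∑ x ∈ T, O x := by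
  rw [← sum_sub_distrib, ← sum_abs_of_subset_inHeavy hT, ← nsmul_eq_mul]
  exact card_nsmul_le_sum _ _ _ fun x hx => ho.le_abs x (inHeavy_subset (hT hx))

lemma gap_le (ho : IsObstruction O I X H θ) (hT : T ⊆ inHeavy O I H)
    (hc : H.card = 2 * T.card + 1) :
    θ + ∑ x ∈ X \ H, |O x - I x| ≤ ∑ x ∈ outHeavy O I H, O x - ∑ x ∈ outHeavy O I H, I x +
      (∑ x ∈ inHeavy O I H \ T, I x - ∑ x ∈ inHeavy O I H \ T, O x) -
      (∑ x ∈ T, I x - ∑ x ∈ T, O x) := by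
  have hgap := ho.gap T (hT.trans inHeavy_subset) hc
  simp only [sum_abs_eq_sum_parts (Q := H), sum_abs_of_subset_inHeavy hT, sum_sub_distrib,
    ← sum_sdiff hT] at hgap
  linarith

lemma card_add_one_mul_le (ho : IsObstruction O I X H θ) (hM : inHeavy O I H = H) (hT : T ⊆ H)
    (hc : H.card = 2 * T.card + 1) :
    (T.card + 1) * (θ + ∑ x ∈ X \ H, |O x - I x|) ≤
      (T.card + 1) * (∑ x ∈ T, I x - ∑ x ∈ T, O x) -
        (T.card - 1) * (∑ x ∈ H \ T, I x - ∑ x ∈ H \ T, O x) := by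
  have h := ho.gap.card_add_one_mul_le hT hc
  have hTM : T ⊆ inHeavy O I H := hM.symm ▸ hT
  have hUM : H \ T ⊆ inHeavy O I H := hM.symm ▸ sdiff_subset
  rwa [sum_abs_of_subset_inHeavy hTM, sum_abs_of_subset_inHeavy hUM, sum_sub_distrib,
    sum_sub_distrib] at h

end IsObstruction

lemma biasedCut_union_lt_of_not_hasBiasedCut (h : ¬ HasBiasedCut O I X b)
    (hT : T ⊆ H) (hH : H ⊆ X) {W : Finset V} (hW : W ⊆ X \ H) {p : ℝ} (hp : p ∈ Set.Icc 0 1) :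
    p * (∑ x ∈ T, I x + ∑ x ∈ W, I x) +
        (1 - p) * (∑ x ∈ X, O x - (∑ x ∈ T, O x + ∑ x ∈ W, O x)) + p * (1 - p) * b <
      3 / 14 * profileWeight O I X b ∨
    p * (∑ x ∈ T, O x + ∑ x ∈ W, O x) +
        (1 - p) * (∑ x ∈ X, I x - (∑ x ∈ T, I x + ∑ x ∈ W, I x)) + p * (1 - p) * b <
      3 / 14 * profileWeight O I X b := by
  have hdisj : Disjoint T W := disjoint_sdiff.mono hT hW
  have hTW : T ∪ W ⊆ X := union_subset (hT.trans hH) (hW.trans sdiff_subset)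
  by_contra! hcon
  refine h ⟨T ∪ W, hTW, p, hp, ?_⟩
  simpa only [biasedCut_eq_sub hTW, sum_union hdisj] using hcon

lemma hasBiasedCut_of_card_eq_three (hp : IsProfile O I X b n) (ho : IsObstruction O I X H θ)
    (hθ : profileWeight O I X b < 7 * θ) (hM : inHeavy O I H = H) (hH : H.card = 3) :
    HasBiasedCut O I X b := by
  have hP : outHeavy O I H = ∅ := outHeavy_eq_empty_iff.2 hM
  obtain ⟨v, hv, hmax⟩ := exists_max_image H (fun x => 5 * I x - 3 * O x) (card_pos.1 (by omega))
  have hvH : {v} ⊆ H := singleton_subset_iff.2 hv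
  have hvM : {v} ⊆ inHeavy O I H := hM.symm ▸ hvH
  have hUc : (H \ {v}).card = 2 := by
    rw [card_sdiff_of_subset hvH, hH, card_singleton]
  have hgap := ho.gap_le hvM (by rw [hH, card_singleton])
  have havg := ho.card_add_one_mul_le hM hvH (by rw [hH, card_singleton])
  have hUmax := sum_le_card_nsmul (H \ {v}) (fun x => 5 * I x - 3 * O x) _
    fun x hx => hmax x (sdiff_subset hx)
  have hU := hp.sum_in_le (H \ {v})
  have hn := hp.four_mul_le
  have hparts := sum_eq_sum_parts ho.subset hvM
  by_contra hcon
  have hprob : (5 / 8 : ℝ) ∈ Set.Icc 0 1 := by norm_num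
  -- If all of `X \ H` on the side of `v` fails, then only its in-heavy part on that side works.
  have hall := biasedCut_union_lt_of_not_hasBiasedCut hcon hvH ho.subset subset_rfl hprob
  have hin := biasedCut_union_lt_of_not_hasBiasedCut hcon hvH ho.subset
    (inHeavy_subset (O := O) (I := I)) hprob
  rw [profileWeight, sum_add_distrib] at hθ hall hin
  simp only [← sum_outHeavy_add_sum_inHeavy (O := O) (I := I) (Q := X \ H)] at hall
  rw [sum_sub_distrib, ← mul_sum, ← mul_sum, nsmul_eq_mul, hUc] at hUmax
  simp only [hM, hP, sum_empty, hparts, hUc, sum_abs_eq_sum_parts, card_singleton, sum_singleton,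
    Nat.cast_one, Nat.cast_ofNat] at hgap havg hU hθ hUmax hn hall hin
  rcases hall with hall | hall <;> rcases hin with hin | hin <;>
  linarith [hp.nonneg, (hp.out_mem v).1, (hp.in_mem v).2, hp.sum_out_nonneg (H \ {v}),
    hp.sum_in_nonneg (outHeavy O I (X \ H)), hp.sum_out_nonneg (inHeavy O I (X \ H)),
    sum_in_le_sum_out_of_outHeavy (O := O) (I := I) (Q := X \ H),
    sum_out_le_sum_in_of_inHeavy (O := O) (I := I) (Q := X \ H)]

lemma hasBiasedCut_of_card_eq_five (hp : IsProfile O I X b n) (ho : IsObstruction O I X H θ)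
    (hθ : profileWeight O I X b < 7 * θ) (hM : inHeavy O I H = H) (hH : H.card = 5) :
    HasBiasedCut O I X b := by
  have hP : outHeavy O I H = ∅ := outHeavy_eq_empty_iff.2 hM
  obtain ⟨T, hT, hTc⟩ := exists_subset_card_eq (show 2 ≤ H.card by omega)
  have hTM : T ⊆ inHeavy O I H := hM.symm ▸ hT
  have hTX := hT.trans ho.subset
  have hUc : (H \ T).card = 3 := by rw [card_sdiff_of_subset hT, hH, hTc]
  have hgap := ho.gap_le hTM (by omega)
  have havg := ho.card_add_one_mul_le hM hT (by omega)
  have hU := ho.card_mul_le (hM.symm ▸ sdiff_subset : H \ T ⊆ inHeavy O I H)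
  have hparts := sum_eq_sum_parts ho.subset hTM
  rw [profileWeight, sum_add_distrib] at hθ
  simp only [hM, hP, sum_empty, hparts, hTc, hUc, sum_abs_eq_sum_parts, Nat.cast_ofNat]
    at hgap havg hU hθ
  refine ⟨T, hTX, 3 / 5, by norm_num, ?_⟩
  rw [biasedCut_eq_sub hTX, biasedCut_eq_sub hTX, profileWeight, sum_add_distrib, hparts, hparts,
    hM, hP, sum_empty, sum_empty]
  constructor <;>
  linarith [hp.nonneg, hp.sum_out_nonneg T, hp.sum_out_nonneg (H \ T),
    hp.sum_in_nonneg (outHeavy O I (X \ H)), hp.sum_out_nonneg (inHeavy O I (X \ H)),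
    sum_in_le_sum_out_of_outHeavy (O := O) (I := I) (Q := X \ H),
    sum_out_le_sum_in_of_inHeavy (O := O) (I := I) (Q := X \ H)]

lemma hasBiasedCut_of_card_inHeavy_eq_four (hp : IsProfile O I X b n) (ho : IsObstruction O I X H θ)
    (hθ : profileWeight O I X b < 7 * θ) (hP : (outHeavy O I H).card = 1)
    (hM : (inHeavy O I H).card = 4) : HasBiasedCut O I X b := by
  have hH : H.card = 5 := by rw [← card_outHeavy_add_card_inHeavy (O := O) (I := I), hP, hM]
  obtain ⟨T, hT, hTc⟩ := exists_subset_card_eq (show 2 ≤ (inHeavy O I H).card by omega)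
  obtain ⟨U, hU_def⟩ : ∃ U, U = inHeavy O I H \ T := ⟨_, rfl⟩
  have hU : U ⊆ inHeavy O I H := hU_def ▸ sdiff_subset
  have hUc : U.card = 2 := by rw [hU_def, card_sdiff_of_subset hT, hM, hTc]
  have hTX := hT.trans (inHeavy_subset.trans ho.subset)
  have hTgap := ho.gap_le hT (by omega)
  have hUgap := ho.gap_le hU (by omega)
  have hTlarge := ho.card_mul_le hT
  have hUlarge := ho.card_mul_le hU
  have hTn := hp.sum_in_le T
  have hUn := hp.sum_in_le U
  have hPn := hp.sum_out_le (outHeavy O I H)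
  have hn := hp.four_mul_le
  have hparts := sum_eq_sum_parts ho.subset hT
  rw [profileWeight, sum_add_distrib] at hθ
  rw [hU_def, Finset.sdiff_sdiff_eq_self hT] at hUgap
  simp only [← hU_def, hP, hparts, hTc, hUc, sum_abs_eq_sum_parts, Nat.cast_ofNat, Nat.cast_one]
    at hTgap hUgap hTlarge hUlarge hTn hUn hPn hθ hn
  refine ⟨T, hTX, 1 / 3, by norm_num, ?_⟩
  rw [biasedCut_eq_sub hTX, biasedCut_eq_sub hTX, profileWeight, sum_add_distrib, hparts, hparts,
    ← hU_def]
  constructor <;>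
  linarith [hp.nonneg, hp.sum_out_nonneg T, hp.sum_out_nonneg U,
    hp.sum_in_nonneg (outHeavy O I H), hp.sum_out_nonneg (outHeavy O I (X \ H)),
    hp.sum_in_nonneg (outHeavy O I (X \ H)), hp.sum_out_nonneg (inHeavy O I (X \ H)),
    sum_in_le_sum_out_of_outHeavy (O := O) (I := I) (Q := X \ H),
    sum_out_le_sum_in_of_inHeavy (O := O) (I := I) (Q := X \ H)]

end Configurations

section Dichotomy

variable {V : Type*} [Fintype V] [DecidableEq V] {a : V → V → ℝ}

/-- The total weight of the arcs which are not inside `X`. -/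
abbrev externalWeight (a : V → V → ℝ) (X : Finset V) : ℝ :=
  profileWeight (outTo a Xᶜ) (inFrom a Xᶜ) X (∑ v ∈ Xᶜ, outTo a Xᶜ v)

lemma isProfile_outTo_inFrom (ha : ∀ u v, a u v ∈ Set.Icc 0 1) (hout : ∀ v, 4 ≤ ∑ x, a v x)
    (X : Finset V) :
    IsProfile (outTo a Xᶜ) (inFrom a Xᶜ) X (∑ v ∈ Xᶜ, outTo a Xᶜ v) Xᶜ.card where
  out_mem x := ⟨sum_nonneg fun v _ => (ha x v).1, by
    simpa only [outTo, nsmul_one] using sum_le_card_nsmul Xᶜ (a x) 1 fun v _ => (ha x v).2⟩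
  in_mem x := ⟨sum_nonneg fun v _ => (ha v x).1, by
    simpa only [inFrom, nsmul_one] using sum_le_card_nsmul Xᶜ (a · x) 1 fun v _ => (ha v x).2⟩
  nonneg := sum_nonneg fun u _ => sum_nonneg fun v _ => (ha u v).1
  four_mul_le :=
    calc 4 * (Xᶜ.card : ℝ) = Xᶜ.card • 4 := by rw [nsmul_eq_mul, mul_comm]
      _ ≤ ∑ v ∈ Xᶜ, (∑ x ∈ X, a v x + outTo a Xᶜ v) :=
          card_nsmul_le_sum _ _ _ fun v _ => by
            simpa only [outTo, sum_add_sum_compl] using hout v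
      _ = ∑ x ∈ X, inFrom a Xᶜ x + ∑ v ∈ Xᶜ, outTo a Xᶜ v := by
          rw [sum_add_distrib, sum_comm]
          rfl

lemma IsObstruction.card_outHeavy_add_one_lt {X H : Finset V} {θ : ℝ}
    (ho : IsObstruction (outTo a Xᶜ) (inFrom a Xᶜ) X H θ)
    (ha : ∀ u v, a u v ∈ Set.Icc 0 1) (hout : ∀ v, 4 ≤ ∑ x, a v x)
    (hθ : externalWeight a X + ∑ v ∈ Xᶜ, min (outTo a Xᶜ v) 3 < 7 * θ) :
    (outHeavy (outTo a Xᶜ) (inFrom a Xᶜ) H).card + 1 <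
      (inHeavy (outTo a Xᶜ) (inFrom a Xᶜ) H).card := by
  by_contra! hcard
  have hH : (0 : ℝ) < H.card := by exact_mod_cast ho.odd.pos
  have hH7 : (H.card : ℝ) ≤ 7 := by exact_mod_cast ho.card_lt.le
  have hbalance := balance_le ha (X := X) (r := 7 / H.card) disjoint_outHeavy_inHeavy
    (outHeavy_union_inHeavy.trans_subset ho.subset) ((one_le_div hH).2 hH7)
    (by rw [← Nat.cast_add, card_outHeavy_add_card_inHeavy, div_mul_cancel₀ _ hH.ne']) hcard hout
  rw [outHeavy_union_inHeavy] at hbalance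
  rw [externalWeight, profileWeight] at hθ
  linarith [ho.seven_mul_le]

theorem exists_signSum_le_or_hasBiasedCut (ha : ∀ u v, a u v ∈ Set.Icc 0 1)
    (hout : ∀ v, 4 ≤ ∑ x, a v x) (X : Finset V) :
    (∃ S, 7 * |signSum X (fun x => outTo a Xᶜ x - inFrom a Xᶜ x) S| ≤
      externalWeight a X + ∑ v ∈ Xᶜ, min (outTo a Xᶜ v) 3) ∨
    HasBiasedCut (outTo a Xᶜ) (inFrom a Xᶜ) X (∑ v ∈ Xᶜ, outTo a Xᶜ v) := by
  have hp := isProfile_outTo_inFrom ha hout X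
  obtain ⟨S, -, hmin⟩ := exists_min_image univ
    (fun S => |signSum X (fun x => outTo a Xᶜ x - inFrom a Xᶜ x) S|) univ_nonempty
  refine or_iff_not_imp_left.2 fun hS => ?_
  have hgain := not_le.1 fun h => hS ⟨S, h⟩
  have hθ := (le_add_of_nonneg_right <| sum_nonneg fun v (_ : v ∈ Xᶜ) =>
    le_min (hp.out_mem v).1 zero_le_three).trans_lt hgain
  obtain ⟨H, ho⟩ := hp.exists_isObstruction hθ fun S' => hmin S' (mem_univ S')
  have hlt := ho.card_outHeavy_add_one_lt ha hout hgain
  have hcard := card_outHeavy_add_card_inHeavy (O := outTo a Xᶜ) (I := inFrom a Xᶜ) (Q := H)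
  obtain ⟨k, hk⟩ := ho.odd
  have hH7 := ho.card_lt
  have hcases : (outHeavy (outTo a Xᶜ) (inFrom a Xᶜ) H).card = 0 ∧ (H.card = 3 ∨ H.card = 5) ∨
      (outHeavy (outTo a Xᶜ) (inFrom a Xᶜ) H).card = 1 ∧
        (inHeavy (outTo a Xᶜ) (inFrom a Xᶜ) H).card = 4 := by
    omega
  rcases hcases with ⟨hP, hH | hH⟩ | ⟨hP, hM⟩
  · exact hasBiasedCut_of_card_eq_three hp ho hθ (outHeavy_eq_empty_iff.1 (card_eq_zero.1 hP)) hH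
  · exact hasBiasedCut_of_card_eq_five hp ho hθ (outHeavy_eq_empty_iff.1 (card_eq_zero.1 hP)) hH
  · exact hasBiasedCut_of_card_inHeavy_eq_four hp ho hθ hP hM

end Dichotomy

section Stars

variable {V : Type*} [Fintype V] {a : V → V → ℝ} {X : Finset V} {c : V → V} {K t : ℝ}

/-- The total weight of the arcs at `u`. -/
def totalDeg (a : V → V → ℝ) (u : V) : ℝ := ∑ v, (a u v + a v u)

/-- The vertices of total degree larger than `t`. -/
noncomputable def heavySet (a : V → V → ℝ) (t : ℝ) : Finset V :=
  univ.filter fun v => t < totalDeg a v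

/-- The map `c` sends every vertex to the centre of its star, for a partition into stars of
positive weight outside `X` and single vertices. There are no arcs between the leaves of a star, and
the leaves have total degree at most `K`. -/
structure IsStarPartition (a : V → V → ℝ) (X : Finset V) (K : ℝ) (c : V → V) : Prop where
  idem : ∀ v, c (c v) = c v
  notMem : ∀ v, c v ≠ v → v ∉ X ∧ c v ∉ X
  one_le : ∀ v, c v ≠ v → 1 ≤ a v (c v) + a (c v) v
  eq_zero : ∀ u v, c u ≠ u → c v ≠ v → c u = c v → a u v = 0
  totalDeg_le : ∀ v, c v ≠ v → totalDeg a v ≤ K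

lemma totalDeg_nonneg (ha : ∀ u v, 0 ≤ a u v) (u : V) : 0 ≤ totalDeg a u :=
  sum_nonneg fun v _ => add_nonneg (ha u v) (ha v u)

lemma totalDeg_swap (a : V → V → ℝ) : totalDeg (fun u v => a v u) = totalDeg a :=
  funext fun _ => sum_congr rfl fun _ _ => add_comm _ _

lemma sum_totalDeg (a : V → V → ℝ) : ∑ u, totalDeg a u = 2 * ∑ u, ∑ v, a u v := by
  simp only [totalDeg, sum_add_distrib]
  rw [sum_comm (f := fun u v => a v u), two_mul]

lemma card_heavySet_mul_le (ha : ∀ u v, 0 ≤ a u v) (t : ℝ) :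
    (heavySet a t).card * t ≤ 2 * ∑ u, ∑ v, a u v := by
  rw [← nsmul_eq_mul, ← sum_totalDeg]
  exact (card_nsmul_le_sum _ _ _ fun v hv => (mem_filter.1 hv).2.le).trans
    (sum_le_sum_of_subset_of_nonneg (subset_univ _) fun v _ _ => totalDeg_nonneg ha v)

lemma sum_heavySet_le (ha : ∀ u v, a u v ∈ Set.Icc 0 1) (ht : 0 < t) :
    ∑ u ∈ heavySet a t, ∑ v ∈ heavySet a t, a u v ≤ (2 * (∑ u, ∑ v, a u v) / t) ^ 2 :=
  calc ∑ u ∈ heavySet a t, ∑ v ∈ heavySet a t, a u v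
      ≤ ∑ _u ∈ heavySet a t, ∑ _v ∈ heavySet a t, (1 : ℝ) :=
        sum_le_sum fun u _ => sum_le_sum fun v _ => (ha u v).2
    _ = ((heavySet a t).card : ℝ) ^ 2 := by simp only [sum_const, nsmul_eq_mul, mul_one, sq]
    _ ≤ _ := by
        gcongr
        exact (le_div_iff₀ ht).2 (card_heavySet_mul_le (fun u v => (ha u v).1) t)

lemma blockWeight_eq_sum_totalDeg [DecidableEq V] (a : V → V → ℝ) (c : V → V) (i : V) :
    blockWeight a c i = ∑ u, if c u = i then totalDeg a u else 0 := by
  simp only [blockWeight, mul_add, sum_add_distrib]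
  rw [sum_comm (f := fun u v => a u v * if c v = i then 1 else 0), ← sum_add_distrib]
  refine sum_congr rfl fun u _ => ?_
  rw [← sum_mul, ← sum_mul, ← add_mul, ← sum_add_distrib, mul_ite, mul_one, mul_zero]
  rfl

lemma isStarPartition_id (a : V → V → ℝ) (X : Finset V) (K : ℝ) : IsStarPartition a X K id where
  idem _ := rfl
  notMem _ h := absurd rfl h
  one_le _ h := absurd rfl h
  eq_zero _ _ h := absurd rfl h
  totalDeg_le _ h := absurd rfl h

namespace IsStarPartition

lemma swap (hc : IsStarPartition a X K c) : IsStarPartition (fun u v => a v u) X K c where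
  idem := hc.idem
  notMem := hc.notMem
  one_le v hv := (hc.one_le v hv).trans_eq (add_comm _ _)
  eq_zero u v hu hv huv := hc.eq_zero v u hv hu huv.symm
  totalDeg_le := by simpa only [totalDeg_swap] using hc.totalDeg_le

lemma eq_of_mem (hc : IsStarPartition a X K c) {v : V} (hv : v ∈ X) : c v = v := by
  by_contra h
  exact (hc.notMem v h).1 hv

variable [DecidableEq V]

lemma apply_mem_compl (hc : IsStarPartition a X K c) {v : V} (hv : v ∈ Xᶜ) : c v ∈ Xᶜ := by
  rcases eq_or_ne (c v) v with h | h
  · rwa [h]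
  · exact mem_compl.2 (hc.notMem v h).2

lemma blockWeight_le (hc : IsStarPartition a X K c) (ha : ∀ u v, 0 ≤ a u v) (hK : 0 ≤ K) (i : V) :
    blockWeight a c i ≤ (1 + K) * totalDeg a i := by
  have hvertex : ∀ u, (if c u = i then totalDeg a u else 0) ≤
      (if u = i then totalDeg a u else 0) + K * (a i u + a u i) := fun u => by
    have hdeg := totalDeg_nonneg ha u
    have hpair := mul_nonneg hK (add_nonneg (ha i u) (ha u i))
    rcases eq_or_ne (c u) i with rfl | hu
    · rcases eq_or_ne (c u) u with hcu | hcu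
      · rw [if_pos rfl, if_pos hcu.symm]
        exact le_add_of_nonneg_right hpair
      · rw [if_pos rfl, if_neg hcu.symm, zero_add, add_comm]
        exact (hc.totalDeg_le u hcu).trans (le_mul_of_one_le_right hK (hc.one_le u hcu))
    · rw [if_neg hu]
      split_ifs <;> linarith
  calc blockWeight a c i
      = ∑ u, if c u = i then totalDeg a u else 0 := blockWeight_eq_sum_totalDeg a c i
    _ ≤ ∑ u, ((if u = i then totalDeg a u else 0) + K * (a i u + a u i)) :=
        sum_le_sum fun u _ => hvertex u
    _ = (1 + K) * totalDeg a i := by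
        rw [sum_add_distrib, sum_ite_eq', if_pos (mem_univ i), ← mul_sum, add_mul, one_mul]
        rfl

end IsStarPartition

end Stars

section Detach

variable {V : Type*} [DecidableEq V] {G : SimpleGraph V} {Q : Finset V} {c : V → V} {v : V}

/-- The map `c` modified so that the vertices of `Q` are no longer leaves of their stars. -/
def detach (Q : Finset V) (c : V → V) (v : V) : V := if v ∈ Q then v else c v

lemma detach_of_mem (hv : v ∈ Q) : detach Q c v = v := if_pos hv

lemma detach_of_notMem (hv : v ∉ Q) : detach Q c v = c v := if_neg hv

lemma notMem_of_detach_ne (h : detach Q c v ≠ v) : v ∉ Q := fun hv => h (detach_of_mem hv)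

lemma ne_of_detach_ne (h : detach Q c v ≠ v) : c v ≠ v := by
  rwa [detach_of_notMem (notMem_of_detach_ne h)] at h

lemma IsStarForest.detach (hc : IsStarForest G c) (Q : Finset V) :
    IsStarForest G (detach Q c) where
  idem v := by
    unfold BalancedCut.detach
    split_ifs <;> simp_all [hc.idem]
  adj v hv := by
    rw [detach_of_notMem (notMem_of_detach_ne hv)]
    exact hc.adj v (ne_of_detach_ne hv)
  not_adj u v hu hv huv := by
    rw [detach_of_notMem (notMem_of_detach_ne hu), detach_of_notMem (notMem_of_detach_ne hv)] at huv
    exact hc.not_adj u v (ne_of_detach_ne hu) (ne_of_detach_ne hv) huv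

end Detach

section StarsOutside

variable {V : Type*} {A : V → V → Prop} {X Q : Finset V} {c : V → V} {K : ℝ}

/-- The arcs of a digraph outside `X`. -/
abbrev arcsOutside (A : V → V → Prop) (X : Finset V) (u v : V) : Prop := A u v ∧ u ∉ X ∧ v ∉ X

lemma notMem_of_adj_arcsOutside {u v : V} (h : (fromRel (arcsOutside A X)).Adj u v) :
    u ∉ X ∧ v ∉ X := by
  rcases ((fromRel_adj _ _ _).1 h).2 with h | h
  · exact h.2
  · exact h.2.symm

variable [DecidableRel A]

/-- The arc weights of a digraph. -/
def arcWeight (A : V → V → Prop) [DecidableRel A] (u v : V) : ℝ := if A u v then 1 else 0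

lemma arcWeight_mem_Icc (A : V → V → Prop) [DecidableRel A] (u v : V) :
    arcWeight A u v ∈ Set.Icc 0 1 := by
  unfold arcWeight
  split_ifs <;> simp

lemma cast_arcCount (A : V → V → Prop) [DecidableRel A] (u v : V) :
    (arcCount A u v : ℝ) = arcWeight A u v + arcWeight A v u := by
  simp only [arcCount, arcWeight, Nat.cast_add, Nat.cast_ite, Nat.cast_one, Nat.cast_zero]

variable [DecidableEq V]

lemma arcCount_arcsOutside_le (A : V → V → Prop) [DecidableRel A] (X : Finset V) (u v : V) :
    arcCount (arcsOutside A X) u v ≤ arcCount A u v := by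
  unfold arcCount
  gcongr <;> split_ifs <;> simp_all only [le_refl, zero_le, not_true]

variable [Fintype V]

lemma IsStarForest.isStarPartition (hA : ∀ v, ¬ A v v)
    (hc : IsStarForest (fromRel (arcsOutside A X)) c)
    (hK : ∀ v, c v ≠ v → totalDeg (arcWeight A) v ≤ K) : IsStarPartition (arcWeight A) X K c where
  idem := hc.idem
  notMem v hv := notMem_of_adj_arcsOutside (hc.adj v hv)
  one_le v hv := by
    rw [← cast_arcCount, Nat.one_le_cast]
    exact (one_le_arcCount (hc.adj v hv)).trans (arcCount_arcsOutside_le A X _ _)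
  eq_zero u v hu hv huv := if_neg fun h => hc.not_adj u v hu hv huv <|
    (fromRel_adj _ _ _).2 ⟨fun e => hA v (by rwa [e] at h), Or.inl ⟨h,
      (notMem_of_adj_arcsOutside (hc.adj u hu)).1, (notMem_of_adj_arcsOutside (hc.adj v hv)).1⟩⟩
  totalDeg_le := hK

lemma sum_min_outTo_le (A : V → V → Prop) [DecidableRel A] (X : Finset V) :
    ∑ v ∈ Xᶜ, min (outTo (arcWeight A) Xᶜ v) 3 ≤ ∑ v, (outTrunc (arcsOutside A X) v : ℝ) := by
  refine (sum_le_sum fun v hv => le_of_eq ?_).trans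
    (sum_le_sum_of_subset_of_nonneg (subset_univ Xᶜ) fun v _ _ => Nat.cast_nonneg _)
  simp only [outTrunc, Nat.cast_min, Nat.cast_ofNat, outTo, arcWeight, sum_boole]
  congr 3
  ext u
  simp [mem_compl.1 hv, and_comm]

lemma sum_arcCount_le (A : V → V → Prop) [DecidableRel A] (X Q : Finset V) (c : V → V) :
    ∑ v, (arcCount (arcsOutside A X) v (c v) : ℝ) ≤
      ∑ v ∈ Xᶜ, (arcWeight A v (detach Q c v) + arcWeight A (detach Q c v) v) + 2 * Q.card := by
  have hvertex : ∀ v ∈ Xᶜ, (arcCount (arcsOutside A X) v (c v) : ℝ) ≤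
      arcWeight A v (detach Q c v) + arcWeight A (detach Q c v) v + if v ∈ Q then 2 else 0 :=
    fun v _ => by
      have hcount : (arcCount (arcsOutside A X) v (c v) : ℝ) ≤ arcCount A v (c v) := by
        exact_mod_cast arcCount_arcsOutside_le A X v (c v)
      rw [cast_arcCount A] at hcount
      by_cases hv : v ∈ Q
      · rw [detach_of_mem hv, if_pos hv]
        linarith [(arcWeight_mem_Icc A v v).1, (arcWeight_mem_Icc A v (c v)).2,
          (arcWeight_mem_Icc A (c v) v).2]
      · rwa [detach_of_notMem hv, if_neg hv, add_zero]
  have hX : ∀ v ∈ univ, v ∉ Xᶜ → (arcCount (arcsOutside A X) v (c v) : ℝ) = 0 := fun v _ hv => by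
    simp [arcCount, arcsOutside, notMem_compl.1 hv]
  rw [← sum_subset (subset_univ Xᶜ) hX]
  refine (sum_le_sum hvertex).trans ?_
  rw [sum_add_distrib, sum_ite_mem, sum_const, nsmul_eq_mul, mul_comm]
  gcongr
  exact inter_subset_right

theorem exists_isStarPartition (hA : ∀ v, ¬ A v v) (X : Finset V) (hK : 0 < K) :
    ∃ c, IsStarPartition (arcWeight A) X K c ∧
      ∑ v ∈ Xᶜ, min (outTo (arcWeight A) Xᶜ v) 3 ≤
        7 * (∑ v ∈ Xᶜ, (arcWeight A v (c v) + arcWeight A (c v) v) +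
          4 / K * ∑ u, ∑ v, arcWeight A u v) := by
  obtain ⟨c, hc, hsum⟩ := exists_isStarForest (E := arcsOutside A X) fun v h => hA v h.1
  refine ⟨detach (heavySet (arcWeight A) K) c, (hc.detach _).isStarPartition hA fun v hv => ?_, ?_⟩
  · simpa [heavySet] using notMem_of_detach_ne hv
  have hsum' : ∑ v, (outTrunc (arcsOutside A X) v : ℝ) ≤
      7 * ∑ v, (arcCount (arcsOutside A X) v (c v) : ℝ) := by exact_mod_cast hsum
  have hcard := card_heavySet_mul_le (fun u v => (arcWeight_mem_Icc A u v).1) K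
  rw [← le_div_iff₀ hK, mul_div_right_comm] at hcard
  linear_combination sum_min_outTo_le A X + hsum' +
    7 * sum_arcCount_le A X (heavySet (arcWeight A) K) c + 14 * hcard

end StarsOutside

section Placement

variable {V : Type*} [DecidableEq V] {X T S : Finset V} {c : V → V} {p : ℝ}

/-- The probabilities of a random bipartition which puts `X \ T` into the first class and `X ∩ T`
into the second one, every centre of a star outside `X` being in the first class with probability
`p`. -/
def placement (X T : Finset V) (p : ℝ) (v : V) : ℝ :=
  if v ∈ X then (if v ∈ T then 0 else 1) else p

lemma placement_mem_Icc (X T : Finset V) (hp : p ∈ Set.Icc 0 1) (v : V) :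
    placement X T p v ∈ Set.Icc 0 1 := by
  unfold placement
  split_ifs
  · simp
  · simp
  · exact hp

lemma placement_eq_zero_or_one {v : V} (hv : v ∈ X) :
    placement X T p v = 0 ∨ placement X T p v = 1 := by
  rw [placement, if_pos hv, ite_eq_left_iff, ite_eq_right_iff]
  tauto

lemma crossProb_of_apply_ne (x : V → ℝ) {u v : V} (h : c u ≠ c v) :
    crossProb c x u v = sideProb c x u * (1 - sideProb c x v) := if_neg h

lemma sideProb_id (x : V → ℝ) (v : V) : sideProb id x v = x v := if_pos rfl

variable [Fintype V] {a : V → V → ℝ} {K : ℝ}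

lemma sum_sum_eq_sum_blocks (F : V → V → ℝ) (X : Finset V) :
    ∑ u, ∑ v, F u v = ∑ u ∈ X, ∑ v ∈ X, F u v + ∑ x ∈ X, ∑ v ∈ Xᶜ, (F x v + F v x) +
      ∑ u ∈ Xᶜ, ∑ v ∈ Xᶜ, F u v := by
  rw [← sum_add_sum_compl X]
  simp only [← sum_add_sum_compl X (fun v => F _ v), sum_add_distrib]
  rw [sum_comm (s := Xᶜ) (t := X)]
  ring

lemma sum_inFrom_compl (a : V → V → ℝ) (X : Finset V) :
    ∑ v ∈ Xᶜ, inFrom a Xᶜ v = ∑ v ∈ Xᶜ, outTo a Xᶜ v := sum_comm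

lemma sum_eq_add_externalWeight (a : V → V → ℝ) (X : Finset V) :
    ∑ u, ∑ v, a u v = ∑ u ∈ X, ∑ v ∈ X, a u v + externalWeight a X := by
  rw [sum_sum_eq_sum_blocks a X, add_assoc]
  simp only [externalWeight, profileWeight, outTo, inFrom, sum_add_distrib]

lemma IsStarPartition.apply_ne_apply (hc : IsStarPartition a X K c) {u v : V} (hu : u ∈ X)
    (hv : v ∈ Xᶜ) : c u ≠ c v := fun h =>
  mem_compl.1 (hc.apply_mem_compl hv) (by rwa [← h, hc.eq_of_mem hu])

lemma IsStarPartition.sideProb_of_mem (hc : IsStarPartition a X K c) {v : V} (hv : v ∈ X) :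
    sideProb c (placement X T p) v = if v ∈ T then 0 else 1 := by
  rw [sideProb, hc.eq_of_mem hv, if_pos rfl, placement, if_pos hv]

lemma sideProb_id_of_mem_compl {v : V} (hv : v ∈ Xᶜ) : sideProb id (placement X T p) v = p := by
  rw [sideProb_id, placement, if_neg (mem_compl.1 hv)]

lemma IsStarPartition.sideProb_half (hc : IsStarPartition a X K c) {v : V} (hv : v ∈ Xᶜ) :
    sideProb c (placement X T (1 / 2)) v = 1 / 2 := by
  rw [sideProb, placement, if_neg (mem_compl.1 (hc.apply_mem_compl hv)), sub_self_div_two, ite_self]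

lemma IsStarPartition.sum_sum_crossProb (hc : IsStarPartition a X K c)
    (hp : ∀ v ∈ Xᶜ, sideProb c (placement X T p) v = p) :
    ∑ u ∈ X, ∑ v ∈ Xᶜ, (a u v * crossProb c (placement X T p) u v +
        a v u * crossProb c (placement X T p) v u) =
      ∑ u ∈ X, if u ∈ T then p * inFrom a Xᶜ u else (1 - p) * outTo a Xᶜ u := by
  refine sum_congr rfl fun u hu => ?_
  rw [inFrom, outTo, mul_sum, mul_sum, ← sum_ite_irrel]
  refine sum_congr rfl fun v hv => ?_
  rw [crossProb_of_apply_ne _ (hc.apply_ne_apply hu hv),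
    crossProb_of_apply_ne _ (hc.apply_ne_apply hu hv).symm, hc.sideProb_of_mem hu, hp v hv]
  split_ifs <;> ring

lemma IsStarPartition.le_expCut (hc : IsStarPartition a X K c) (ha : ∀ u v, 0 ≤ a u v)
    (hp : p ∈ Set.Icc 0 1) (hpX : ∀ v ∈ Xᶜ, sideProb c (placement X T p) v = p) :
    (∑ u ∈ X, if u ∈ T then p * inFrom a Xᶜ u else (1 - p) * outTo a Xᶜ u) +
      ∑ u ∈ Xᶜ, ∑ v ∈ Xᶜ, a u v * crossProb c (placement X T p) u v ≤
      expCut a c (placement X T p) := by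
  rw [expCut, sum_sum_eq_sum_blocks _ X, hc.sum_sum_crossProb hpX, add_assoc]
  exact le_add_of_nonneg_left <| sum_nonneg fun u _ => sum_nonneg fun v _ =>
    mul_nonneg (ha u v) (crossProb_mem_Icc (placement_mem_Icc X T hp) u v).1

lemma biasedCut_add_le_expCut (ha : ∀ u v, 0 ≤ a u v) (ha0 : ∀ v, a v v = 0) (hT : T ⊆ X)
    (hp : p ∈ Set.Icc 0 1) :
    biasedCut (outTo a Xᶜ) (inFrom a Xᶜ) X T p + p * (1 - p) * ∑ v ∈ Xᶜ, outTo a Xᶜ v ≤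
      expCut a id (placement X T p) := by
  have hcompl : ∑ u ∈ Xᶜ, ∑ v ∈ Xᶜ, a u v * crossProb id (placement X T p) u v =
      p * (1 - p) * ∑ v ∈ Xᶜ, outTo a Xᶜ v := by
    simp only [outTo, mul_sum]
    refine sum_congr rfl fun u hu => sum_congr rfl fun v hv => ?_
    rcases eq_or_ne u v with rfl | huv
    · rw [ha0, zero_mul, mul_zero]
    · rw [crossProb_of_apply_ne _ huv, sideProb_id_of_mem_compl hu, sideProb_id_of_mem_compl hv,
        mul_comm]
  have hbiased : biasedCut (outTo a Xᶜ) (inFrom a Xᶜ) X T p =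
      ∑ u ∈ X, if u ∈ T then p * inFrom a Xᶜ u else (1 - p) * outTo a Xᶜ u := by
    rw [biasedCut, mul_sum, mul_sum, sum_ite, filter_mem_eq_inter, inter_eq_right.2 hT,
      filter_notMem_eq_sdiff]
  rw [hbiased, ← hcompl]
  exact (isStarPartition_id a X 0).le_expCut ha hp fun v hv => sideProb_id_of_mem_compl hv

lemma IsStarPartition.div_four_le_crossProb (hc : IsStarPartition a X K c)
    (ha : ∀ u v, 0 ≤ a u v) (ha0 : ∀ v, a v v = 0) {u v : V} (hu : u ∈ Xᶜ) (hv : v ∈ Xᶜ) :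
    (a u v + (if c u = v then a u v else 0) + (if c v = u then a u v else 0)) / 4 ≤
      a u v * crossProb c (placement X T (1 / 2)) u v := by
  have h0 := ha u v
  rcases eq_or_ne u v with rfl | huv
  · simp [ha0]
  have hprob : sideProb c (placement X T (1 / 2)) u = 1 / 2 := hc.sideProb_half hu
  rcases eq_or_ne (c u) (c v) with hcuv | hcuv
  · rw [crossProb, if_pos hcuv, hprob]
    rcases eq_or_ne (c u) u with hcu | hcu <;> rcases eq_or_ne (c v) v with hcv | hcv
    · exact absurd (hcu.symm.trans (hcuv.trans hcv)) huv
    · simp only [hcu, ← hcuv, huv, if_true, if_false, iff_false, not_true]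
      linarith
    · simp only [hcv, hcuv, huv.symm, if_true, if_false, iff_true]
      linarith
    · simp [hc.eq_zero u v hcu hcv hcuv]
  · have hu' : c u ≠ v := fun h => hcuv (by rw [← h, hc.idem])
    have hv' : c v ≠ u := fun h => hcuv (by rw [← h, hc.idem])
    rw [crossProb_of_apply_ne _ hcuv, hprob, hc.sideProb_half hv, if_neg hu', if_neg hv']
    linarith

lemma IsStarPartition.sum_star_le (hc : IsStarPartition a X K c)
    (ha : ∀ u v, 0 ≤ a u v) (ha0 : ∀ v, a v v = 0) :
    (∑ v ∈ Xᶜ, outTo a Xᶜ v + ∑ v ∈ Xᶜ, (a v (c v) + a (c v) v)) / 4 ≤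
      ∑ u ∈ Xᶜ, ∑ v ∈ Xᶜ, a u v * crossProb c (placement X T (1 / 2)) u v := by
  have hleaf : ∀ F : V → V → ℝ, ∑ u ∈ Xᶜ, ∑ v ∈ Xᶜ, (if c u = v then F u v else 0) =
      ∑ u ∈ Xᶜ, F u (c u) := fun F => sum_congr rfl fun u hu => by
    rw [sum_ite_eq, if_pos (hc.apply_mem_compl hu)]
  refine le_of_eq_of_le ?_ (sum_le_sum fun u hu => sum_le_sum fun v hv =>
    hc.div_four_le_crossProb ha ha0 hu hv)
  simp only [← sum_div, sum_add_distrib]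
  rw [sum_comm (f := fun u v => if c v = u then a u v else 0), hleaf a, hleaf fun u v => a v u,
    add_assoc]
  rfl

lemma IsStarPartition.star_le_expCut (hc : IsStarPartition a X K c)
    (ha : ∀ u v, 0 ≤ a u v) (ha0 : ∀ v, a v v = 0) (S : Finset V) :
    (externalWeight a X + signSum X (fun x => outTo a Xᶜ x - inFrom a Xᶜ x) S +
        ∑ v ∈ Xᶜ, (a v (c v) + a (c v) v)) / 4 ≤ expCut a c (placement X S (1 / 2)) := by
  have hsign : (∑ x ∈ X, (outTo a Xᶜ x + inFrom a Xᶜ x) +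
      signSum X (fun x => outTo a Xᶜ x - inFrom a Xᶜ x) S) / 4 =
      ∑ u ∈ X, if u ∈ S then 1 / 2 * inFrom a Xᶜ u else (1 - 1 / 2) * outTo a Xᶜ u := by
    rw [signSum, ← sum_add_distrib, sum_div]
    refine sum_congr rfl fun u _ => ?_
    split_ifs <;> ring
  rw [externalWeight, profileWeight]
  linarith [hc.le_expCut (T := S) ha (by norm_num) fun v hv => hc.sideProb_half hv,
    hc.sum_star_le (T := S) ha ha0]

end Placement

section Main

variable {V : Type*} [Fintype V] [DecidableEq V] {a : V → V → ℝ} {X : Finset V} {c : V → V}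
  {K L t : ℝ}

lemma HasBiasedCut.exists_placement (ha : ∀ u v, 0 ≤ a u v) (ha0 : ∀ v, a v v = 0)
    (h : HasBiasedCut (outTo a Xᶜ) (inFrom a Xᶜ) X (∑ v ∈ Xᶜ, outTo a Xᶜ v)) :
    ∃ T, ∃ p ∈ Set.Icc (0 : ℝ) 1,
      3 / 14 * externalWeight a X ≤ expCut a id (placement X T p) ∧
      3 / 14 * externalWeight a X ≤ expCut (fun u v => a v u) id (placement X T p) := by
  obtain ⟨T, hT, p, hp, hout, hin⟩ := h
  refine ⟨T, p, hp, hout.trans (biasedCut_add_le_expCut ha ha0 hT hp), hin.trans ?_⟩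
  rw [← sum_inFrom_compl]
  exact biasedCut_add_le_expCut (fun u v => ha v u) ha0 hT hp

lemma IsStarPartition.le_expCut_of_signSum_le (hc : IsStarPartition a X K c)
    (ha : ∀ u v, 0 ≤ a u v) (ha0 : ∀ v, a v v = 0)
    (hgain : ∑ v ∈ Xᶜ, min (outTo a Xᶜ v) 3 ≤ 7 * (∑ v ∈ Xᶜ, (a v (c v) + a (c v) v) + L))
    {S : Finset V} (hS : 7 * |signSum X (fun x => outTo a Xᶜ x - inFrom a Xᶜ x) S| ≤
      externalWeight a X + ∑ v ∈ Xᶜ, min (outTo a Xᶜ v) 3) :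
    3 / 14 * externalWeight a X - L / 4 ≤ expCut a c (placement X S (1 / 2)) ∧
      3 / 14 * externalWeight a X - L / 4 ≤
        expCut (fun u v => a v u) c (placement X S (1 / 2)) := by
  have hout := hc.star_le_expCut ha ha0 S
  have hin : (profileWeight (inFrom a Xᶜ) (outTo a Xᶜ) X (∑ v ∈ Xᶜ, inFrom a Xᶜ v) +
      signSum X (fun x => inFrom a Xᶜ x - outTo a Xᶜ x) S +
      ∑ v ∈ Xᶜ, (a (c v) v + a v (c v))) / 4 ≤
        expCut (fun u v => a v u) c (placement X S (1 / 2)) :=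
    hc.swap.star_le_expCut (fun u v => ha v u) ha0 S
  have hswap := neg_signSum X (fun x => outTo a Xᶜ x - inFrom a Xᶜ x) S
  simp only [neg_sub] at hswap
  simp only [profileWeight, sum_inFrom_compl, ← hswap, add_comm (inFrom a Xᶜ _),
    add_comm (a (c _) _)] at hin
  rw [externalWeight, profileWeight] at hout hS ⊢
  have hlower := neg_abs_le (signSum X (fun x => outTo a Xᶜ x - inFrom a Xᶜ x) S)
  have hupper := le_abs_self (signSum X (fun x => outTo a Xᶜ x - inFrom a Xᶜ x) S)
  constructor <;> linarith

lemma IsStarPartition.exists_placement (hc : IsStarPartition a X K c)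
    (ha : ∀ u v, a u v ∈ Set.Icc 0 1) (ha0 : ∀ v, a v v = 0) (hout : ∀ v, 4 ≤ ∑ x, a v x)
    (hL : 0 ≤ L)
    (hgain : ∑ v ∈ Xᶜ, min (outTo a Xᶜ v) 3 ≤ 7 * (∑ v ∈ Xᶜ, (a v (c v) + a (c v) v) + L)) :
    ∃ c' T, ∃ p ∈ Set.Icc (0 : ℝ) 1, IsStarPartition a X K c' ∧
      3 / 14 * externalWeight a X - L / 4 ≤ expCut a c' (placement X T p) ∧
      3 / 14 * externalWeight a X - L / 4 ≤ expCut (fun u v => a v u) c' (placement X T p) := by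
  have ha' : ∀ u v, 0 ≤ a u v := fun u v => (ha u v).1
  rcases exists_signSum_le_or_hasBiasedCut ha hout X with ⟨S, hS⟩ | h
  · exact ⟨c, S, 1 / 2, by norm_num, hc, hc.le_expCut_of_signSum_le ha' ha0 hgain hS⟩
  · obtain ⟨T, p, hp, hout', hin'⟩ := h.exists_placement ha' ha0
    exact ⟨id, T, p, hp, isStarPartition_id a X K, by linarith, by linarith⟩

lemma IsStarPartition.exists_cut_near_expCut (hc : IsStarPartition a X K c)
    (ha : ∀ u v, 0 ≤ a u v) (hK : 0 ≤ K) (ht : 0 ≤ t) (hX : ∀ v ∈ Xᶜ, totalDeg a v ≤ t)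
    (T : Finset V) {p : ℝ} (hp : p ∈ Set.Icc 0 1) {η : ℝ} (hη : 0 ≤ η)
    (hηt : 4 * ((1 + K) * t) * ∑ u, ∑ v, a u v ≤ η ^ 2) :
    ∃ S, expCut a c (placement X T p) - η ≤ cutWeight a S ∧
      expCut (fun u v => a v u) c (placement X T p) - η ≤ cutWeight (fun u v => a v u) S :=
  BalancedCut.exists_cut_near_expCut ha c (placement_mem_Icc X T hp)
    (fun _ hv => placement_eq_zero_or_one (notMem_compl.1 hv))
    (fun i hi => (hc.blockWeight_le ha hK i).trans <|
      mul_le_mul_of_nonneg_left (hX i hi) (by positivity))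
    (by positivity) hη hηt

theorem exists_balanced_cut {A : V → V → Prop} [DecidableRel A] (hA : ∀ v, ¬ A v v)
    (hout : ∀ v, 4 ≤ ∑ x, arcWeight A v x) {ε δ m : ℝ} (hε : 0 < ε) (hδ : 0 < δ)
    (hδε : 64 * (1 + 4 / ε) * δ ≤ ε ^ 2) (hm : ∑ u, ∑ v, arcWeight A u v = m)
    (hmδ : (2 / δ) ^ 2 ≤ ε / 4 * m) :
    ∃ S, (3 / 14 - ε) * m ≤ cutWeight (arcWeight A) S ∧
      (3 / 14 - ε) * m ≤ cutWeight (fun u v => arcWeight A v u) S := by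
  have hm0 : 0 < m := pos_of_mul_pos_right (lt_of_lt_of_le (by positivity) hmδ) (by positivity)
  have ha := arcWeight_mem_Icc A
  have ha' : ∀ u v, 0 ≤ arcWeight A u v := fun u v => (ha u v).1
  have hX : ∀ v ∈ (heavySet (arcWeight A) (δ * m))ᶜ, totalDeg (arcWeight A) v ≤ δ * m := by
    simp [heavySet]
  have hinside := sum_heavySet_le ha (mul_pos hδ hm0)
  rw [hm, mul_div_mul_right _ _ hm0.ne'] at hinside
  have hsplit := sum_eq_add_externalWeight (arcWeight A) (heavySet (arcWeight A) (δ * m))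
  obtain ⟨c, hc, hgain⟩ := exists_isStarPartition hA (heavySet (arcWeight A) (δ * m))
    (show 0 < 4 / ε by positivity)
  have hloss : 4 / (4 / ε) * ∑ u, ∑ v, arcWeight A u v = ε * m := by rw [hm]; field_simp
  rw [hloss] at hgain
  obtain ⟨c', T, p, hp, hc', hle, hle'⟩ :=
    hc.exists_placement ha (fun v => if_neg (hA v)) hout (by positivity) hgain
  have hη : 4 * ((1 + 4 / ε) * (δ * m)) * ∑ u, ∑ v, arcWeight A u v ≤ (ε / 4 * m) ^ 2 := by
    rw [hm]
    linear_combination m ^ 2 / 16 * hδε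
  obtain ⟨S, hS, hS'⟩ := hc'.exists_cut_near_expCut ha' (by positivity) (by positivity) hX T hp
    (by positivity) hη
  have hεm : 0 < ε * m := by positivity
  exact ⟨S, by linarith, by linarith⟩

lemma dArcs_eq_sum {V : Type} [Fintype V] [DecidableEq V] (A : V → V → Prop) [DecidableRel A]
    (S T : Finset V) : (dArcs A S T : ℝ) = ∑ u ∈ S, ∑ v ∈ T, arcWeight A u v := by
  rw [← sum_product' S T]
  simp only [dArcs, arcWeight, sum_boole]

end Main

end BalancedCut

/-- For every real `ε > 0` there exists `m₀` such that every digraph with `m ≥ m₀` arcs and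
minimum outdegree at least 4 admits a bipartition `V₁, V₂` with
`min{e(V₁,V₂), e(V₂,V₁)} ≥ (3/14 − ε)·m`. -/
theorem stmt0 (ε : ℝ) (hε : 0 < ε) :
    ∃ m₀ : ℕ, ∀ (V : Type) [Fintype V] [DecidableEq V] (A : V → V → Prop) [DecidableRel A],
      (∀ v, ¬ A v v) →
      m₀ ≤ dArcs A Finset.univ Finset.univ →
      (∀ x, 4 ≤ outDeg A x) →
      ∃ V₁ V₂ : Finset V, V₁ ∪ V₂ = Finset.univ ∧ Disjoint V₁ V₂ ∧
        (3 / 14 - ε) * (dArcs A Finset.univ Finset.univ : ℝ) ≤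
          min (dArcs A V₁ V₂ : ℝ) (dArcs A V₂ V₁ : ℝ) := by
  obtain ⟨δ, hδ, hδε⟩ : ∃ δ : ℝ, 0 < δ ∧ 64 * (1 + 4 / ε) * δ ≤ ε ^ 2 :=
    ⟨ε ^ 2 / (64 * (1 + 4 / ε)), by positivity, (mul_div_cancel₀ _ (by positivity)).le⟩
  refine ⟨⌈4 / ε * (2 / δ) ^ 2⌉₊, fun V _ _ A _ hA hm hout => ?_⟩
  have hmδ : (2 / δ) ^ 2 ≤ ε / 4 * (dArcs A univ univ : ℝ) :=
    calc (2 / δ) ^ 2 = ε / 4 * (4 / ε * (2 / δ) ^ 2) := by field_simp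
      _ ≤ ε / 4 * (dArcs A univ univ : ℝ) := by gcongr; exact Nat.ceil_le.1 hm
  have hout' : ∀ v, 4 ≤ ∑ x, BalancedCut.arcWeight A v x := fun v => by
    simpa only [outDeg, BalancedCut.arcWeight, sum_boole] using
      (by exact_mod_cast hout v : (4 : ℝ) ≤ outDeg A v)
  obtain ⟨S, h₁, h₂⟩ := BalancedCut.exists_balanced_cut hA hout' hε hδ hδε
    (BalancedCut.dArcs_eq_sum A univ univ).symm hmδ
  refine ⟨S, Sᶜ, union_compl S, disjoint_compl_right, le_min ?_ ?_⟩
  · rw [BalancedCut.dArcs_eq_sum A S]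
    exact h₁
  · rw [BalancedCut.dArcs_eq_sum A Sᶜ, sum_comm]
    exact h₂
end

section
/- Let D be a digraph with m arcs, let p be a real with 0 ≤ p ≤ 1, and let ε > 0. Suppose X ⊆ V(D) with a given partition X = X₁ ∪ X₂, let Y = V(D) ∖ X, and suppose every y ∈ Y satisfies d(y) ≤ ε²m/4. Then there exists a bipartition V(D) = V₁ ∪ V₂ with Xᵢ ⊆ Vᵢ for i = 1,2 such that e(V₁,V₂) ≥ e(X₁,X₂) + (1−p)·e(X₁,Y) + p·e(Y,X₂) + p(1−p)·e(Y) − εm and e(V₂,V₁) ≥ e(X₂,X₁) + p·e(X₂,Y) + (1−p)·e(Y,X₁) + p(1−p)·e(Y) − εm. -/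
open Finset

/-!
Put each vertex `v` into `V₁` independently with probability `x v`, where `x = 1` on `X₁`, `x = 0`
on `X₂` and `x = p` on `Y`. The expected values of `e(V₁, V₂)` and `e(V₂, V₁)` are the quadratic
polynomials `x ⬝ᵥ M *ᵥ (1 - x)` and `(1 - x) ⬝ᵥ M *ᵥ x`, with `M` the adjacency matrix. In the
absence of loops they are affine in each coordinate, with slope at most `d(y)` in the direction of
`y`. Hence randomly rounding the coordinate `y` alone raises the expected sum of the squared
deviations of the two polynomials from their initial values by at most `2 x_y (1 - x_y) d(y)²`. Some
outcome does no worse than the average, so the coordinates can be rounded one after another at a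
total cost of at most `∑_{y ∈ Y} d(y)² / 2 ≤ (ε m)²`.
-/

open scoped Matrix

section Rounding

variable {V : Type*} [DecidableEq V]

theorem exists_eq_zero_or_one_and_le {f : ℝ → ℝ} {q c : ℝ} (hq0 : 0 ≤ q) (hq1 : q ≤ 1)
    (h : q * f 1 + (1 - q) * f 0 ≤ c) :
    ∃ t, (t = 0 ∨ t = 1) ∧ (q = 0 ∨ q = 1 → t = q) ∧ f t ≤ c := by
  rcases hq0.eq_or_lt with rfl | hq0
  · exact ⟨0, by simp, by simp, by simpa using h⟩
  rcases hq1.eq_or_lt with rfl | hq1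
  · exact ⟨1, by simp, by simp, by simpa using h⟩
  have hmin : f 1 ≤ c ∨ f 0 ≤ c := by
    by_contra! hlt
    nlinarith [mul_lt_mul_of_pos_left hlt.1 hq0, mul_lt_mul_of_pos_left hlt.2 (sub_pos.2 hq1)]
  have hq : ¬(q = 0 ∨ q = 1) := not_or.2 ⟨hq0.ne', hq1.ne⟩
  rcases hmin with hf | hf
  · exact ⟨1, .inr rfl, fun hq' => absurd hq' hq, hf⟩
  · exact ⟨0, .inl rfl, fun hq' => absurd hq' hq, hf⟩

/-- The indicator vector of a finite set of vertices. -/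
def indVec (S : Finset V) (v : V) : ℝ :=
  if v ∈ S then 1 else 0

/-- On the unit cube, replacing the coordinate `x y` by an independent Bernoulli variable of mean
`x y` raises the expected value of `Φ` by at most `x y * (1 - x y) * δ y`. The cost is scaled by the
variance `x y * (1 - x y)` so that it vanishes on coordinates that are already rounded. -/
def RoundingCostLE (Φ : (V → ℝ) → ℝ) (δ : V → ℝ) : Prop :=
  ∀ x ∈ Set.Icc (0 : V → ℝ) 1, ∀ y,
    x y * Φ (Function.update x y 1) + (1 - x y) * Φ (Function.update x y 0) ≤
      Φ x + x y * (1 - x y) * δ y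

theorem RoundingCostLE.add {Φ Ψ : (V → ℝ) → ℝ} {δ δ' : V → ℝ} (hΦ : RoundingCostLE Φ δ)
    (hΨ : RoundingCostLE Ψ δ') : RoundingCostLE (Φ + Ψ) (δ + δ') := fun x hx y => by
  simp only [Pi.add_apply]
  linarith [hΦ x hx y, hΨ x hx y]

variable {Φ : (V → ℝ) → ℝ} {δ x : V → ℝ}

theorem exists_round_on_le (hΦ : RoundingCostLE Φ δ) (hx : x ∈ Set.Icc 0 1) (T : Finset V) :
    ∃ z ∈ Set.Icc (0 : V → ℝ) 1, (∀ v ∈ T, z v = 0 ∨ z v = 1) ∧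
      (∀ v, v ∉ T ∨ x v = 0 ∨ x v = 1 → z v = x v) ∧
      Φ z ≤ Φ x + ∑ y ∈ T, x y * (1 - x y) * δ y := by
  induction T using Finset.induction_on with
  | empty => exact ⟨x, hx, by simp, by simp, by simp⟩
  | insert y T hy ih =>
    obtain ⟨z, hz, hzT, hzx, hle⟩ := ih
    obtain ⟨t, ht, htq, hft⟩ := exists_eq_zero_or_one_and_le
      (f := fun t => Φ (Function.update z y t)) (hz.1 y) (hz.2 y) (hΦ z hz y)
    have hzy : z y = x y := hzx y (.inl hy)
    rw [hzy] at htq hft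
    refine ⟨Function.update z y t, ?_, fun v hv => ?_, fun v hv => ?_, ?_⟩
    · rw [Set.mem_Icc, le_update_iff, update_le_iff]
      exact ⟨⟨by rcases ht with rfl | rfl <;> simp, fun v _ => hz.1 v⟩,
        by rcases ht with rfl | rfl <;> simp, fun v _ => hz.2 v⟩
    · rcases eq_or_ne v y with rfl | hvy
      · simpa using ht
      · simpa [hvy] using hzT v (mem_of_mem_insert_of_ne hv hvy)
    · rcases eq_or_ne v y with rfl | hvy
      · simpa using htq (by simpa using hv)
      · simpa [hvy] using hzx v (by simpa [hvy] using hv)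
    · rw [sum_insert hy]
      linarith

theorem exists_indVec_le [Fintype V] (hΦ : RoundingCostLE Φ δ) (hx : x ∈ Set.Icc 0 1) :
    ∃ S : Finset V, (∀ v, x v = 1 → v ∈ S) ∧ (∀ v, x v = 0 → v ∉ S) ∧
      Φ (indVec S) ≤ Φ x + ∑ y, x y * (1 - x y) * δ y := by
  obtain ⟨z, -, hz, hzx, hle⟩ := exists_round_on_le hΦ hx univ
  have hind : indVec {v | z v = 1} = z := by
    ext v
    rcases hz v (mem_univ v) with h | h <;> simp [indVec, h]
  refine ⟨({v | z v = 1} : Finset V), fun v hv => ?_, fun v hv => ?_, by rwa [hind]⟩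
  · simp [hzx v (.inr (.inr hv)), hv]
  · simp [hzx v (.inr (.inl hv)), hv]

end Rounding

section FracCut

variable {V : Type*} [Fintype V]

/-- The expected weight of the arcs leaving a random vertex set that contains each vertex `v`
independently with probability `x v`, for a loopless digraph with weighted adjacency matrix `M`. -/
def fracCut (M : Matrix V V ℝ) (x : V → ℝ) : ℝ :=
  x ⬝ᵥ M *ᵥ (1 - x)

/-- The total absolute weight of the arcs leaving or entering `y`, for weighted adjacency
matrix `M`. -/
def weightedDeg (M : Matrix V V ℝ) (y : V) : ℝ :=
  ∑ v, (|M y v| + |M v y|)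

/-- The derivative of `fracCut M` at `x` in the direction of the vertex `y`, for `M` with zero
diagonal. -/
def fracCutSlope (M : Matrix V V ℝ) (x : V → ℝ) (y : V) : ℝ :=
  (M *ᵥ (1 - x)) y - (x ᵥ* M) y

theorem fracCut_transpose (M : Matrix V V ℝ) (x : V → ℝ) :
    fracCut Mᵀ x = (1 - x) ⬝ᵥ M *ᵥ x :=
  Matrix.dotProduct_transpose_mulVec M x (1 - x)

theorem weightedDeg_transpose (M : Matrix V V ℝ) (y : V) :
    weightedDeg Mᵀ y = weightedDeg M y := by
  simp only [weightedDeg, Matrix.transpose_apply, add_comm]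

theorem abs_fracCutSlope_le_weightedDeg (M : Matrix V V ℝ) {x : V → ℝ}
    (hx : x ∈ Set.Icc 0 1) (y : V) : |fracCutSlope M x y| ≤ weightedDeg M y := by
  have hslope : fracCutSlope M x y = ∑ v, (M y v * (1 - x v) - x v * M v y) := by
    simp [fracCutSlope, Matrix.mulVec, Matrix.vecMul, dotProduct]
  have hout (v : V) : |M y v * (1 - x v)| ≤ |M y v| := by
    have hxv : 0 ≤ 1 - x v := sub_nonneg.2 (hx.2 v)
    rw [abs_mul, abs_of_nonneg hxv]
    exact mul_le_of_le_one_right (abs_nonneg _) (sub_le_self _ (hx.1 v))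
  have hin (v : V) : |x v * M v y| ≤ |M v y| := by
    rw [abs_mul, abs_of_nonneg (hx.1 v)]
    exact mul_le_of_le_one_left (abs_nonneg _) (hx.2 v)
  rw [hslope]
  exact (abs_sum_le_sum_abs _ _).trans
    (sum_le_sum fun v _ => (abs_sub _ _).trans (add_le_add (hout v) (hin v)))

variable [DecidableEq V]

theorem fracCut_update {M : Matrix V V ℝ} {y : V} (hM : M y y = 0) (x : V → ℝ) (t : ℝ) :
    fracCut M (Function.update x y t) = fracCut M x + (t - x y) * fracCutSlope M x y := by
  have hupd : Function.update x y t = x + Pi.single y (t - x y) := by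
    ext v
    rcases eq_or_ne v y with rfl | hv <;> simp [*]
  have hcompl : 1 - (x + Pi.single y (t - x y)) = 1 - x - Pi.single y (t - x y) :=
    sub_add_eq_sub_sub _ _ _
  rw [fracCut, hupd, hcompl, Matrix.mulVec_sub, dotProduct_sub, add_dotProduct, add_dotProduct,
    Matrix.dotProduct_mulVec x M (Pi.single _ _)]
  simp only [single_dotProduct, dotProduct_single, Matrix.mulVec_single, MulOpposite.op_sub,
    dotProduct_smul, Matrix.col_apply, hM, mul_zero, smul_zero, add_zero, fracCut, fracCutSlope]
  ring

theorem roundingCostLE_fracCut_sub_sq {M : Matrix V V ℝ} (hM : ∀ v, M v v = 0) (a : ℝ) :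
    RoundingCostLE (fun x => (fracCut M x - a) ^ 2) (fun y => weightedDeg M y ^ 2) := by
  intro x hx y
  have hsq : fracCutSlope M x y ^ 2 ≤ weightedDeg M y ^ 2 :=
    sq_le_sq.2 ((abs_fracCutSlope_le_weightedDeg M hx y).trans (le_abs_self _))
  have hvar : 0 ≤ x y * (1 - x y) := mul_nonneg (hx.1 y) (sub_nonneg.2 (hx.2 y))
  calc x y * (fracCut M (Function.update x y 1) - a) ^ 2 +
        (1 - x y) * (fracCut M (Function.update x y 0) - a) ^ 2
      = (fracCut M x - a) ^ 2 + x y * (1 - x y) * fracCutSlope M x y ^ 2 := by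
        rw [fracCut_update (hM y), fracCut_update (hM y)]
        ring
    _ ≤ (fracCut M x - a) ^ 2 + x y * (1 - x y) * weightedDeg M y ^ 2 := by gcongr

theorem exists_fracCut_indVec_sub_sq_add_le {M : Matrix V V ℝ} (hM : ∀ v, M v v = 0)
    {x : V → ℝ} (hx : x ∈ Set.Icc 0 1) :
    ∃ S : Finset V, (∀ v, x v = 1 → v ∈ S) ∧ (∀ v, x v = 0 → v ∉ S) ∧
      (fracCut M (indVec S) - fracCut M x) ^ 2 + (fracCut Mᵀ (indVec S) - fracCut Mᵀ x) ^ 2 ≤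
        ∑ y, x y * (1 - x y) * (2 * weightedDeg M y ^ 2) := by
  have hcost := (roundingCostLE_fracCut_sub_sq hM (fracCut M x)).add
    (roundingCostLE_fracCut_sub_sq (M := Mᵀ) hM (fracCut Mᵀ x))
  obtain ⟨S, hS1, hS0, hle⟩ := exists_indVec_le hcost hx
  refine ⟨S, hS1, hS0, ?_⟩
  simpa [weightedDeg_transpose, two_mul] using hle

end FracCut

theorem mul_one_sub_mul_two_mul_sq_le {q d c : ℝ} (hd : 0 ≤ d) (hc : 0 ≤ c)
    (h : q ≠ 0 → q ≠ 1 → d ≤ c) : q * (1 - q) * (2 * d ^ 2) ≤ c / 2 * d := by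
  by_cases hq : q = 0 ∨ q = 1
  · have hvar : q * (1 - q) = 0 := by rcases hq with rfl | rfl <;> simp
    rw [hvar, zero_mul]
    positivity
  · rw [not_or] at hq
    calc q * (1 - q) * (2 * d ^ 2)
        ≤ 1 / 4 * (2 * d ^ 2) := by
          gcongr
          linarith [sq_nonneg (q - 1 / 2)]
      _ = d / 2 * d := by ring
      _ ≤ c / 2 * d := by
          gcongr
          exact h hq.1 hq.2

section Digraph

variable {V : Type} [Fintype V] (A : V → V → Prop) [DecidableRel A]

/-- The adjacency matrix of the digraph `A`. -/
def arcMatrix : Matrix V V ℝ :=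
  Matrix.of fun u v => if A u v then 1 else 0

theorem weightedDeg_arcMatrix (y : V) : weightedDeg (arcMatrix A) y = deg A y := by
  simp [weightedDeg, arcMatrix, deg, outDeg, inDeg, sum_add_distrib, apply_ite abs]

variable [DecidableEq V]

theorem dArcs_eq_dotProduct_mulVec (S T : Finset V) :
    (dArcs A S T : ℝ) = indVec S ⬝ᵥ arcMatrix A *ᵥ indVec T := by
  have hset : (S ×ˢ T).filter (fun p => A p.1 p.2) =
      (univ ×ˢ univ).filter fun p => p.1 ∈ S ∧ A p.1 p.2 ∧ p.2 ∈ T := by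
    grind
  rw [dArcs, hset, natCast_card_filter, sum_product]
  simp only [arcMatrix, indVec, dotProduct, Matrix.mulVec, Matrix.of_apply, mul_sum, ite_mul,
    one_mul, zero_mul, ite_and]

theorem sum_deg_eq_two_mul_dArcs : ∑ x, deg A x = 2 * dArcs A univ univ := by
  have hout : ∑ x, outDeg A x = dArcs A univ univ := by
    simp only [outDeg, dArcs, card_filter, sum_product]
  have hin : ∑ x, inDeg A x = dArcs A univ univ := by
    simp only [inDeg, dArcs, card_filter, sum_product]
    exact sum_comm
  simp only [deg, sum_add_distrib, hout, hin, two_mul]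

theorem one_sub_indVec (S : Finset V) : (1 : V → ℝ) - indVec S = indVec Sᶜ := by
  ext v
  by_cases hv : v ∈ S <;> simp [indVec, hv]

theorem fracCut_arcMatrix_indVec (S : Finset V) :
    fracCut (arcMatrix A) (indVec S) = dArcs A S Sᶜ := by
  rw [fracCut, one_sub_indVec, dArcs_eq_dotProduct_mulVec]

theorem fracCut_arcMatrix_transpose_indVec (S : Finset V) :
    fracCut (arcMatrix A)ᵀ (indVec S) = dArcs A Sᶜ S := by
  rw [fracCut_transpose, one_sub_indVec, dArcs_eq_dotProduct_mulVec]

theorem indVec_add_smul_dotProduct_arcMatrix_mulVec (S S' T T' : Finset V) (s t : ℝ) :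
    (indVec S + s • indVec S') ⬝ᵥ arcMatrix A *ᵥ (indVec T + t • indVec T') =
      dArcs A S T + t * dArcs A S T' + s * dArcs A S' T + s * t * dArcs A S' T' := by
  simp only [dArcs_eq_dotProduct_mulVec, Matrix.mulVec_add, Matrix.mulVec_smul, dotProduct_add,
    add_dotProduct, dotProduct_smul, smul_dotProduct, smul_eq_mul]
  ring

variable {A}

theorem sum_mul_deg_sq_le {x : V → ℝ} {ε : ℝ}
    (hdeg : ∀ v, x v ≠ 0 → x v ≠ 1 → (deg A v : ℝ) ≤ ε ^ 2 * dArcs A univ univ / 4) :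
    ∑ v, x v * (1 - x v) * (2 * (deg A v : ℝ) ^ 2) ≤ (ε * dArcs A univ univ) ^ 2 := by
  have hsum : ∑ v, (deg A v : ℝ) = 2 * dArcs A univ univ :=
    mod_cast sum_deg_eq_two_mul_dArcs A
  set m := (dArcs A univ univ : ℝ)
  calc ∑ v, x v * (1 - x v) * (2 * (deg A v : ℝ) ^ 2)
      ≤ ∑ v, ε ^ 2 * m / 4 / 2 * (deg A v : ℝ) :=
        sum_le_sum fun v _ =>
          mul_one_sub_mul_two_mul_sq_le (Nat.cast_nonneg _) (by positivity) (hdeg v)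
    _ = ε ^ 2 * m / 4 / 2 * (2 * m) := by rw [← mul_sum, hsum]
    _ ≤ (ε * m) ^ 2 := by linarith [sq_nonneg (ε * m)]

theorem exists_finset_fracCut_sub_le_dArcs (hirr : ∀ v, ¬A v v) {x : V → ℝ}
    (hx : x ∈ Set.Icc 0 1) {ε : ℝ} (hε : 0 ≤ ε)
    (hdeg : ∀ v, x v ≠ 0 → x v ≠ 1 → (deg A v : ℝ) ≤ ε ^ 2 * dArcs A univ univ / 4) :
    ∃ S : Finset V, (∀ v, x v = 1 → v ∈ S) ∧ (∀ v, x v = 0 → v ∉ S) ∧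
      fracCut (arcMatrix A) x - ε * dArcs A univ univ ≤ dArcs A S Sᶜ ∧
      fracCut (arcMatrix A)ᵀ x - ε * dArcs A univ univ ≤ dArcs A Sᶜ S := by
  obtain ⟨S, hS1, hS0, hle⟩ := exists_fracCut_indVec_sub_sq_add_le (M := arcMatrix A)
    (fun v => if_neg (hirr v)) hx
  simp only [weightedDeg_arcMatrix, fracCut_arcMatrix_indVec,
    fracCut_arcMatrix_transpose_indVec] at hle
  have hsum := hle.trans (sum_mul_deg_sq_le hdeg)
  have hεm : 0 ≤ ε * dArcs A univ univ := by positivity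
  have hout := abs_le_of_sq_le_sq' (le_of_add_le_of_nonneg_left hsum (sq_nonneg _)) hεm
  have hin := abs_le_of_sq_le_sq' (le_of_add_le_of_nonneg_right hsum (sq_nonneg _)) hεm
  exact ⟨S, hS1, hS0, by linarith [hout.1], by linarith [hin.1]⟩

end Digraph

section ExtensionProb

variable {V : Type*} [DecidableEq V]

/-- The probability with which each vertex is put into the first class when the partial partition
`(X₁, X₂)` is extended at random: vertices outside `X₁ ∪ X₂` are put there with probability `p`. -/
def extensionProb (X₁ X₂ : Finset V) (p : ℝ) (v : V) : ℝ :=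
  if v ∈ X₁ then 1 else if v ∈ X₂ then 0 else p

theorem extensionProb_mem_Icc (X₁ X₂ : Finset V) {p : ℝ} (hp0 : 0 ≤ p) (hp1 : p ≤ 1) :
    extensionProb X₁ X₂ p ∈ Set.Icc 0 1 := by
  constructor <;> intro v <;> simp only [extensionProb] <;> split_ifs <;> simp [hp0, hp1]

variable [Fintype V]

theorem extensionProb_eq_indVec_add (X₁ X₂ : Finset V) (p : ℝ) :
    extensionProb X₁ X₂ p = indVec X₁ + p • indVec (X₁ ∪ X₂)ᶜ := by
  ext v
  by_cases h₁ : v ∈ X₁ <;> by_cases h₂ : v ∈ X₂ <;> simp [extensionProb, indVec, h₁, h₂]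

theorem one_sub_extensionProb {X₁ X₂ : Finset V} (hdisj : Disjoint X₁ X₂) (p : ℝ) :
    1 - extensionProb X₁ X₂ p = indVec X₂ + (1 - p) • indVec (X₁ ∪ X₂)ᶜ := by
  ext v
  by_cases h₁ : v ∈ X₁
  · simp [extensionProb, indVec, h₁, disjoint_left.1 hdisj h₁]
  · by_cases h₂ : v ∈ X₂ <;> simp [extensionProb, indVec, h₁, h₂]

end ExtensionProb

/-- Lemma 2.1 (Lee–Loh–Sudakov): extending a partial partition. -/
theorem stmt1 {V : Type} [Fintype V] [DecidableEq V] (A : V → V → Prop) [DecidableRel A]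
    (hirr : ∀ v, ¬ A v v)
    (m : ℕ) (hm : m = dArcs A Finset.univ Finset.univ)
    (p ε : ℝ) (hp0 : 0 ≤ p) (hp1 : p ≤ 1) (hε : 0 < ε)
    (X X₁ X₂ : Finset V) (hX : X₁ ∪ X₂ = X) (hdisj : Disjoint X₁ X₂)
    (Y : Finset V) (hY : Y = Xᶜ)
    (hdeg : ∀ y ∈ Y, (deg A y : ℝ) ≤ ε ^ 2 * m / 4) :
    ∃ V₁ V₂ : Finset V, V₁ ∪ V₂ = Finset.univ ∧ Disjoint V₁ V₂ ∧
      X₁ ⊆ V₁ ∧ X₂ ⊆ V₂ ∧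
      (dArcs A X₁ X₂ : ℝ) + (1 - p) * (dArcs A X₁ Y : ℝ) + p * (dArcs A Y X₂ : ℝ)
          + p * (1 - p) * (dArcs A Y Y : ℝ) - ε * m ≤ (dArcs A V₁ V₂ : ℝ) ∧
      (dArcs A X₂ X₁ : ℝ) + p * (dArcs A X₂ Y : ℝ) + (1 - p) * (dArcs A Y X₁ : ℝ)
          + p * (1 - p) * (dArcs A Y Y : ℝ) - ε * m ≤ (dArcs A V₂ V₁ : ℝ) := by
  subst hm hX hY
  have hexp := extensionProb_eq_indVec_add X₁ X₂ p
  have hexp_compl := one_sub_extensionProb hdisj p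
  obtain ⟨S, hS1, hS0, hout, hin⟩ := exists_finset_fracCut_sub_le_dArcs hirr
    (extensionProb_mem_Icc X₁ X₂ hp0 hp1) hε.le fun v hv0 hv1 =>
      hdeg v (by grind [extensionProb, mem_compl])
  rw [fracCut, hexp_compl, hexp, indVec_add_smul_dotProduct_arcMatrix_mulVec] at hout
  rw [fracCut_transpose, hexp_compl, hexp, indVec_add_smul_dotProduct_arcMatrix_mulVec] at hin
  refine ⟨S, Sᶜ, union_compl S, disjoint_compl_right, fun v hv => hS1 v (if_pos hv),
    fun v hv => mem_compl.2 (hS0 v ?_), hout, by linarith⟩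
  simp [extensionProb, hv, disjoint_right.1 hdisj hv]
end

section
/- Let D be a digraph with n vertices and m arcs, and let ε > 0. If m ≥ 8n/ε² or the maximum degree Δ(D) = max_{x∈V(D)} d(x) satisfies Δ(D) ≤ ε²m/4, then D admits a bipartition V(D) = V₁ ∪ V₂ with min{e(V₁,V₂), e(V₂,V₁)} ≥ m/4 − εm. -/
open Finset

/-!
Place each vertex on a side of the cut according to an independent uniform random sign `σ u`.
For arc weights `M`, put `e = ∑ M u v`, `L = ∑ σ u * (outweight of u - inweight of u)` and
`Q = ∑ M u v * σ u * σ v`. The two directions of the cut have weights `(e + L - Q) / 4` and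
`(e - L - Q) / 4`, so it suffices to find signs with `|L| + Q` small. Since distinct signs are
uncorrelated, `|L|` has expectation at most `√(𝔼 L ^ 2)`, the Euclidean norm of the imbalances, and
`Q` has expectation `∑ M u u`, which vanishes without loops.
-/

open scoped BigOperators

section RandomSigns

variable {ι K : Type*} [Fintype ι] [DecidableEq ι] [Field K] [CharZero K]

theorem expect_sign_mul_sign (u v : ι) :
    𝔼 σ : ι → ℤˣ, (σ u : K) * (σ v : K) = if u = v then 1 else 0 := by
  split_ifs with huv
  · subst huv
    simp [← Int.cast_mul, ← Units.val_mul, Int.units_mul_self]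
  · -- flipping the sign at `u` alone negates the integrand
    refine self_eq_neg.mp ?_
    rw [← expect_neg_distrib]
    refine Fintype.expect_equiv (Equiv.mulLeft (Pi.mulSingle u (-1))) _ _ fun σ => ?_
    simp [Pi.mulSingle_eq_of_ne (Ne.symm huv)]

theorem expect_sum_sum_mul_sign (M : ι → ι → K) :
    𝔼 σ : ι → ℤˣ, ∑ u, ∑ v, M u v * ((σ u : K) * (σ v : K)) = ∑ u, M u u := by
  simp only [expect_sum_comm, ← mul_expect, expect_sign_mul_sign, mul_ite, mul_one, mul_zero,
    sum_ite_eq, mem_univ, if_true]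

theorem expect_sq_sum_sign_mul (a : ι → K) :
    𝔼 σ : ι → ℤˣ, (∑ u, (σ u : K) * a u) ^ 2 = ∑ u, a u ^ 2 := by
  simp only [sq, sum_mul_sum]
  rw [← expect_sum_sum_mul_sign fun u v => a u * a v]
  simp only [mul_mul_mul_comm, mul_comm]

theorem expect_abs_sum_sign_mul_le (a : ι → ℝ) :
    𝔼 σ : ι → ℤˣ, |∑ u, (σ u : ℝ) * a u| ≤ √(∑ u, a u ^ 2) := by
  refine Real.le_sqrt_of_sq_le ?_
  simpa [expect_sq_sum_sign_mul] using
    expect_mul_sq_le_sq_mul_sq univ (fun σ : ι → ℤˣ => |∑ u, (σ u : ℝ) * a u|) 1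

end RandomSigns

section WeightedCuts

variable {ι : Type*} [Fintype ι]

theorem exists_abs_sum_sign_mul_add_le (M : ι → ι → ℝ) (a : ι → ℝ) :
    ∃ σ : ι → ℤˣ, |∑ u, (σ u : ℝ) * a u| +
        ∑ u, ∑ v, M u v * ((σ u : ℝ) * (σ v : ℝ)) ≤
      √(∑ u, a u ^ 2) + ∑ u, M u u := by
  classical
  obtain ⟨σ, -, hσ⟩ := exists_le_of_expect_le univ_nonempty
    ((expect_add_distrib univ _ _).trans_le
      (add_le_add (expect_abs_sum_sign_mul_le a) (expect_sum_sum_mul_sign M).le))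
  exact ⟨σ, hσ⟩

theorem four_mul_sum_sum_filter_sign {R : Type*} [CommRing R] (M : ι → ι → R) (σ : ι → ℤˣ) :
    4 * ∑ u with σ u = 1, ∑ v with σ v = -1, M u v =
      ∑ u, ∑ v, M u v + ∑ u, (σ u : R) * ∑ v, (M u v - M v u) -
        ∑ u, ∑ v, M u v * ((σ u : R) * (σ v : R)) := by
  have hcut : 4 * ∑ u with σ u = 1, ∑ v with σ v = -1, M u v =
      ∑ u, ∑ v, M u v * ((1 + (σ u : R)) * (1 - (σ v : R))) := by
    simp only [sum_filter, mul_sum]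
    refine sum_congr rfl fun u _ => ?_
    rcases Int.units_eq_one_or (σ u) with hu | hu
    · simp only [hu, if_true, mul_sum]
      refine sum_congr rfl fun v _ => ?_
      rcases Int.units_eq_one_or (σ v) with hv | hv
      · simp [hv]
      · simp only [hv, if_true, Units.val_one, Units.val_neg, Int.cast_one, Int.cast_neg]
        ring
    · simp [hu]
  have hlin : ∑ u, (σ u : R) * ∑ v, (M u v - M v u) =
      ∑ u, ∑ v, M u v * ((σ u : R) - (σ v : R)) := by
    simp only [sum_sub_distrib, mul_sub, mul_sum]
    rw [sum_comm (f := fun u v => (σ u : R) * M v u)]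
    simp only [mul_comm]
  rw [hcut, hlin]
  simp only [← sum_add_distrib, ← sum_sub_distrib]
  refine sum_congr rfl fun u _ => sum_congr rfl fun v _ => ?_
  ring

theorem exists_sub_sqrt_le_min_sum_sum_compl [DecidableEq ι] (M : ι → ι → ℝ) :
    ∃ S : Finset ι,
      (∑ u, ∑ v, M u v - ∑ u, M u u - √(∑ u, (∑ v, (M u v - M v u)) ^ 2)) / 4 ≤
        min (∑ u ∈ S, ∑ v ∈ Sᶜ, M u v) (∑ u ∈ Sᶜ, ∑ v ∈ S, M u v) := by
  obtain ⟨σ, hσ⟩ := exists_abs_sum_sign_mul_add_le M fun u => ∑ v, (M u v - M v u)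
  have hcompl : (univ.filter fun u => σ u = 1)ᶜ = univ.filter fun u => σ u = -1 := by
    simp only [compl_filter, ← ne_eq, Int.units_ne_iff_eq_neg]
  have hforward := four_mul_sum_sum_filter_sign M σ
  have hbackward := four_mul_sum_sum_filter_sign M (-σ)
  simp only [Pi.neg_apply, neg_eq_iff_eq_neg, Units.val_neg, Int.cast_neg, neg_mul,
    mul_neg, neg_neg, sum_neg_distrib] at hbackward
  refine ⟨univ.filter fun u => σ u = 1, ?_⟩
  rw [hcompl, le_min_iff]
  constructor
  · linarith [neg_le_abs (∑ u, (σ u : ℝ) * ∑ v, (M u v - M v u))]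
  · linarith [le_abs_self (∑ u, (σ u : ℝ) * ∑ v, (M u v - M v u))]

end WeightedCuts

section Digraphs

variable {V : Type} [Fintype V] (A : V → V → Prop) [DecidableRel A]

theorem dArcs_eq_sum_sum_ite [DecidableEq V] (S T : Finset V) :
    dArcs A S T = ∑ u ∈ S, ∑ v ∈ T, if A u v then 1 else 0 := by
  rw [dArcs, card_filter, sum_product]

theorem sum_deg [DecidableEq V] : ∑ x, deg A x = 2 * dArcs A univ univ := by
  simp only [deg, outDeg, inDeg, card_filter, sum_add_distrib, dArcs_eq_sum_sum_ite]
  rw [sum_comm (f := fun x y => if A y x then 1 else 0), two_mul]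

theorem deg_le_two_mul_card (x : V) : deg A x ≤ 2 * Fintype.card V :=
  (add_le_add (card_le_univ _) (card_le_univ _)).trans_eq (two_mul _).symm

theorem sum_sq_outDeg_sub_inDeg_le [DecidableEq V] {δ : ℝ} (hδ : ∀ x, (deg A x : ℝ) ≤ δ) :
    ∑ x, ((outDeg A x : ℝ) - inDeg A x) ^ 2 ≤ 2 * dArcs A univ univ * δ := by
  have hterm (x : V) : ((outDeg A x : ℝ) - inDeg A x) ^ 2 ≤ deg A x * δ := calc
    ((outDeg A x : ℝ) - inDeg A x) ^ 2 ≤ (deg A x : ℝ) * deg A x := by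
      rw [deg, Nat.cast_add]
      nlinarith [mul_nonneg (outDeg A x).cast_nonneg (inDeg A x).cast_nonneg (α := ℝ)]
    _ ≤ deg A x * δ := mul_le_mul_of_nonneg_left (hδ x) (Nat.cast_nonneg _)
  calc
    ∑ x, ((outDeg A x : ℝ) - inDeg A x) ^ 2 ≤ ∑ x, deg A x * δ := sum_le_sum fun x _ => hterm x
    _ = 2 * dArcs A univ univ * δ := by
      rw [← sum_mul, ← Nat.cast_sum, sum_deg, Nat.cast_mul, Nat.cast_two]

theorem sqrt_sum_sq_outDeg_sub_inDeg_le [DecidableEq V] {ε : ℝ} (hε : 0 ≤ ε)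
    (hdeg : ∀ x, (deg A x : ℝ) ≤ ε ^ 2 * dArcs A univ univ / 4) :
    √(∑ x, ((outDeg A x : ℝ) - inDeg A x) ^ 2) ≤ ε * dArcs A univ univ := by
  refine Real.sqrt_le_iff.mpr ⟨by positivity, (sum_sq_outDeg_sub_inDeg_le A hdeg).trans ?_⟩
  linarith [sq_nonneg (ε * dArcs A univ univ)]

theorem deg_le_of_card_div_le {ε t : ℝ} (hε : ε ≠ 0)
    (h : 8 * (Fintype.card V : ℝ) / ε ^ 2 ≤ t) (x : V) : (deg A x : ℝ) ≤ ε ^ 2 * t / 4 := by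
  have hcard : (deg A x : ℝ) ≤ 2 * Fintype.card V := by exact_mod_cast deg_le_two_mul_card A x
  rw [div_le_iff₀ (by positivity)] at h
  linarith

theorem stmt2_general [DecidableEq V] (hirr : ∀ v, ¬ A v v) :
    ∃ S : Finset V,
      (dArcs A univ univ - √(∑ x, ((outDeg A x : ℝ) - inDeg A x) ^ 2)) / 4 ≤
        min (dArcs A S Sᶜ : ℝ) (dArcs A Sᶜ S : ℝ) := by
  simpa [dArcs_eq_sum_sum_ite, outDeg, inDeg, hirr] using
    exists_sub_sqrt_le_min_sum_sum_compl fun u v => if A u v then (1 : ℝ) else 0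

end Digraphs

/-- Corollary 2.2 (Lee–Loh–Sudakov). -/
theorem stmt2 {V : Type} [Fintype V] [DecidableEq V] (A : V → V → Prop) [DecidableRel A]
    (hirr : ∀ v, ¬ A v v)
    (n m : ℕ) (hn : n = Fintype.card V) (hm : m = dArcs A Finset.univ Finset.univ)
    (ε : ℝ) (hε : 0 < ε)
    (hcond : 8 * (n : ℝ) / ε ^ 2 ≤ (m : ℝ) ∨ ∀ x, (deg A x : ℝ) ≤ ε ^ 2 * m / 4) :
    ∃ V₁ V₂ : Finset V, V₁ ∪ V₂ = Finset.univ ∧ Disjoint V₁ V₂ ∧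
      (m : ℝ) / 4 - ε * m ≤ min (dArcs A V₁ V₂ : ℝ) (dArcs A V₂ V₁ : ℝ) := by
  subst hn hm
  have hdeg := hcond.elim (deg_le_of_card_div_le A hε.ne') id
  obtain ⟨S, hS⟩ := stmt2_general A hirr
  exact ⟨S, Sᶜ, union_compl S, disjoint_compl_right, by
    linarith [sqrt_sum_sq_outDeg_sub_inDeg_le A hε.le hdeg, Real.sqrt_nonneg
      (∑ x, ((outDeg A x : ℝ) - inDeg A x) ^ 2)]⟩
end

section
/- Let D be a digraph and let V(D) = X ∪ Y be a partition with e(X) = 0. Let X = X₁ ∪ X₂ be a partition of X that minimizes |θ(X₁,X₂)| among all partitions of X. Then |θ(X₁,X₂)| ≤ |Y|. -/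
open Finset

/-!
Moving a vertex `x` from one part of `X` to the other only affects the gap through the excess of
`x`: the number of arcs from `x` to `Y` minus the number of arcs from `Y` to `x`. Hence the gap is
the total excess of `X₁` minus that of `X₂`. Every excess is at most `|Y|` in absolute value, so
distributing the vertices one at a time, each to the part that moves the running difference towards
zero, yields a partition of `X` with gap at most `|Y|`; a minimizing partition does no worse.
-/

section Balancing

variable {G : Type*} [AddCommGroup G] [LinearOrder G] [IsOrderedAddMonoid G] {a b c : G}

theorem abs_add_le_or_abs_sub_le (ha : |a| ≤ c) (hb : |b| ≤ c) : |a + b| ≤ c ∨ |a - b| ≤ c := by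
  have key : |(|a| - |b|)| ≤ c :=
    abs_sub_le_of_nonneg_of_le (abs_nonneg a) ha (abs_nonneg b) hb
  rcases abs_choice a with h₁ | h₁ <;> rcases abs_choice b with h₂ | h₂ <;> rw [h₁, h₂] at key
  · exact .inr key
  · exact .inl (by rwa [sub_neg_eq_add] at key)
  · exact .inl (by rwa [← neg_add', abs_neg] at key)
  · exact .inr (by rwa [neg_sub_neg, abs_sub_comm] at key)

theorem exists_partition_abs_sum_sub_sum_le {ι : Type*} [DecidableEq ι] {f : ι → G}
    (hc : 0 ≤ c) {s : Finset ι} (hf : ∀ x ∈ s, |f x| ≤ c) :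
    ∃ s₁ s₂ : Finset ι, s₁ ∪ s₂ = s ∧ Disjoint s₁ s₂ ∧
      |∑ x ∈ s₁, f x - ∑ x ∈ s₂, f x| ≤ c := by
  induction s using Finset.induction_on with
  | empty => exact ⟨∅, ∅, by simp [hc]⟩
  | insert a s ha ih =>
    obtain ⟨s₁, s₂, rfl, hdisj, hle⟩ := ih fun x hx ↦ hf x (mem_insert_of_mem hx)
    obtain ⟨ha₁, ha₂⟩ := notMem_union.1 ha
    rcases abs_add_le_or_abs_sub_le hle (hf a (mem_insert_self a _)) with h | h
    · refine ⟨insert a s₁, s₂, insert_union .., disjoint_insert_left.2 ⟨ha₂, hdisj⟩, ?_⟩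
      rwa [sum_insert ha₁, add_comm (f a), add_sub_right_comm]
    · refine ⟨s₁, insert a s₂, union_insert .., disjoint_insert_right.2 ⟨ha₁, hdisj⟩, ?_⟩
      rwa [sum_insert ha₂, add_comm (f a), ← sub_sub]

end Balancing

section Excess

variable {V : Type*} (A : V → V → Prop) [DecidableRel A]

/-- The excess of `x` over `Y`: the number of arcs from `x` to `Y` minus the number of arcs from
`Y` to `x`. It is the contribution of a single vertex to the gap. -/
def excess (Y : Finset V) (x : V) : ℤ :=
  (#{y ∈ Y | A x y} : ℤ) - #{y ∈ Y | A y x}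

theorem abs_excess_le_card (Y : Finset V) (x : V) : |excess A Y x| ≤ #Y := by
  rw [Int.abs_eq_natAbs, Nat.cast_le]
  exact Int.natAbs_coe_sub_coe_le_of_le (card_filter_le ..) (card_filter_le ..)

end Excess

section Gap

variable {V : Type} [Fintype V] [DecidableEq V] (A : V → V → Prop) [DecidableRel A]

theorem dArcs_eq_sum_left (S T : Finset V) : dArcs A S T = ∑ x ∈ S, #{y ∈ T | A x y} := by
  simp only [dArcs, card_filter, sum_product]

theorem dArcs_eq_sum_right (S T : Finset V) : dArcs A S T = ∑ y ∈ T, #{x ∈ S | A x y} := by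
  simp only [dArcs, card_filter, sum_product_right]

theorem sum_excess (S Y : Finset V) :
    ∑ x ∈ S, excess A Y x = (dArcs A S Y : ℤ) - dArcs A Y S := by
  simp only [excess, sum_sub_distrib, dArcs_eq_sum_left A S, dArcs_eq_sum_right A Y, Nat.cast_sum]

theorem gap_eq_sum_excess_sub_sum_excess (X₁ X₂ Y : Finset V) :
    gap A X₁ X₂ Y = ∑ x ∈ X₁, excess A Y x - ∑ x ∈ X₂, excess A Y x := by
  rw [gap, sum_excess, sum_excess]
  ring

theorem stmt3_general (X Y : Finset V) :
    ∃ S₁ S₂ : Finset V, S₁ ∪ S₂ = X ∧ Disjoint S₁ S₂ ∧ |gap A S₁ S₂ Y| ≤ #Y := by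
  simp only [gap_eq_sum_excess_sub_sum_excess]
  exact exists_partition_abs_sum_sub_sum_le (Int.natCast_nonneg #Y)
    fun x _ ↦ abs_excess_le_card A Y x

end Gap

/-- Lemma 2.3(1) (Hou–Wu–Yan): a gap-minimizing partition has `|θ(X₁,X₂)| ≤ |Y|`. -/
theorem stmt3 {V : Type} [Fintype V] [DecidableEq V] (A : V → V → Prop) [DecidableRel A]
    (hirr : ∀ v, ¬ A v v)
    (X Y : Finset V) (hXY : X ∪ Y = Finset.univ) (hdXY : Disjoint X Y)
    (heX : dArcs A X X = 0)
    (X₁ X₂ : Finset V) (hX : X₁ ∪ X₂ = X) (hdisj : Disjoint X₁ X₂)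
    (hmin : ∀ S₁ S₂ : Finset V, S₁ ∪ S₂ = X → Disjoint S₁ S₂ →
      |gap A X₁ X₂ Y| ≤ |gap A S₁ S₂ Y|) :
    |gap A X₁ X₂ Y| ≤ (Y.card : ℤ) := by
  obtain ⟨S₁, S₂, hS, hdS, hle⟩ := stmt3_general A X Y
  exact (hmin S₁ S₂ hS hdS).trans hle
end

section
/- Let D be a digraph and let V(D) = X ∪ Y be a partition with e(X) = 0. Let X = X₁ ∪ X₂ be a partition of X that minimizes |θ(X₁,X₂)| among all partitions of X. Then Σ_{v∈X with s(v) < |θ(X₁,X₂)|} s(v) ≤ |Y| − |θ(X₁,X₂)|. -/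
open Finset

/-!
Let `b v` be `d⁺(v) − d⁻(v)` for `v ∈ X₁` and its negative for `v ∈ X₂`. Since `X` is independent,
`θ(X₁,X₂) = ∑_X b`, and moving a set `F ⊆ X` to the other side turns `θ` into `θ − 2 ∑_F b`. When
`t = θ ≥ 0`, minimality of `|θ|` therefore says that no subset sum of `b` lies strictly between `0`
and `t`. If `t > 0`, every `v` with `|b v| < t` thus has `b v ≤ 0`, and some `w` has `b w ≥ t`.
Adding those small terms to `b w` one at a time decreases the subset sum by less than `t` at each
step, so it can never jump over the forbidden interval and stays at least `t`. Hence the small terms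
have total absolute value at most `b w − t ≤ |Y| − t`.
-/

section SubsetSums

variable {ι α : Type*} [AddCommGroup α] [LinearOrder α] [IsOrderedAddMonoid α]
  {b : ι → α} {X : Finset ι} {t c M : α}

theorem le_add_sum_of_forall_subset {S : Finset ι} (hc : t ≤ c) (hstep : ∀ v ∈ S, -t < b v)
    (hgap : ∀ F ⊆ S, c + ∑ v ∈ F, b v ≤ 0 ∨ t ≤ c + ∑ v ∈ F, b v) :
    t ≤ c + ∑ v ∈ S, b v := by
  induction S using Finset.cons_induction with
  | empty => simpa using hc
  | cons w S hw ih =>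
    have hS : t ≤ c + ∑ v ∈ S, b v :=
      ih (fun v hv => hstep v (mem_cons_of_mem hv))
        (fun F hF => hgap F (hF.trans (subset_cons hw)))
    have hpos : 0 < c + ∑ v ∈ cons w S hw, b v := by
      have hbw : -t < b w := hstep w (mem_cons_self w S)
      rw [sum_cons]
      grind
    exact (hgap _ Subset.rfl).resolve_left hpos.not_ge

theorem sum_abs_filter_lt_le_sub (hgap : ∀ F ⊆ X, ∑ v ∈ F, b v ≤ 0 ∨ t ≤ ∑ v ∈ F, b v)
    {w : ι} (hwX : w ∈ X) (hw : t ≤ b w) :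
    ∑ v ∈ X with |b v| < t, |b v| ≤ b w - t := by
  set S := X.filter fun v => |b v| < t
  have hlt : ∀ v ∈ S, |b v| < t := fun v hv => (mem_filter.1 hv).2
  have hnonpos : ∀ v ∈ S, b v ≤ 0 := fun v hv => by
    have hv_gap := hgap {v} (singleton_subset_iff.2 (filter_subset _ X hv))
    rw [sum_singleton] at hv_gap
    exact hv_gap.resolve_right ((le_abs_self _).trans_lt (hlt v hv)).not_ge
  have hwS : w ∉ S := fun h => (hw.trans (le_abs_self _)).not_gt (hlt w h)
  have hsum : t ≤ b w + ∑ v ∈ S, b v := by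
    refine le_add_sum_of_forall_subset hw (fun v hv => (abs_lt.1 (hlt v hv)).1) fun F hF => ?_
    rw [← sum_cons fun h => hwS (hF h)]
    exact hgap _ (cons_subset.2 ⟨hwX, hF.trans (filter_subset _ X)⟩)
  rw [sum_congr rfl fun v hv => abs_of_nonpos (hnonpos v hv), sum_neg_distrib]
  grind

theorem nonpos_or_le_of_le_abs_sub_two_nsmul {x : α} (h : t ≤ |t - 2 • x|) : x ≤ 0 ∨ t ≤ x := by
  by_contra! hx
  exact h.not_gt (abs_lt.2 (by constructor <;> grind))

theorem sum_abs_filter_lt_abs_sum_le (hM : 0 ≤ M) (hbM : ∀ v ∈ X, |b v| ≤ M)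
    (hflip : ∀ F ⊆ X, |∑ v ∈ X, b v| ≤ |∑ v ∈ X, b v - 2 • ∑ v ∈ F, b v|) :
    ∑ v ∈ X with |b v| < |∑ v ∈ X, b v|, |b v| ≤ M - |∑ v ∈ X, b v| := by
  wlog hnonneg : 0 ≤ ∑ v ∈ X, b v generalizing b
  · have hneg := this (b := -b) (by simpa using hbM)
      (fun F hF => by
        simpa only [Pi.neg_apply, sum_neg_distrib, abs_neg, smul_neg, ← neg_sub', neg_sub_neg,
          abs_sub_comm] using hflip F hF)
      (by simpa using (not_le.1 hnonneg).le)
    simpa using hneg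
  rw [abs_of_nonneg hnonneg] at hflip ⊢
  obtain hzero | hpos := hnonneg.eq_or_lt
  · simpa [← hzero, (abs_nonneg _).not_gt] using hM
  have hgap : ∀ F ⊆ X, ∑ v ∈ F, b v ≤ 0 ∨ ∑ v ∈ X, b v ≤ ∑ v ∈ F, b v :=
    fun F hF => nonpos_or_le_of_le_abs_sub_two_nsmul (hflip F hF)
  obtain ⟨w, hwX, hw⟩ : ∃ w ∈ X, 0 < b w :=
    exists_lt_of_sum_lt (f := fun _ => (0 : α)) (by simpa using hpos)
  have htw : ∑ v ∈ X, b v ≤ b w := by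
    have hw_gap := hgap {w} (singleton_subset_iff.2 hwX)
    rw [sum_singleton] at hw_gap
    exact hw_gap.resolve_left hw.not_ge
  calc ∑ v ∈ X with |b v| < ∑ v ∈ X, b v, |b v| ≤ b w - ∑ v ∈ X, b v :=
        sum_abs_filter_lt_le_sub hgap hwX htw
    _ ≤ M - ∑ v ∈ X, b v := sub_le_sub_right ((le_abs_self _).trans (hbM w hwX)) _

end SubsetSums

section Signs

variable {ι α : Type*} [DecidableEq ι]

theorem abs_piecewise_neg [AddGroup α] [Lattice α] (P : Finset ι) (a : ι → α) (v : ι) :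
    |P.piecewise a (-a) v| = |a v| := by
  by_cases hv : v ∈ P <;> simp [hv]

theorem symmDiff_piecewise_neg [InvolutiveNeg α] (P F : Finset ι) (a : ι → α) :
    (symmDiff P F).piecewise a (-a) = F.piecewise (-P.piecewise a (-a)) (P.piecewise a (-a)) := by
  ext v
  by_cases hP : v ∈ P <;> by_cases hF : v ∈ F <;> simp [mem_symmDiff, hP, hF]

theorem sum_piecewise_neg_self [AddCommGroup α] {F X : Finset ι} (hF : F ⊆ X) (b : ι → α) :
    ∑ v ∈ X, F.piecewise (-b) b v = ∑ v ∈ X, b v - 2 • ∑ v ∈ F, b v := by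
  simp only [sum_piecewise, inter_eq_right.2 hF, Pi.neg_apply, sum_neg_distrib,
    sum_sdiff_eq_sub hF]
  abel

end Signs

section Digraph

variable {V : Type} [Fintype V] {A : V → V → Prop} [DecidableRel A]

/-- The excess `s⁺(x) = d⁺(x) − d⁻(x)`, as an integer so that the subtraction does not truncate. -/
def netOutDeg (A : V → V → Prop) [DecidableRel A] (x : V) : ℤ :=
  (outDeg A x : ℤ) - inDeg A x

theorem sVal_eq_abs_netOutDeg (x : V) : sVal A x = |netOutDeg A x| := by
  rw [sVal, netOutDeg, abs_eq_max_neg, neg_sub]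

variable [DecidableEq V] {X Y S T P F : Finset V}

theorem card_filter_univ_eq_of_forall_not (hXY : X ∪ Y = univ) {p : V → Prop} [DecidablePred p]
    (hp : ∀ x ∈ X, ¬ p x) : #{x | p x} = #{x ∈ Y | p x} := by
  rw [← hXY, filter_union, filter_false_of_mem hp, empty_union]

theorem dArcs_eq_zero_iff : dArcs A S T = 0 ↔ ∀ u ∈ S, ∀ v ∈ T, ¬ A u v := by
  simp only [dArcs, card_eq_zero, filter_eq_empty_iff, mem_product, Prod.forall, and_imp]
  grind

theorem outDeg_eq_card_filter (hXY : X ∪ Y = univ) (heX : dArcs A X X = 0) {v : V}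
    (hv : v ∈ X) : outDeg A v = #{y ∈ Y | A v y} :=
  card_filter_univ_eq_of_forall_not hXY fun u hu => dArcs_eq_zero_iff.1 heX v hv u hu

theorem inDeg_eq_card_filter (hXY : X ∪ Y = univ) (heX : dArcs A X X = 0) {v : V}
    (hv : v ∈ X) : inDeg A v = #{y ∈ Y | A y v} :=
  card_filter_univ_eq_of_forall_not hXY fun u hu => dArcs_eq_zero_iff.1 heX u hu v hv

theorem abs_netOutDeg_le_card (hXY : X ∪ Y = univ) (heX : dArcs A X X = 0) {v : V}
    (hv : v ∈ X) : |netOutDeg A v| ≤ #Y := by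
  rw [netOutDeg, outDeg_eq_card_filter hXY heX hv, inDeg_eq_card_filter hXY heX hv]
  exact abs_sub_le_of_nonneg_of_le (Int.natCast_nonneg _) (mod_cast card_filter_le Y _)
    (Int.natCast_nonneg _) (mod_cast card_filter_le Y _)

theorem dArcs_eq_sum_outDeg (hXY : X ∪ Y = univ) (heX : dArcs A X X = 0) (hS : S ⊆ X) :
    dArcs A S Y = ∑ v ∈ S, outDeg A v := by
  rw [sum_congr rfl fun v hv => outDeg_eq_card_filter hXY heX (hS hv)]
  simp only [dArcs, card_filter, sum_product]

theorem dArcs_eq_sum_inDeg (hXY : X ∪ Y = univ) (heX : dArcs A X X = 0) (hS : S ⊆ X) :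
    dArcs A Y S = ∑ v ∈ S, inDeg A v := by
  rw [sum_congr rfl fun v hv => inDeg_eq_card_filter hXY heX (hS hv)]
  simp only [dArcs, card_filter, sum_product_right]

theorem gap_eq_sum_sub_sum (hXY : X ∪ Y = univ) (heX : dArcs A X X = 0) (hS : S ⊆ X)
    (hT : T ⊆ X) : gap A S T Y = ∑ v ∈ S, netOutDeg A v - ∑ v ∈ T, netOutDeg A v := by
  simp only [gap, netOutDeg, sum_sub_distrib, dArcs_eq_sum_outDeg hXY heX hS,
    dArcs_eq_sum_outDeg hXY heX hT, dArcs_eq_sum_inDeg hXY heX hS, dArcs_eq_sum_inDeg hXY heX hT,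
    Nat.cast_sum]
  ring

theorem gap_sdiff_eq_sum_piecewise (hXY : X ∪ Y = univ) (heX : dArcs A X X = 0) (hP : P ⊆ X) :
    gap A P (X \ P) Y = ∑ v ∈ X, P.piecewise (netOutDeg A) (-netOutDeg A) v := by
  rw [gap_eq_sum_sub_sum hXY heX hP sdiff_subset, sum_piecewise, inter_eq_right.2 hP]
  simp only [Pi.neg_apply, sum_neg_distrib, sub_eq_add_neg]

theorem gap_symmDiff_eq_sub (hXY : X ∪ Y = univ) (heX : dArcs A X X = 0) (hP : P ⊆ X)
    (hF : F ⊆ X) :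
    gap A (symmDiff P F) (X \ symmDiff P F) Y =
      ∑ v ∈ X, P.piecewise (netOutDeg A) (-netOutDeg A) v -
        2 • ∑ v ∈ F, P.piecewise (netOutDeg A) (-netOutDeg A) v := by
  rw [gap_sdiff_eq_sum_piecewise hXY heX (symmDiff_le_sup.trans (union_subset hP hF)),
    symmDiff_piecewise_neg, sum_piecewise_neg_self hF]

end Digraph

/-- Lemma 2.3(2) (Hou–Wu–Yan). -/
theorem stmt4 {V : Type} [Fintype V] [DecidableEq V] (A : V → V → Prop) [DecidableRel A]
    (hirr : ∀ v, ¬ A v v)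
    (X Y : Finset V) (hXY : X ∪ Y = Finset.univ) (hdXY : Disjoint X Y)
    (heX : dArcs A X X = 0)
    (X₁ X₂ : Finset V) (hX : X₁ ∪ X₂ = X) (hdisj : Disjoint X₁ X₂)
    (hmin : ∀ S₁ S₂ : Finset V, S₁ ∪ S₂ = X → Disjoint S₁ S₂ →
      |gap A X₁ X₂ Y| ≤ |gap A S₁ S₂ Y|) :
    ∑ v ∈ X.filter (fun v => sVal A v < |gap A X₁ X₂ Y|), sVal A v ≤
      (Y.card : ℤ) - |gap A X₁ X₂ Y| := by
  have hX₁ : X₁ ⊆ X := hX ▸ subset_union_left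
  obtain rfl : X₂ = X \ X₁ := by rw [← hX, union_sdiff_cancel_left hdisj]
  rw [gap_sdiff_eq_sum_piecewise hXY heX hX₁] at hmin ⊢
  simp only [sVal_eq_abs_netOutDeg, ← abs_piecewise_neg X₁ (netOutDeg A)]
  refine sum_abs_filter_lt_abs_sum_le (Int.natCast_nonneg _) (fun v hv => ?_) fun F hF => ?_
  · rw [abs_piecewise_neg]
    exact abs_netOutDeg_le_card hXY heX hv
  · rw [← gap_symmDiff_eq_sub hXY heX hX₁ hF]
    have hsub : symmDiff X₁ F ⊆ X := symmDiff_le_sup.trans (union_subset hX₁ hF)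
    exact hmin _ _ (union_sdiff_of_subset hsub) disjoint_sdiff
end
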